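/- (Kac–Moody–Wakimoto, levels 0 and 1 for E₁₀.) Let g = g(A_{E10}) be the Serre-presented Lie algebra of the E₁₀ generalized Cartan matrix. For every c : Fin 10 → ℕ with c₁ ≤ 1 (level 0 or 1), α = ∑_i c_i α_i ≠ 0, and (α|α) ≤ 0, one has mult(α) = p^{(8)}(1 − (α|α)/2). -/

import Mathlib

/-! Serre presentation of the Kac–Moody Lie algebra `g(A)` of a generalized Cartan
matrix `A`. -/

/-- Generators `e i`, `f i`, `h i` of the Serre presentation. -/
inductive ChevalleyGen (ℓ : ℕ) : Type
  | e : Fin ℓ → ChevalleyGen ℓ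
  | f : Fin ℓ → ChevalleyGen ℓ
  | h : Fin ℓ → ChevalleyGen ℓ

namespace KacMoody

variable {ℓ : ℕ}

/-- The free Lie algebra over `ℂ` on the generators. -/
abbrev FreeLie (ℓ : ℕ) : Type := FreeLieAlgebra ℂ (ChevalleyGen ℓ)

noncomputable def E (i : Fin ℓ) : FreeLie ℓ := FreeLieAlgebra.of ℂ (ChevalleyGen.e i)
noncomputable def F (i : Fin ℓ) : FreeLie ℓ := FreeLieAlgebra.of ℂ (ChevalleyGen.f i)
noncomputable def H (i : Fin ℓ) : FreeLie ℓ := FreeLieAlgebra.of ℂ (ChevalleyGen.h i)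

open LieAlgebra in
/-- The defining relations of the Serre presentation: `⁅h i, h j⁆ = 0`,
`⁅e i, f j⁆ = δ_{ij} h i`, `⁅h i, e j⁆ = A i j • e j`, `⁅h i, f j⁆ = −A i j • f j`, and the
Serre relations `(ad (e i))^(1 − A i j) (e j) = 0`, `(ad (f i))^(1 − A i j) (f j) = 0` for
`i ≠ j`. -/
noncomputable def serreRelations (A : Matrix (Fin ℓ) (Fin ℓ) ℤ) : Set (FreeLie ℓ) :=
  {x : FreeLie ℓ | ∃ i j : Fin ℓ, x = ⁅H i, H j⁆} ∪
  {x : FreeLie ℓ | ∃ i j : Fin ℓ, x = ⁅E i, F j⁆ - if i = j then H i else 0} ∪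
  {x : FreeLie ℓ | ∃ i j : Fin ℓ, x = ⁅H i, E j⁆ - (A i j : ℂ) • E j} ∪
  {x : FreeLie ℓ | ∃ i j : Fin ℓ, x = ⁅H i, F j⁆ + (A i j : ℂ) • F j} ∪
  {x : FreeLie ℓ | ∃ i j : Fin ℓ, i ≠ j ∧ x = ((ad ℂ (FreeLie ℓ) (E i)) ^ (1 - A i j).toNat) (E j)} ∪
  {x : FreeLie ℓ | ∃ i j : Fin ℓ, i ≠ j ∧ x = ((ad ℂ (FreeLie ℓ) (F i)) ^ (1 - A i j).toNat) (F j)}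

/-- The Lie ideal of the free Lie algebra generated by the Serre relations. -/
noncomputable def serreIdeal (A : Matrix (Fin ℓ) (Fin ℓ) ℤ) : LieIdeal ℂ (FreeLie ℓ) :=
  LieSubmodule.lieSpan ℂ (FreeLie ℓ) (serreRelations A)

/-- The Serre-presented Lie algebra `g(A)` of a generalized Cartan matrix `A`: the quotient
of the free Lie algebra on the generators `e i`, `f i`, `h i` by the ideal generated by
the defining relations. -/
abbrev gA (A : Matrix (Fin ℓ) (Fin ℓ) ℤ) : Type := FreeLie ℓ ⧸ serreIdeal A

/-- The image of `h i` in `g(A)`. -/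
noncomputable def Hbar (A : Matrix (Fin ℓ) (Fin ℓ) ℤ) (i : Fin ℓ) : gA A :=
  LieSubmodule.Quotient.mk' (serreIdeal A) (H i)

open LieAlgebra in
/-- The root space `g_α` for `α = ∑ c i • α i`: all `x` with
`⁅h i, x⁆ = (∑ j, A i j * c j) • x` for every `i`. -/
noncomputable def rootSpace (A : Matrix (Fin ℓ) (Fin ℓ) ℤ) (c : Fin ℓ → ℤ) :
    Submodule ℂ (gA A) :=
  ⨅ i : Fin ℓ, Module.End.eigenspace (ad ℂ (gA A) (Hbar A i)) ((∑ j, A i j * c j : ℤ) : ℂ)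

/-- The multiplicity of the root `α = ∑ c i • α i`: the dimension of `g_α`. -/
noncomputable def mult (A : Matrix (Fin ℓ) (Fin ℓ) ℤ) (c : Fin ℓ → ℤ) : ℕ :=
  Module.finrank ℂ (rootSpace A c)

end KacMoody

/-- `p n` is the classical partition function: the number of partitions of `n`. -/
def p (n : ℕ) : ℕ := Fintype.card (Nat.Partition n)

/-- `pColored ℓ n` is the number of `ℓ`-tuples `(λ₁,…,λ_ℓ)` of partitions with
`|λ₁| + ⋯ + |λ_ℓ| = n` (partitions of `n` into parts of `ℓ` colors). -/
def pColored (ℓ n : ℕ) : ℕ :=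
  ∑ k ∈ Finset.Nat.antidiagonalTuple ℓ n, ∏ i, p (k i)

/-- The edges of the `E₁₀` Dynkin diagram (0-indexed): a chain `0–1–2–⋯–8` with the extra
node `9` attached to node `6`.  (In 1-indexed notation, `{1,2},…,{8,9}` and `{7,10}`;
node `1`, here `0`, is the over-extended node.) -/
def e10Edges : List (Fin 10 × Fin 10) :=
  [(0, 1), (1, 2), (2, 3), (3, 4), (4, 5), (5, 6), (6, 7), (7, 8), (6, 9)]

/-- The generalized Cartan matrix of `E₁₀`. -/
def AE10 : Matrix (Fin 10) (Fin 10) ℤ := fun i j =>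
  if i = j then 2 else if (i, j) ∈ e10Edges ∨ (j, i) ∈ e10Edges then -1 else 0

/-- The invariant symmetric bilinear form `(α|α) = ∑_{i,j} c i · A i j · c j` for
`α = ∑ c i • α i`. -/
def normE10 (c : Fin 10 → ℤ) : ℤ := ∑ i, ∑ j, c i * AE10 i j * c j


namespace KMW
open LieAlgebra

/-- abstract Chevalley-Serre data of type E10 -/
structure KM (L : Type*) [LieRing L] [LieAlgebra ℂ L] where
  e : Fin 10 → L
  f : Fin 10 → L
  h : Fin 10 → L
  hh : ∀ i j, ⁅h i, h j⁆ = 0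
  ef : ∀ i j, ⁅e i, f j⁆ = if i = j then h i else 0
  he : ∀ i j, ⁅h i, e j⁆ = (AE10 i j : ℂ) • e j
  hf : ∀ i j, ⁅h i, f j⁆ = -((AE10 i j : ℂ) • f j)
  se0 : ∀ i j, AE10 i j = 0 → ⁅e i, e j⁆ = 0
  se1 : ∀ i j, AE10 i j = -1 → ⁅e i, ⁅e i, e j⁆⁆ = 0
  sf0 : ∀ i j, AE10 i j = 0 → ⁅f i, f j⁆ = 0
  sf1 : ∀ i j, AE10 i j = -1 → ⁅f i, ⁅f i, f j⁆⁆ = 0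
  gen : ∀ K : LieSubalgebra ℂ L, (∀ i, e i ∈ K) → (∀ i, f i ∈ K) → K = ⊤

def pr (i : Fin 10) (c : Fin 10 → ℤ) : ℤ := ∑ j, AE10 i j * c j

theorem AE10_eq : AE10 = !![2,-1,0,0,0,0,0,0,0,0; -1,2,-1,0,0,0,0,0,0,0; 0,-1,2,-1,0,0,0,0,0,0;
  0,0,-1,2,-1,0,0,0,0,0; 0,0,0,-1,2,-1,0,0,0,0; 0,0,0,0,-1,2,-1,0,0,0; 0,0,0,0,0,-1,2,-1,0,-1;
  0,0,0,0,0,0,-1,2,-1,0; 0,0,0,0,0,0,0,-1,2,0; 0,0,0,0,0,0,-1,0,0,2] := by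
  unfold AE10 e10Edges
  ext i j
  fin_cases i <;> fin_cases j <;> rfl

theorem AE10_symm (i j : Fin 10) : AE10 i j = AE10 j i := by
  rw [AE10_eq]; fin_cases i <;> fin_cases j <;> simp

theorem AE10_cases (i j : Fin 10) : i = j ∧ AE10 i j = 2 ∨ i ≠ j ∧ AE10 i j = 0 ∨
    i ≠ j ∧ AE10 i j = -1 := by
  rw [AE10_eq]; fin_cases i <;> fin_cases j <;> simp

theorem AE10_diag (i : Fin 10) : AE10 i i = 2 := by
  rw [AE10_eq]; fin_cases i <;> simp

theorem pr_all (c : Fin 10 → ℤ) : pr 0 c = 2 * c 0 - c 1 ∧ pr 1 c = 2 * c 1 - c 0 - c 2 ∧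
    pr 2 c = 2 * c 2 - c 1 - c 3 ∧ pr 3 c = 2 * c 3 - c 2 - c 4 ∧ pr 4 c = 2 * c 4 - c 3 - c 5 ∧
    pr 5 c = 2 * c 5 - c 4 - c 6 ∧ pr 6 c = 2 * c 6 - c 5 - c 7 - c 9 ∧
    pr 7 c = 2 * c 7 - c 6 - c 8 ∧ pr 8 c = 2 * c 8 - c 7 ∧ pr 9 c = 2 * c 9 - c 6 := by
  simp only [pr, AE10_eq, Fin.sum_univ_succ]
  simp [Matrix.of_apply, Matrix.cons_val, Fin.succ]
  refine ⟨?_, ?_, ?_, ?_, ?_, ?_, ?_, ?_, ?_, ?_⟩ <;> ring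

theorem fin10_forall {P : Fin 10 → Prop} : (∀ i, P i) ↔
    (P 0 ∧ P 1 ∧ P 2 ∧ P 3 ∧ P 4 ∧ P 5 ∧ P 6 ∧ P 7 ∧ P 8 ∧ P 9) := by
  constructor
  · intro h; exact ⟨h 0, h 1, h 2, h 3, h 4, h 5, h 6, h 7, h 8, h 9⟩
  · rintro ⟨h0, h1, h2, h3, h4, h5, h6, h7, h8, h9⟩ i
    fin_cases i <;> assumption

theorem pr_inj {c d : Fin 10 → ℤ} (H : ∀ i, pr i c = pr i d) : c = d := by
  have hc := pr_all (c - d)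
  have H2 : ∀ i, pr i (c - d) = 0 := by
    intro i
    have : pr i (c - d) = pr i c - pr i d := by simp [pr, mul_sub]
    rw [this, H, sub_self]
  simp only [H2] at hc
  obtain ⟨h0, h1, h2, h3, h4, h5, h6, h7, h8, h9⟩ := hc
  have h : ∀ i, (c - d) i = 0 := by
    rw [fin10_forall]
    refine ⟨?_, ?_, ?_, ?_, ?_, ?_, ?_, ?_, ?_, ?_⟩ <;> linarith
  ext i
  have := h i
  simp at this; linarith

theorem pr_add (i) (c d : Fin 10 → ℤ) : pr i (c + d) = pr i c + pr i d := by
  simp [pr, mul_add, Finset.sum_add_distrib]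
theorem pr_neg (i) (c : Fin 10 → ℤ) : pr i (-c) = - pr i c := by
  simp [pr]
theorem pr_zero (i) : pr i 0 = 0 := by
  simp [pr]
theorem pr_sub (i) (c d : Fin 10 → ℤ) : pr i (c - d) = pr i c - pr i d := by
  rw [sub_eq_add_neg, pr_add, pr_neg, sub_eq_add_neg]

/-- simple root -/
def al (i : Fin 10) : Fin 10 → ℤ := Pi.single i 1

theorem pr_al (i j) : pr i (al j) = AE10 i j := by
  simp [pr, al, Pi.single_apply]

theorem pr_smul (i) (k : ℤ) (c : Fin 10 → ℤ) : pr i (k • c) = k * pr i c := by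
  simp only [pr, Finset.mul_sum, Pi.smul_apply, smul_eq_mul]
  exact Finset.sum_congr rfl fun _ _ => by ring

section
variable {L : Type*} [LieRing L] [LieAlgebra ℂ L]

/-- elements whose bracket stabilises a subspace -/
def stab (W : Submodule ℂ L) : LieSubalgebra ℂ L where
  carrier := {x | ∀ y ∈ W, ⁅x, y⁆ ∈ W}
  zero_mem' := by intro y _; simp
  add_mem' := by
    intro a b ha hb y hy; rw [add_lie]; exact W.add_mem (ha y hy) (hb y hy)
  smul_mem' := by
    intro a b hb y hy; rw [smul_lie]; exact W.smul_mem _ (hb y hy)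
  lie_mem' := by
    intro a b ha hb y hy
    rw [lie_lie]; exact W.sub_mem (ha _ (hb _ hy)) (hb _ (ha _ hy))

theorem mem_stab {W : Submodule ℂ L} {x : L} : x ∈ stab W ↔ ∀ y ∈ W, ⁅x, y⁆ ∈ W := Iff.rfl

theorem mem_stab_span {S : Set L} {x : L} (H : ∀ y ∈ S, ⁅x, y⁆ ∈ Submodule.span ℂ S) :
    x ∈ stab (Submodule.span ℂ S) := by
  intro y hy
  induction hy using Submodule.span_induction with
  | mem y hy => exact H y hy
  | zero => simp
  | add y z _ _ h1 h2 => rw [lie_add]; exact Submodule.add_mem _ h1 h2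
  | smul a y _ h1 => rw [lie_smul]; exact Submodule.smul_mem _ _ h1

namespace KM
variable (D : KM L)

def wt (c : Fin 10 → ℤ) : Submodule ℂ L :=
  ⨅ i : Fin 10, Module.End.eigenspace (ad ℂ L (D.h i)) ((∑ j, AE10 i j * c j : ℤ) : ℂ)

variable {D}
theorem mem_wt {c : Fin 10 → ℤ} {x : L} :
    x ∈ D.wt c ↔ ∀ i, ⁅D.h i, x⁆ = ((pr i c : ℤ) : ℂ) • x := by
  simp [wt, Submodule.mem_iInf, pr]

theorem wt_lie {c d : Fin 10 → ℤ} {x y : L} (hx : x ∈ D.wt c) (hy : y ∈ D.wt d) :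
    ⁅x, y⁆ ∈ D.wt (c + d) := by
  rw [mem_wt] at *
  intro i
  rw [leibniz_lie, hx, hy, pr_add]
  simp [add_smul]

theorem wt_lie' {c d b : Fin 10 → ℤ} {x y : L} (hx : x ∈ D.wt c) (hy : y ∈ D.wt d)
    (hb : c + d = b) : ⁅x, y⁆ ∈ D.wt b := hb ▸ wt_lie hx hy

theorem e_mem (i) : D.e i ∈ D.wt (al i) := by
  rw [mem_wt]; intro j; rw [D.he, pr_al]
theorem f_mem (i) : D.f i ∈ D.wt (-al i) := by
  rw [mem_wt]; intro j; rw [D.hf, pr_neg, pr_al]; simp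
theorem h_mem (i) : D.h i ∈ D.wt 0 := by
  rw [mem_wt]; intro j; rw [D.hh, pr_zero]; simp

variable (D) in
theorem indep : iSupIndep D.wt := by
  have key := Module.End.independent_iInf_maxGenEigenspace_of_forall_mapsTo
    (R := ℂ) (f := fun i : Fin 10 => ad ℂ L (D.h i)) (fun i j φ => by
      apply Module.End.mapsTo_maxGenEigenspace_of_comm
      ext x
      have := leibniz_lie (D.h j) (D.h i) x
      rw [D.hh, zero_lie, zero_add] at this
      simpa using this)
  have h2 := key.comp (f := fun (c : Fin 10 → ℤ) (i : Fin 10) => ((pr i c : ℤ) : ℂ)) (by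
    intro c d hcd
    apply pr_inj
    intro i
    have : ((pr i c : ℤ) : ℂ) = ((pr i d : ℤ) : ℂ) := congrFun hcd i
    exact_mod_cast this)
  refine h2.mono ?_
  intro c
  show D.wt c ≤ ⨅ i : Fin 10, (ad ℂ L (D.h i)).maxGenEigenspace ((pr i c : ℤ) : ℂ)
  refine le_iInf fun i => (iInf_le _ i).trans ?_
  intro x hx
  rw [Module.End.mem_maxGenEigenspace]
  refine ⟨1, ?_⟩
  have := Module.End.mem_eigenspace_iff.1 hx
  rw [pow_one, LinearMap.sub_apply, this]
  simp [pr]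

theorem mem_span_wt {ι : Type*} {v : ι → L} {ω : ι → Fin 10 → ℤ} (hv : ∀ i, v i ∈ D.wt (ω i))
    {c : Fin 10 → ℤ} {x : L} (hx : x ∈ Submodule.span ℂ (Set.range v)) (hc : x ∈ D.wt c) :
    x ∈ Submodule.span ℂ (v '' {i | ω i = c}) := by
  have h1 : Set.range v = v '' {i | ω i = c} ∪ v '' {i | ω i ≠ c} := by
    rw [← Set.image_union]
    have : {i | ω i = c} ∪ {i | ω i ≠ c} = Set.univ := by ext; simp [em]
    rw [this, Set.image_univ]
  rw [h1, Submodule.span_union, Submodule.mem_sup] at hx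
  obtain ⟨y, hy, z, hz, rfl⟩ := hx
  have hyc : y ∈ D.wt c := by
    refine Submodule.span_le.2 ?_ hy
    rintro _ ⟨i, hi, rfl⟩
    rw [← (hi : ω i = c)]; exact hv i
  have hzc : z ∈ D.wt c := by
    have := Submodule.sub_mem _ hc hyc
    simpa using this
  have hz2 : z ∈ ⨆ (d) (_ : d ≠ c), D.wt d := by
    refine Submodule.span_le.2 ?_ hz
    rintro _ ⟨i, hi, rfl⟩
    exact Submodule.mem_iSup_of_mem (ω i) (Submodule.mem_iSup_of_mem hi (hv i))
  have := Submodule.disjoint_def.1 (D.indep c) z hzc hz2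
  rw [this, add_zero]; exact hy

variable (D) in
def dual : KM L where
  e := D.f
  f := D.e
  h := fun i => - D.h i
  hh := by intro i j; simp [D.hh]
  ef := by
    intro i j
    rw [← lie_skew, D.ef]
    by_cases h : i = j
    · simp [h]
    · simp [h, Ne.symm h]
  he := by intro i j; simp [D.hf]
  hf := by intro i j; simp [D.he]
  se0 := D.sf0
  se1 := D.sf1
  sf0 := D.se0
  sf1 := D.se1
  gen := fun K h1 h2 => D.gen K h2 h1

theorem wt_dual (c : Fin 10 → ℤ) : D.dual.wt c = D.wt (-c) := by
  ext x
  simp only [mem_wt, dual, neg_lie, pr_neg]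
  refine forall_congr' fun i => ?_
  rw [neg_eq_iff_eq_neg]
  simp

variable (D) in
def Ew (i : Fin 10) : List (Fin 10) → L
  | [] => D.e i
  | j :: w => ⁅D.e j, Ew i w⁆

def ww (i : Fin 10) : List (Fin 10) → Fin 10 → ℤ
  | [] => al i
  | j :: w => al j + ww i w

theorem Ew_mem (i w) : D.Ew i w ∈ D.wt (ww i w) := by
  induction w with
  | nil => exact e_mem i
  | cons j w ih => exact wt_lie (e_mem j) ih

theorem ww_nonneg (i w j) : 0 ≤ ww i w j := by
  induction w with
  | nil => simp only [ww, al, Pi.single_apply]; split <;> simp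
  | cons k w ih =>
    simp only [ww, al, Pi.single_apply, Pi.add_apply]; split <;> omega

theorem ww_ne (i w) : ∃ j, 0 < ww i w j := by
  refine ⟨i, ?_⟩
  induction w with
  | nil => simp [ww, al]
  | cons k w ih => simp only [ww, al, Pi.single_apply, Pi.add_apply]; split <;> omega

variable (D) in
/-- index family for the triangular decomposition -/
def tv : (Fin 10 × List (Fin 10)) ⊕ (Fin 10 × List (Fin 10)) ⊕ Fin 10 → L
  | .inl p => D.Ew p.1 p.2
  | .inr (.inl p) => D.dual.Ew p.1 p.2
  | .inr (.inr i) => D.h i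

def tw : (Fin 10 × List (Fin 10)) ⊕ (Fin 10 × List (Fin 10)) ⊕ Fin 10 → Fin 10 → ℤ
  | .inl p => ww p.1 p.2
  | .inr (.inl p) => - ww p.1 p.2
  | .inr (.inr _) => 0

theorem tv_mem (x) : D.tv x ∈ D.wt (tw x) := by
  rcases x with p | p | i
  · exact Ew_mem _ _
  · have := Ew_mem (D := D.dual) p.1 p.2
    rw [wt_dual] at this; exact this
  · exact h_mem i

theorem tri_aux (i j : Fin 10) (w : List (Fin 10)) : ⁅D.f i, D.Ew j w⁆ ∈
    Submodule.span ℂ (Set.range D.h ∪ Set.range (fun p : Fin 10 × List (Fin 10) => D.Ew p.1 p.2)) := by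
  induction w with
  | nil =>
    simp only [Ew]
    rw [← lie_skew, D.ef]
    split
    · exact Submodule.neg_mem _ (Submodule.subset_span (Or.inl ⟨_, rfl⟩))
    · simp
  | cons k w ih =>
    simp only [Ew]
    rw [leibniz_lie]
    refine Submodule.add_mem _ ?_ ?_
    · rw [← lie_skew (D.f i) (D.e k), D.ef]
      split
      · rw [neg_lie, (mem_wt.1 (Ew_mem (D := D) j w))]
        exact Submodule.neg_mem _ (Submodule.smul_mem _ _ (Submodule.subset_span (Or.inr ⟨(j, w), rfl⟩)))
      · simp
    · refine mem_stab_span (x := D.e k) ?_ _ ih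
      rintro _ (⟨i, rfl⟩ | ⟨p, rfl⟩)
      · rw [← lie_skew, D.he]
        exact Submodule.neg_mem _ (Submodule.smul_mem _ _
          (Submodule.subset_span (Or.inr ⟨(k, []), rfl⟩)))
      · exact Submodule.subset_span (Or.inr ⟨(p.1, k :: p.2), rfl⟩)

theorem tri_e (k : Fin 10) : D.e k ∈ stab (Submodule.span ℂ (Set.range D.tv)) := by
  apply mem_stab_span
  rintro _ ⟨p | p | i, rfl⟩
  · exact Submodule.subset_span ⟨.inl (p.1, k :: p.2), rfl⟩
  · have := tri_aux (D := D.dual) k p.1 p.2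
    refine Submodule.span_le.2 ?_ this
    rintro _ (⟨i, rfl⟩ | ⟨p, rfl⟩)
    · exact Submodule.neg_mem _ (Submodule.subset_span ⟨.inr (.inr i), rfl⟩)
    · exact Submodule.subset_span ⟨.inr (.inl p), rfl⟩
  · simp only [tv]
    rw [← lie_skew, D.he]
    exact Submodule.neg_mem _ (Submodule.smul_mem _ _ (Submodule.subset_span ⟨.inl (k, []), rfl⟩))

theorem tri_f (k : Fin 10) : D.f k ∈ stab (Submodule.span ℂ (Set.range D.tv)) := by
  apply mem_stab_span
  rintro _ ⟨p | p | i, rfl⟩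
  · have := tri_aux (D := D) k p.1 p.2
    refine Submodule.span_le.2 ?_ this
    rintro _ (⟨i, rfl⟩ | ⟨p, rfl⟩)
    · exact Submodule.subset_span ⟨.inr (.inr i), rfl⟩
    · exact Submodule.subset_span ⟨.inl p, rfl⟩
  · exact Submodule.subset_span ⟨.inr (.inl (p.1, k :: p.2)), rfl⟩
  · simp only [tv]
    rw [← lie_skew, D.hf]
    exact Submodule.neg_mem _ (Submodule.neg_mem _
      (Submodule.smul_mem _ _ (Submodule.subset_span ⟨.inr (.inl (k, [])), rfl⟩)))

variable (D) in
theorem tri (x : L) : x ∈ Submodule.span ℂ (Set.range D.tv) := by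
  have h1 := D.gen _ (tri_e (D := D)) (tri_f (D := D))
  let K : LieSubalgebra ℂ L :=
    { Submodule.span ℂ (Set.range D.tv) with
      lie_mem' := by
        intro a b _ hb
        have : a ∈ stab (Submodule.span ℂ (Set.range D.tv)) := by rw [h1]; trivial
        exact this b hb }
  have h2 := D.gen K (fun i => Submodule.subset_span ⟨.inl (i, []), rfl⟩)
    (fun i => Submodule.subset_span ⟨.inr (.inl (i, [])), rfl⟩)
  have : x ∈ K := by rw [h2]; trivial
  exact this

theorem wt_pos {c : Fin 10 → ℤ} (hc : ∃ i, 0 < c i) {x : L} (hx : x ∈ D.wt c) :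
    x ∈ Submodule.span ℂ {y | ∃ i w, y = D.Ew i w ∧ ww i w = c} := by
  refine Submodule.span_mono ?_ (mem_span_wt tv_mem (D.tri x) hx)
  rintro _ ⟨p | p | i, hi, rfl⟩
  · exact ⟨p.1, p.2, rfl, hi⟩
  · exfalso
    obtain ⟨i, hi2⟩ := hc
    have h3 : - ww p.1 p.2 = c := hi
    have h4 := ww_nonneg p.1 p.2 i
    rw [← h3] at hi2
    simp at hi2; omega
  · exfalso
    obtain ⟨i, hi2⟩ := hc
    have h3 : 0 = c := hi
    rw [← h3] at hi2; simp at hi2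

theorem T1 {c : Fin 10 → ℤ} (hc : ∃ i, 0 < c i) (hc2 : ∃ i, c i < 0) : D.wt c = ⊥ := by
  rw [eq_bot_iff]
  intro x hx
  have := wt_pos hc hx
  have h2 : {y | ∃ i w, y = D.Ew i w ∧ ww i w = c} = ∅ := by
    rw [Set.eq_empty_iff_forall_notMem]
    rintro y ⟨i, w, _, rfl⟩
    obtain ⟨j, hj⟩ := hc2
    have := ww_nonneg i w j
    omega
  rw [h2] at this
  simpa using this

theorem Ew_same (i j w) (hw : ∀ k ≠ i, ww j w k = 0) :
    j = i ∧ (w = [] ∨ D.Ew j w = 0) := by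
  induction w with
  | nil =>
    refine ⟨?_, Or.inl rfl⟩
    by_contra hne
    have := hw j hne
    simp [ww, al] at this
  | cons k w ih =>
    have hk : k = i := by
      by_contra hne
      have h1 := hw k hne
      have h2 := ww_nonneg j w k
      simp only [ww, al, Pi.add_apply, Pi.single_apply, if_true] at h1
      omega
    have := ih (fun m hm => by
      have h1 := hw m hm
      have h2 := ww_nonneg j w m
      simp only [ww, al, Pi.add_apply, Pi.single_apply] at h1
      split at h1 <;> omega)
    refine ⟨this.1, Or.inr ?_⟩
    rcases this.2 with h | h
    · subst h; simp only [Ew]; rw [hk, this.1, lie_self]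
    · simp only [Ew]; rw [h, lie_zero]

theorem T2a (i) {x : L} (hx : x ∈ D.wt (al i)) : ∃ a : ℂ, x = a • D.e i := by
  have h1 := wt_pos ⟨i, by simp [al]⟩ hx
  have h2 : x ∈ Submodule.span ℂ {D.e i} := by
    refine Submodule.span_le.2 ?_ h1
    rintro y ⟨j, w, rfl, hw⟩
    obtain ⟨rfl, h⟩ := Ew_same (D := D) i j w (fun k hk => by rw [hw]; simp [al, hk])
    rcases h with rfl | h
    · exact Submodule.subset_span rfl
    · rw [h]; exact Submodule.zero_mem _
  obtain ⟨a, ha⟩ := Submodule.mem_span_singleton.1 h2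
  exact ⟨a, ha.symm⟩

theorem T2b (i) {c : Fin 10 → ℤ} (hc : ∀ k ≠ i, c k = 0) (hc2 : 2 ≤ c i) : D.wt c = ⊥ := by
  rw [eq_bot_iff]
  intro x hx
  have h1 := wt_pos ⟨i, by omega⟩ hx
  refine Submodule.span_le.2 ?_ h1
  rintro y ⟨j, w, rfl, hw⟩
  obtain ⟨rfl, h⟩ := Ew_same (D := D) i j w (fun k hk => by rw [hw]; exact hc k hk)
  rcases h with rfl | h
  · rw [← hw] at hc2; simp [ww, al] at hc2
  · rw [h]; exact Submodule.zero_mem _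

/-- T4 -/
theorem T4 {c : Fin 10 → ℤ} (hc : ∃ i, 0 < c i) (hc0 : c 0 = 0) (S : Submodule ℂ L)
    (hS : ∀ i ≠ 0, D.e i ∈ S) (hS2 : ∀ i ≠ 0, D.e i ∈ stab S) : D.wt c ≤ S := by
  intro x hx
  refine Submodule.span_le.2 ?_ (wt_pos hc hx)
  rintro y ⟨j, w, rfl, hw⟩
  replace hw : ww j w 0 = 0 := by rw [hw, hc0]
  clear hx hc hc0
  induction w with
  | nil =>
    apply hS
    rintro rfl; simp [ww, al] at hw
  | cons k w ih =>
    have h2 := ww_nonneg j w 0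
    simp only [ww, al, Pi.add_apply, Pi.single_apply] at hw
    split at hw
    · omega
    · rename_i hk
      exact hS2 k (Ne.symm hk) _ (ih (by omega))

/-- T3 -/
theorem T3 {c : Fin 10 → ℤ} (hc0 : c 0 = 1) (S : Submodule ℂ L)
    (hS : D.e 0 ∈ S) (hS2 : ∀ i ≠ 0, D.e i ∈ stab S) : D.wt c ≤ S := by
  intro x hx
  refine Submodule.span_le.2 ?_ (wt_pos ⟨0, by omega⟩ hx)
  rintro y ⟨j, w, rfl, hw⟩
  replace hw : ww j w 0 = 1 := by rw [hw, hc0]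
  clear hx hc0
  have key : ∀ w, ww j w 0 = 0 → D.Ew j w ∈ stab S := by
    intro w hw
    induction w with
    | nil =>
      apply hS2
      rintro rfl; simp [ww, al] at hw
    | cons k w ih =>
      have h2 := ww_nonneg j w 0
      simp only [ww, al, Pi.add_apply, Pi.single_apply] at hw
      split at hw
      · omega
      · rename_i hk
        exact (stab S).lie_mem (hS2 k (Ne.symm hk)) (ih (by omega))
  induction w with
  | nil =>
    have : j = 0 := by
      by_contra h
      simp [ww, al, Ne.symm h] at hw
    rw [this]; exact hS
  | cons k w ih =>
    have h2 := ww_nonneg j w 0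
    simp only [ww, al, Pi.add_apply, Pi.single_apply] at hw
    split at hw
    · rename_i hk
      simp only [Ew]
      rw [← hk, ← lie_skew]
      exact Submodule.neg_mem _ (key w (by omega) _ hS)
    · rename_i hk
      exact hS2 k (Ne.symm hk) _ (ih (by omega))

end KM
end
end KMW


namespace KMW
open LieAlgebra

section sl2
variable {M : Type*} [AddCommGroup M] [Module ℂ M] {E F H : M →ₗ[ℂ] M}

theorem sl2_H (hHF : ∀ x, H (F x) = F (H x) - (2 : ℂ) • F x) {k : ℂ} {x : M} (hx : H x = k • x)
    (m : ℕ) : H ((F ^ m) x) = (k - 2 * m) • (F ^ m) x := by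
  induction m with
  | zero => simp [hx]
  | succ m ih =>
    rw [pow_succ', Module.End.mul_apply, hHF, ih, map_smul, ← sub_smul]
    congr 1; push_cast; ring

theorem sl2_EF (hEF : ∀ x, E (F x) = F (E x) + H x)
    (hHF : ∀ x, H (F x) = F (H x) - (2 : ℂ) • F x) {k : ℂ} {x : M} (hx : H x = k • x) (m : ℕ) :
    E ((F ^ (m + 1)) x) = (F ^ (m + 1)) (E x) + ((m + 1) * (k - m)) • (F ^ m) x := by
  induction m with
  | zero => simp [hEF, hx]
  | succ m ih =>
    have hs : ∀ n y, F ((F ^ n) y) = (F ^ (n + 1)) y := fun n y => by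
      rw [pow_succ', Module.End.mul_apply]
    rw [← hs (m + 1) x, hEF, ih, sl2_H hHF hx, map_add, map_smul, hs, hs, add_assoc, ← add_smul]
    congr 2; push_cast; ring

theorem sl2_main (hEF : ∀ x, E (F x) = F (E x) + H x)
    (hHE : ∀ x, H (E x) = E (H x) + (2 : ℂ) • E x)
    (hHF : ∀ x, H (F x) = F (H x) - (2 : ℂ) • F x) (N : ℕ) : ∀ (m k : ℕ) (x : M),
    H x = (k : ℂ) • x → m ≤ k → (F ^ m) x = 0 → (E ^ N) x = 0 → x = 0 := by
  induction N with
  | zero => intro m k x _ _ _ h; simpa using h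
  | succ N ih =>
    intro m k x hx hmk hF hE
    have hy : E x = 0 := by
      refine ih (m + 1) (k + 2) (E x) ?_ (by omega) ?_ ?_
      · rw [hHE, hx, map_smul, ← add_smul]; push_cast; rfl
      · have := sl2_EF hEF hHF hx m
        rw [pow_succ', Module.End.mul_apply, hF] at this
        simpa [pow_succ'] using this.symm
      · rw [← Module.End.mul_apply, ← pow_succ]; exact hE
    clear hE
    induction m with
    | zero => simpa using hF
    | succ m ihm =>
      refine ihm (by omega) ?_
      have := sl2_EF hEF hHF hx m
      rw [hF, hy] at this
      simp only [map_zero, zero_add] at this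
      have h2 := (smul_eq_zero.1 this.symm).resolve_left ?_
      · exact h2
      · apply mul_ne_zero
        · exact_mod_cast Nat.succ_ne_zero m
        · rw [sub_ne_zero]; exact_mod_cast (by omega : k ≠ m)
end sl2

/-- the bilinear form -/
def bl (c d : Fin 10 → ℤ) : ℤ := ∑ i, c i * pr i d

theorem bl_self (c) : bl c c = normE10 c := by
  simp only [bl, pr, normE10, Finset.mul_sum]
  exact Finset.sum_congr rfl fun _ _ => Finset.sum_congr rfl fun _ _ => by ring
theorem bl_comm (c d) : bl c d = bl d c := by
  simp only [bl, pr, Finset.mul_sum]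
  rw [Finset.sum_comm]
  exact Finset.sum_congr rfl fun i _ => Finset.sum_congr rfl fun j _ => by
    rw [AE10_symm]; ring
theorem bl_add (c d d') : bl c (d + d') = bl c d + bl c d' := by
  simp [bl, pr_add, mul_add, Finset.sum_add_distrib]
theorem bl_smul (c d) (k : ℤ) : bl c (k • d) = k * bl c d := by
  simp only [bl, pr_smul, Finset.mul_sum]
  exact Finset.sum_congr rfl fun _ _ => by ring
theorem bl_al (i d) : bl (al i) d = pr i d := by
  simp [bl, al, Pi.single_apply]
theorem bl_neg (c d) : bl c (-d) = - bl c d := by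
  have := bl_smul c d (-1); simpa using this
theorem norm_add (c d) : normE10 (c + d) = normE10 c + 2 * bl c d + normE10 d := by
  rw [← bl_self, bl_add, bl_comm, bl_add, bl_comm (c + d), bl_add, bl_self, bl_self, bl_comm d c]
  ring
theorem norm_neg (c) : normE10 (-c) = normE10 c := by
  simp [normE10]
theorem norm_smul (k : ℤ) (c) : normE10 (k • c) = k ^ 2 * normE10 c := by
  rw [← bl_self, bl_smul, bl_comm, bl_smul, bl_self]; ring
theorem norm_al (i) : normE10 (al i) = 2 := by
  rw [← bl_self, bl_al, pr_al, AE10_diag]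
theorem norm_refl (c) (i) : normE10 (c - (pr i c) • al i) = normE10 c := by
  have := norm_add c (-(pr i c) • al i)
  rw [norm_smul, bl_smul, norm_al, bl_comm, bl_al, neg_smul, ← sub_eq_add_neg] at this
  rw [this]; ring

section
variable {L : Type*} [LieRing L] [LieAlgebra ℂ L]

def Le1 (S : Submodule ℂ L) : Prop := ∀ x ∈ S, ∀ y ∈ S, y ≠ 0 → ∃ a : ℂ, x = a • y

namespace KM
variable {D : KM L}

theorem nil_e (i : Fin 10) (x : L) : ∃ n, ((ad ℂ L (D.e i)) ^ n) x = 0 := by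
  rw [← LieSubalgebra.mem_engel_iff]
  have : LieSubalgebra.engel ℂ (D.e i) = ⊤ := by
    apply D.gen
    · intro j
      rw [LieSubalgebra.mem_engel_iff]
      rcases AE10_cases i j with h | h | h
      · exact ⟨1, by simp [h.1]⟩
      · exact ⟨1, by simp [D.se0 i j h.2]⟩
      · exact ⟨2, by simp [pow_two, D.se1 i j h.2]⟩
    · intro j
      rw [LieSubalgebra.mem_engel_iff]
      refine ⟨3, ?_⟩
      by_cases h : i = j
      · subst h
        have : ⁅D.e i, D.h i⁆ = -((AE10 i i : ℂ) • D.e i) := by rw [← lie_skew, D.he]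
        simp [pow_succ, D.ef, this]
      · simp [pow_succ, D.ef, h]
  rw [this]; trivial

theorem refl_inj {i : Fin 10} {c : Fin 10 → ℤ} {k : ℕ} (hk : pr i c = k) {x : L}
    (hx : x ∈ D.wt c) (h0 : ((ad ℂ L (D.f i)) ^ k) x = 0) : x = 0 := by
  obtain ⟨N, hN⟩ := nil_e (D := D) i x
  refine sl2_main (E := ad ℂ L (D.e i)) (F := ad ℂ L (D.f i)) (H := ad ℂ L (D.h i))
    ?_ ?_ ?_ N k k x ?_ le_rfl h0 hN
  · intro x; simp only [ad_apply]; rw [leibniz_lie, D.ef, if_pos rfl, add_comm]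
  · intro x; simp only [ad_apply]; rw [leibniz_lie, D.he, AE10_diag, smul_lie, add_comm]; simp
  · intro x; simp only [ad_apply]; rw [leibniz_lie, D.hf, AE10_diag, neg_lie, smul_lie, add_comm]
    simp [sub_eq_add_neg]
  · have := mem_wt.1 hx i
    rw [hk] at this; simpa using this

theorem f_pow_mem {i : Fin 10} {c : Fin 10 → ℤ} (k : ℕ) {x : L}
    (hx : x ∈ D.wt c) : ((ad ℂ L (D.f i)) ^ k) x ∈ D.wt (c - (k : ℤ) • al i) := by
  induction k with
  | zero => simpa using hx
  | succ k ih =>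
    rw [pow_succ', Module.End.mul_apply, ad_apply]
    refine wt_lie' (f_mem i) ih ?_
    push_cast; rw [add_smul]; simp; abel

def Good (D : KM L) (c : Fin 10 → ℤ) : Prop :=
  (2 < normE10 c → D.wt c = ⊥) ∧ (normE10 c = 2 → Le1 (D.wt c))

theorem Le1_bot {S : Submodule ℂ L} (h : S = ⊥) : Le1 S := by
  subst h
  intro x hx y hy hy0
  exact absurd ((Submodule.mem_bot ℂ).1 hy) hy0

theorem good_bot {c} (h : D.wt c = ⊥) : Good D c := ⟨fun _ => h, fun _ => Le1_bot h⟩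

theorem good_refl {i : Fin 10} {c : Fin 10 → ℤ} (h0 : 0 ≤ pr i c)
    (hg : Good D (c - (pr i c) • al i)) : Good D c := by
  obtain ⟨k, hk⟩ := Int.eq_ofNat_of_zero_le h0
  unfold Good at hg
  rw [norm_refl, hk] at hg
  constructor
  · intro hn
    rw [eq_bot_iff]; intro x hx
    have h1 := f_pow_mem (D := D) (i := i) k hx
    rw [hg.1 hn] at h1
    exact refl_inj hk hx h1
  · intro hn x hx y hy hy0
    have h1 := f_pow_mem (D := D) (i := i) k hx
    have h2 := f_pow_mem (D := D) (i := i) k hy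
    obtain ⟨a, ha⟩ := hg.2 hn _ h1 _ h2 (fun h => hy0 (refl_inj hk hy h))
    refine ⟨a, ?_⟩
    rw [← sub_eq_zero]
    refine refl_inj hk (Submodule.sub_mem _ hx (Submodule.smul_mem _ a hy)) ?_
    rw [map_sub, map_smul, ha, sub_self]

theorem al_good (i) : Good D (al i) := by
  refine ⟨fun h => by rw [norm_al] at h; omega, fun _ => ?_⟩
  intro x hx y hy hy0
  obtain ⟨a, rfl⟩ := T2a i hx
  obtain ⟨b, rfl⟩ := T2a i hy
  refine ⟨a / b, ?_⟩
  rw [smul_smul, div_mul_cancel₀]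
  rintro rfl; simp at hy0

theorem exists_refl {c : Fin 10 → ℤ} (h0 : c 0 = 0 ∨ c 0 = 1) (hc : ∀ i, 0 ≤ c i)
    (hn : 2 ≤ normE10 c) : c = al 0 ∨ ∃ i, i ≠ 0 ∧ 0 < pr i c := by
  rcases h0 with h0 | h0
  · right
    have : ∃ i, 0 < c i * pr i c := by
      by_contra hcon
      push Not at hcon
      have := Finset.sum_nonpos (s := Finset.univ) (f := fun i => c i * pr i c) (fun i _ => hcon i)
      rw [← bl_self] at hn; unfold bl at hn; omega
    obtain ⟨i, hi⟩ := this
    have h3 : 0 < pr i c := by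
      by_contra hcon
      have := mul_nonpos_of_nonneg_of_nonpos (hc i) (not_lt.1 hcon)
      omega
    refine ⟨i, ?_, h3⟩
    rintro rfl; rw [h0] at hi; simp at hi
  · by_cases hex : ∃ i, i ≠ 0 ∧ 0 < pr i c
    · exact Or.inr hex
    · left
      push Not at hex
      obtain ⟨p0, p1, p2, p3, p4, p5, p6, p7, p8, p9⟩ := pr_all c
      have q1 := hex 1 (by decide)
      have q2 := hex 2 (by decide)
      have q3 := hex 3 (by decide)
      have q4 := hex 4 (by decide)
      have q5 := hex 5 (by decide)
      have q6 := hex 6 (by decide)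
      have q7 := hex 7 (by decide)
      have q8 := hex 8 (by decide)
      have q9 := hex 9 (by decide)
      have key : pr 1 c + 2 * pr 2 c + 3 * pr 3 c + 4 * pr 4 c + 5 * pr 5 c + 6 * pr 6 c
        + 4 * pr 7 c + 2 * pr 8 c + 3 * pr 9 c = -1 := by
        rw [p1, p2, p3, p4, p5, p6, p7, p8, p9, h0]; ring
      have z2 : pr 2 c = 0 := by omega
      have z3 : pr 3 c = 0 := by omega
      have z4 : pr 4 c = 0 := by omega
      have z5 : pr 5 c = 0 := by omega
      have z6 : pr 6 c = 0 := by omega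
      have z7 : pr 7 c = 0 := by omega
      have z8 : pr 8 c = 0 := by omega
      have z9 : pr 9 c = 0 := by omega
      have z1 : pr 1 c = -1 := by omega
      have hnn : normE10 c = pr 0 c - c 1 := by
        rw [← bl_self]
        simp [bl, Fin.sum_univ_succ, Fin.succ, z1, z2, z3, z4, z5, z6, z7, z8, z9, h0]
        ring
      have c1 : c 1 = 0 := by have := hc 1; omega
      apply pr_inj
      rw [z2] at p2
      rw [z3] at p3
      rw [z4] at p4
      rw [z5] at p5
      rw [z6] at p6
      rw [z7] at p7
      rw [z8] at p8
      rw [z9] at p9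
      rw [z1] at p1
      have : c = al 0 := by
        ext i; revert i; rw [fin10_forall]
        simp only [al]
        simp
        refine ⟨?_, ?_, ?_, ?_, ?_, ?_, ?_, ?_, ?_, ?_⟩ <;> linarith
      rw [this]; intro i; rfl

theorem S_pos (n : ℕ) : ∀ c : Fin 10 → ℤ, (c 0 = 0 ∨ c 0 = 1) → ∑ i, c i ≤ n → (∃ i, 0 < c i) →
    2 ≤ normE10 c → Good D c := by
  induction n with
  | zero =>
    intro c h0 hs hp hn
    apply good_bot
    apply T1 hp
    by_contra hcon
    push Not at hcon
    obtain ⟨i, hi⟩ := hp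
    have := Finset.single_le_sum (f := c) (s := Finset.univ) (fun i _ => hcon i) (Finset.mem_univ i)
    simp at hs; omega
  | succ n ih =>
    intro c h0 hs hp hn
    by_cases hneg : ∃ i, c i < 0
    · exact good_bot (T1 hp hneg)
    push Not at hneg
    rcases exists_refl h0 hneg hn with rfl | ⟨i, hi, hpi⟩
    · exact al_good 0
    by_cases hp' : ∃ j, 0 < (c - (pr i c) • al i) j
    · apply good_refl hpi.le
      apply ih
      · simpa [al, hi, Ne.symm hi] using h0
      · simp only [Pi.sub_apply, Pi.smul_apply, smul_eq_mul, Finset.sum_sub_distrib,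
          ← Finset.mul_sum]
        have : ∑ j, al i j = 1 := by simp [al]
        rw [this]; push_cast at hs; omega
      · exact hp'
      · rw [norm_refl]; exact hn
    · push Not at hp'
      have hz : ∀ j ≠ i, c j = 0 := by
        intro j hj
        have h1 := hp' j
        have h2 := hneg j
        simp [al, hj] at h1
        omega
      have hci : 0 < c i := by
        obtain ⟨j, hj⟩ := hp
        by_cases h : j = i
        · rw [← h]; exact hj
        · rw [hz j h] at hj; omega
      by_cases h2 : 2 ≤ c i
      · exact good_bot (T2b i hz h2)
      · have : c = al i := by
          ext j
          by_cases h : j = i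
          · subst h; simp [al]; omega
          · simp [al, h, hz j h]
        rw [this]; exact al_good i

theorem good (D : KM L) {c : Fin 10 → ℤ} (h0 : c 0 = 0 ∨ c 0 = 1 ∨ c 0 = -1) (hn : 2 ≤ normE10 c) :
    Good D c := by
  have P : ∀ (D : KM L) (c : Fin 10 → ℤ), (c 0 = 0 ∨ c 0 = 1) → (∃ i, 0 < c i) →
      2 ≤ normE10 c → Good D c := fun D c h1 h2 h3 =>
    S_pos (∑ i, c i).toNat c h1 (by omega) h2 h3
  by_cases hp : ∃ i, 0 < c i
  · rcases h0 with h | h | h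
    · exact P D c (Or.inl h) hp hn
    · exact P D c (Or.inr h) hp hn
    · exact good_bot (T1 hp ⟨0, by omega⟩)
  · push Not at hp
    have hne : ∃ i, 0 < (-c) i := by
      by_contra hcon
      push Not at hcon
      have : c = 0 := by
        ext i
        have h1 := hp i
        have h2 := hcon i
        simp at h2 ⊢; omega
      subst this
      simp [normE10] at hn
    have := P D.dual (-c) (by
      have := hp 0
      simp only [Pi.neg_apply]; omega) hne (by rw [norm_neg]; exact hn)
    unfold Good at this ⊢
    rw [wt_dual, norm_neg, neg_neg] at this
    exact this

theorem wt_zero (D : KM L) {c : Fin 10 → ℤ} (h0 : c 0 = 0 ∨ c 0 = 1 ∨ c 0 = -1) (hn : 2 < normE10 c)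
    {x : L} (hx : x ∈ D.wt c) : x = 0 := by
  have := (good D h0 hn.le).1 hn
  rw [this] at hx; exact hx

theorem wt_le1 (D : KM L) {c : Fin 10 → ℤ} (h0 : c 0 = 0 ∨ c 0 = 1 ∨ c 0 = -1) (hn : normE10 c = 2) :
    Le1 (D.wt c) := (good D h0 hn.ge).2 hn

end KM
end
end KMW


namespace KMW
open LieAlgebra

def nd (i : Fin 8) : Fin 10 := ⟨i.1 + 2, by omega⟩

/-- coordinates: level, delta-coefficient, finite part -/
def co (l n : ℤ) (g : Fin 8 → ℤ) : Fin 10 → ℤ :=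
  ![l, n, 2 * n + g 0, 3 * n + g 1, 4 * n + g 2, 5 * n + g 3, 6 * n + g 4, 4 * n + g 5,
    2 * n + g 6, 3 * n + g 7]

def A8 (i j : Fin 8) : ℤ := AE10 (nd i) (nd j)
def prg (i : Fin 8) (g : Fin 8 → ℤ) : ℤ := ∑ j, A8 i j * g j
def ip (g g' : Fin 8 → ℤ) : ℤ := ∑ i, g i * prg i g'
def sg (i : Fin 8) : Fin 8 → ℤ := Pi.single i 1
def tht : Fin 8 → ℤ := ![2, 3, 4, 5, 6, 4, 2, 3]

theorem fin8_forall {P : Fin 8 → Prop} : (∀ i, P i) ↔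
    (P 0 ∧ P 1 ∧ P 2 ∧ P 3 ∧ P 4 ∧ P 5 ∧ P 6 ∧ P 7) := by
  constructor
  · intro h; exact ⟨h 0, h 1, h 2, h 3, h 4, h 5, h 6, h 7⟩
  · rintro ⟨h0, h1, h2, h3, h4, h5, h6, h7⟩ i
    fin_cases i <;> assumption

theorem co_coords (l n g) : co l n g 0 = l ∧ co l n g 1 = n ∧ co l n g 2 = 2 * n + g 0 ∧
    co l n g 3 = 3 * n + g 1 ∧ co l n g 4 = 4 * n + g 2 ∧ co l n g 5 = 5 * n + g 3 ∧
    co l n g 6 = 6 * n + g 4 ∧ co l n g 7 = 4 * n + g 5 ∧ co l n g 8 = 2 * n + g 6 ∧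
    co l n g 9 = 3 * n + g 7 := ⟨rfl, rfl, rfl, rfl, rfl, rfl, rfl, rfl, rfl, rfl⟩

theorem co_zero (l n g) : co l n g 0 = l := rfl

theorem ext10 {c d : Fin 10 → ℤ} (h : c 0 = d 0 ∧ c 1 = d 1 ∧ c 2 = d 2 ∧ c 3 = d 3 ∧ c 4 = d 4 ∧
    c 5 = d 5 ∧ c 6 = d 6 ∧ c 7 = d 7 ∧ c 8 = d 8 ∧ c 9 = d 9) : c = d := by
  ext i; revert i; rw [fin10_forall]; exact h

theorem co_surj (c : Fin 10 → ℤ) : ∃ g, c = co (c 0) (c 1) g := by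
  refine ⟨![c 2 - 2 * c 1, c 3 - 3 * c 1, c 4 - 4 * c 1, c 5 - 5 * c 1, c 6 - 6 * c 1,
    c 7 - 4 * c 1, c 8 - 2 * c 1, c 9 - 3 * c 1], ?_⟩
  apply ext10
  simp [co_coords]

theorem co_inj {l n g l' n' g'} (h : co l n g = co l' n' g') : l = l' ∧ n = n' ∧ g = g' := by
  have H := fin10_forall.1 (congrFun h)
  simp only [co_coords] at H
  refine ⟨by omega, by omega, ?_⟩
  ext i; revert i; rw [fin8_forall]
  obtain ⟨h0, h1, h2, h3, h4, h5, h6, h7, h8, h9⟩ := H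
  subst h1
  refine ⟨?_, ?_, ?_, ?_, ?_, ?_, ?_, ?_⟩ <;> linarith

theorem co_add (l n g l' n' g') : co l n g + co l' n' g' = co (l + l') (n + n') (g + g') := by
  apply ext10
  simp only [Pi.add_apply, co_coords]
  refine ⟨?_, ?_, ?_, ?_, ?_, ?_, ?_, ?_, ?_, ?_⟩ <;> first | trivial | ring

theorem co_neg (l n g) : - co l n g = co (-l) (-n) (-g) := by
  apply ext10
  simp only [Pi.neg_apply, co_coords]
  refine ⟨?_, ?_, ?_, ?_, ?_, ?_, ?_, ?_, ?_, ?_⟩ <;> first | trivial | ring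

theorem co_zero' : co 0 0 0 = 0 := by
  apply ext10
  simp [co_coords]

theorem al_nd (i) : al (nd i) = co 0 0 (sg i) := by
  fin_cases i <;> decide

theorem al_one : al 1 = co 0 1 (-tht) := by decide
theorem al_zero : al 0 = co 1 0 0 := by decide

theorem prg_all (g : Fin 8 → ℤ) : prg 0 g = 2 * g 0 - g 1 ∧ prg 1 g = 2 * g 1 - g 0 - g 2 ∧
    prg 2 g = 2 * g 2 - g 1 - g 3 ∧ prg 3 g = 2 * g 3 - g 2 - g 4 ∧
    prg 4 g = 2 * g 4 - g 3 - g 5 - g 7 ∧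
    prg 5 g = 2 * g 5 - g 4 - g 6 ∧ prg 6 g = 2 * g 6 - g 5 ∧ prg 7 g = 2 * g 7 - g 4 := by
  simp only [prg, A8, AE10_eq, Fin.sum_univ_succ, nd]
  simp [Matrix.of_apply, Matrix.cons_val, Fin.succ]
  refine ⟨?_, ?_, ?_, ?_, ?_, ?_, ?_, ?_⟩ <;> ring

theorem pr_nd (i l n g) : pr (nd i) (co l n g) = prg i g := by
  revert i
  rw [fin8_forall]
  obtain ⟨p0, p1, p2, p3, p4, p5, p6, p7, p8, p9⟩ := pr_all (co l n g)
  obtain ⟨q0, q1, q2, q3, q4, q5, q6, q7⟩ := prg_all g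
  simp only [co_coords] at *
  rw [q0, q1, q2, q3, q4, q5, q6, q7]
  refine ⟨p2.trans ?_, p3.trans ?_, p4.trans ?_, p5.trans ?_, p6.trans ?_, p7.trans ?_,
    p8.trans ?_, p9.trans ?_⟩ <;> ring

theorem bl_co (l n g l' n' g') : bl (co l n g) (co l' n' g') =
    2 * l * l' - l * n' - l' * n + ip g g' := by
  obtain ⟨p0, p1, p2, p3, p4, p5, p6, p7, p8, p9⟩ := pr_all (co l' n' g')
  obtain ⟨q0, q1, q2, q3, q4, q5, q6, q7⟩ := prg_all g'
  have h1 : bl (co l n g) (co l' n' g') = ∑ i, co l n g i * pr i (co l' n' g') := rfl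
  have h2 : ∀ F : Fin 10 → ℤ, ∑ i, F i = F 0 + F 1 + F 2 + F 3 + F 4 + F 5 + F 6 + F 7 + F 8 + F 9 := by
    intro F; simp [Fin.sum_univ_succ, Fin.succ]; ring
  have h3 : ∀ F : Fin 8 → ℤ, ∑ i, F i = F 0 + F 1 + F 2 + F 3 + F 4 + F 5 + F 6 + F 7 := by
    intro F; simp [Fin.sum_univ_succ, Fin.succ]; ring
  rw [h1, h2, ip, h3, p0, p1, p2, p3, p4, p5, p6, p7, p8, p9, q0, q1, q2, q3, q4, q5, q6, q7]
  simp only [co_coords]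
  ring

theorem norm_co (l n g) : normE10 (co l n g) = 2 * l * l - 2 * l * n + ip g g := by
  rw [← bl_self, bl_co]; ring

theorem prg_add (i) (c d : Fin 8 → ℤ) : prg i (c + d) = prg i c + prg i d := by
  simp [prg, mul_add, Finset.sum_add_distrib]
theorem prg_neg (i) (c : Fin 8 → ℤ) : prg i (-c) = - prg i c := by
  simp [prg]
theorem prg_sg (i j) : prg i (sg j) = A8 i j := by
  simp [prg, sg, Pi.single_apply]
theorem A8_symm (i j) : A8 i j = A8 j i := AE10_symm _ _
theorem ip_comm (c d) : ip c d = ip d c := by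
  simp only [ip, prg, Finset.mul_sum]
  rw [Finset.sum_comm]
  exact Finset.sum_congr rfl fun i _ => Finset.sum_congr rfl fun j _ => by
    rw [A8_symm]; ring
theorem ip_add (c d d') : ip c (d + d') = ip c d + ip c d' := by
  simp [ip, prg_add, mul_add, Finset.sum_add_distrib]
theorem ip_neg (c d) : ip c (-d) = - ip c d := by
  simp [ip, prg_neg]
theorem ip_sg (i d) : ip (sg i) d = prg i d := by
  simp [ip, sg, Pi.single_apply]
theorem ip_sg' (i d) : ip d (sg i) = prg i d := by rw [ip_comm, ip_sg]
theorem ip_add' (c d d') : ip (c + d) d' = ip c d' + ip d d' := by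
  rw [ip_comm, ip_add, ip_comm, ip_comm d']
theorem ip_neg' (c d) : ip (-c) d = - ip c d := by rw [ip_comm, ip_neg, ip_comm]
theorem A8_diag (i) : A8 i i = 2 := AE10_diag _
theorem ip_zero' (d) : ip 0 d = 0 := by simp [ip]
theorem ip_zero (d) : ip d 0 = 0 := by rw [ip_comm, ip_zero']
theorem prg_zero (i) : prg i 0 = 0 := by simp [prg]

theorem A8_cases (i j : Fin 8) : i = j ∧ A8 i j = 2 ∨ i ≠ j ∧ A8 i j = 0 ∨ i ≠ j ∧ A8 i j = -1 := by
  have := AE10_cases (nd i) (nd j)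
  have h : nd i = nd j ↔ i = j := by simp [nd, Fin.ext_iff]
  rw [ne_eq, h] at this; exact this

def hq (g : Fin 8 → ℤ) : ℤ :=
  g 0 ^ 2 + g 1 ^ 2 + g 2 ^ 2 + g 3 ^ 2 + g 4 ^ 2 + g 5 ^ 2 + g 6 ^ 2 + g 7 ^ 2
  - g 0 * g 1 - g 1 * g 2 - g 2 * g 3 - g 3 * g 4 - g 4 * g 5 - g 5 * g 6 - g 4 * g 7

theorem ip_self (g) : ip g g = 2 * hq g := by
  obtain ⟨q0, q1, q2, q3, q4, q5, q6, q7⟩ := prg_all g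
  have h3 : ∀ F : Fin 8 → ℤ, ∑ i, F i = F 0 + F 1 + F 2 + F 3 + F 4 + F 5 + F 6 + F 7 := by
    intro F; simp [Fin.sum_univ_succ, Fin.succ]; ring
  rw [ip, h3, q0, q1, q2, q3, q4, q5, q6, q7, hq]; ring

theorem hq_add (g) (i) : hq (g + sg i) = hq g + prg i g + 1 := by
  have h1 := ip_self (g + sg i)
  rw [ip_add, ip_add', ip_add', ip_self, ip_sg, ip_sg, ip_sg', prg_sg, A8_diag] at h1
  omega
theorem hq_sub (g) (i) : hq (g + -sg i) = hq g - prg i g + 1 := by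
  have h1 := ip_self (g + -sg i)
  rw [ip_add, ip_add', ip_add', ip_neg, ip_neg, ip_neg', ip_neg', ip_self, ip_sg, ip_sg, ip_sg',
    prg_sg, A8_diag] at h1
  omega

theorem hq_pos {g : Fin 8 → ℤ} (h : hq g ≤ 0) : g = 0 := by
  have key : 720 * hq g = 180 * g 0 ^ 2 + 60 * (3 * g 0 - 2 * g 1) ^ 2 + 30 * (4 * g 1 - 3 * g 2) ^ 2
    + 18 * (5 * g 2 - 4 * g 3) ^ 2 + 12 * (6 * g 3 - 5 * g 4) ^ 2 + 15 * (4 * g 4 - 6 * g 5) ^ 2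
    + 45 * (2 * g 5 - 4 * g 6) ^ 2 + 20 * (3 * g 4 - 6 * g 7) ^ 2 := by
    unfold hq; ring
  have s0 := sq_nonneg (g 0)
  have s1 := sq_nonneg (3 * g 0 - 2 * g 1)
  have s2 := sq_nonneg (4 * g 1 - 3 * g 2)
  have s3 := sq_nonneg (5 * g 2 - 4 * g 3)
  have s4 := sq_nonneg (6 * g 3 - 5 * g 4)
  have s5 := sq_nonneg (4 * g 4 - 6 * g 5)
  have s6 := sq_nonneg (2 * g 5 - 4 * g 6)
  have s7 := sq_nonneg (3 * g 4 - 6 * g 7)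
  have z0 : g 0 = 0 := by apply pow_eq_zero_iff two_ne_zero |>.1; linarith
  have z1 : 3 * g 0 - 2 * g 1 = 0 := by apply pow_eq_zero_iff two_ne_zero |>.1; linarith
  have z2 : 4 * g 1 - 3 * g 2 = 0 := by apply pow_eq_zero_iff two_ne_zero |>.1; linarith
  have z3 : 5 * g 2 - 4 * g 3 = 0 := by apply pow_eq_zero_iff two_ne_zero |>.1; linarith
  have z4 : 6 * g 3 - 5 * g 4 = 0 := by apply pow_eq_zero_iff two_ne_zero |>.1; linarith
  have z5 : 4 * g 4 - 6 * g 5 = 0 := by apply pow_eq_zero_iff two_ne_zero |>.1; linarith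
  have z6 : 2 * g 5 - 4 * g 6 = 0 := by apply pow_eq_zero_iff two_ne_zero |>.1; linarith
  have z7 : 3 * g 4 - 6 * g 7 = 0 := by apply pow_eq_zero_iff two_ne_zero |>.1; linarith
  ext i; revert i; rw [fin8_forall]
  simp only [Pi.zero_apply]
  refine ⟨?_, ?_, ?_, ?_, ?_, ?_, ?_, ?_⟩ <;> linarith

/-- walking through roots of E8 -/
def vwalk : List (Fin 8 × Bool) → (Fin 8 → ℤ) → (Fin 8 → ℤ) → Bool
  | [], g, g' => decide (∀ i, g i = g' i)
  | (j, true) :: l, g, g' => decide (2 * g j - (∑ k, if k = j then 0 else -A8 j k * g k) = -1)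
      && vwalk l (fun k => g k + if k = j then 1 else 0) g'
  | (j, false) :: l, g, g' => decide (2 * g j - (∑ k, if k = j then 0 else -A8 j k * g k) = 1)
      && vwalk l (fun k => g k - if k = j then 1 else 0) g'

def Closed8 (P : (Fin 8 → ℤ) → Prop) : Prop :=
  (∀ g j, ip g g = 2 → prg j g = -1 → P g → P (g + sg j)) ∧
  (∀ g j, ip g g = 2 → prg j g = 1 → P g → P (g + -sg j))

theorem prg_alt (g j) : prg j g = 2 * g j - (∑ k, if k = j then 0 else -A8 j k * g k) := by
  have h : ∀ k, A8 j k * g k = (if k = j then 2 * g j else 0) - (if k = j then 0 else -A8 j k * g k) := by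
    intro k
    by_cases hk : k = j
    · subst hk; simp [A8_diag]
    · simp [hk]
  rw [prg, Finset.sum_congr rfl (fun k _ => h k), Finset.sum_sub_distrib]
  simp

theorem vwalk_P {P : (Fin 8 → ℤ) → Prop} (hP : Closed8 P) (l : List (Fin 8 × Bool)) :
    ∀ g g', ip g g = 2 → vwalk l g g' = true → P g → P g' := by
  induction l with
  | nil =>
    intro g g' _ h hg
    simp [vwalk] at h
    have : g = g' := funext h
    rw [← this]; exact hg
  | cons p l ih =>
    intro g g' hn h hg
    obtain ⟨j, b⟩ := p
    cases b
    · simp only [vwalk, Bool.and_eq_true, decide_eq_true_eq] at h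
      rw [← prg_alt] at h
      have he : (fun k => g k - if k = j then 1 else 0) = g + -sg j := by
        ext k; simp [sg, Pi.single_apply, sub_eq_add_neg]
      rw [he] at h
      refine ih _ _ ?_ h.2 (hP.2 g j hn h.1 hg)
      rw [ip_self, hq_sub]; rw [ip_self] at hn; omega
    · simp only [vwalk, Bool.and_eq_true, decide_eq_true_eq] at h
      rw [← prg_alt] at h
      have he : (fun k => g k + if k = j then 1 else 0) = g + sg j := by
        ext k; simp [sg, Pi.single_apply]
      rw [he] at h
      refine ih _ _ ?_ h.2 (hP.1 g j hn h.1 hg)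
      rw [ip_self, hq_add]; rw [ip_self] at hn; omega

def wpath : List (Fin 8) := [0, 1, 2, 3, 4, 5, 6, 7, 4, 3, 2, 1, 5, 4, 3, 2, 7, 4, 3, 5, 4, 6, 5, 7,
  4, 3, 2, 1]

theorem conn_up {P : (Fin 8 → ℤ) → Prop} (hP : Closed8 P) (h : P (-tht)) : P (-sg 0) :=
  vwalk_P hP (wpath.map fun j => (j, true)) _ _ (by decide +kernel) (by decide +kernel) h
theorem conn_dn {P : (Fin 8 → ℤ) → Prop} (hP : Closed8 P) (h : P (-sg 0)) : P (-tht) :=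
  vwalk_P hP (wpath.reverse.map fun j => (j, false)) _ _ (by decide +kernel) (by decide +kernel) h
theorem conn_ij {P : (Fin 8 → ℤ) → Prop} (hP : Closed8 P) (i j : Fin 8)
    (hij : vwalk [(j, false), (i, true)] (-sg i) (-sg j) = true) (h : P (-sg i)) : P (-sg j) :=
  vwalk_P hP [(j, false), (i, true)] _ _
    (by rw [ip_neg, ip_neg', ip_sg, prg_sg, A8_diag]; rfl) hij h
theorem conn_all {P : (Fin 8 → ℤ) → Prop} (hP : Closed8 P) (h : P (-tht)) (i : Fin 8) :
    P (-sg i) := by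
  have h0 := conn_up hP h
  have h1 := conn_ij hP 0 1 (by decide +kernel) h0
  have h2 := conn_ij hP 1 2 (by decide +kernel) h1
  have h3 := conn_ij hP 2 3 (by decide +kernel) h2
  have h4 := conn_ij hP 3 4 (by decide +kernel) h3
  have h5 := conn_ij hP 4 5 (by decide +kernel) h4
  have h6 := conn_ij hP 5 6 (by decide +kernel) h5
  have h7 := conn_ij hP 4 7 (by decide +kernel) h4
  revert i; rw [fin8_forall]; exact ⟨h0, h1, h2, h3, h4, h5, h6, h7⟩

section
variable {L : Type*} [LieRing L] [LieAlgebra ℂ L]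
namespace KM
variable (D : KM L)

def hb (b : Fin 10 → ℤ) : L := ∑ i, (b i : ℂ) • D.h i

variable {D}
theorem hb_lie (b : Fin 10 → ℤ) {d : Fin 10 → ℤ} {x : L} (hx : x ∈ D.wt d) :
    ⁅D.hb b, x⁆ = ((bl b d : ℤ) : ℂ) • x := by
  simp only [hb, _root_.sum_lie, smul_lie, mem_wt.1 hx, smul_smul, ← Finset.sum_smul, bl]
  push_cast; rfl

theorem lie_hb (b : Fin 10 → ℤ) {d : Fin 10 → ℤ} {x : L} (hx : x ∈ D.wt d) :
    ⁅x, D.hb b⁆ = (-(bl b d : ℤ) : ℂ) • x := by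
  rw [← lie_skew, hb_lie b hx, neg_smul]

theorem hb_add (b d) : D.hb (b + d) = D.hb b + D.hb d := by
  simp [hb, add_smul, Finset.sum_add_distrib]
theorem hb_neg (b) : D.hb (-b) = - D.hb b := by
  simp [hb]
theorem hb_al (i) : D.hb (al i) = D.h i := by
  simp [hb, al, Pi.single_apply]

variable (D) in
def Trip (b : Fin 10 → ℤ) : Prop := ∃ e ∈ D.wt b, ∃ f ∈ D.wt (-b), ⁅e, f⁆ = D.hb b

theorem trip_al (i) : D.Trip (al i) :=
  ⟨D.e i, e_mem i, D.f i, f_mem i, by rw [D.ef, if_pos rfl, hb_al]⟩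

theorem Trip.neg {b} (h : D.Trip b) : D.Trip (-b) := by
  obtain ⟨e, he, f, hf, h⟩ := h
  refine ⟨f, hf, e, by rwa [neg_neg], ?_⟩
  rw [← lie_skew, h, hb_neg]

theorem Trip.add {b d} (h : D.Trip b) (h' : D.Trip d) (hb0 : b 0 = 0) (hd0 : d 0 = 0)
    (hb2 : normE10 b = 2) (hd2 : normE10 d = 2) (hbd : bl b d = -1) : D.Trip (b + d) := by
  obtain ⟨e, he, f, hf, h⟩ := h
  obtain ⟨e', he', f', hf', h'⟩ := h'
  have z1 : ⁅e, f'⁆ = 0 := wt_zero D (c := b + -d) (Or.inl (by simp [hb0, hd0]))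
    (by rw [norm_add, norm_neg, bl_neg]; omega) (wt_lie he hf')
  have z2 : ⁅e', f⁆ = 0 := wt_zero D (c := d + -b) (Or.inl (by simp [hb0, hd0]))
    (by rw [norm_add, norm_neg, bl_neg, bl_comm]; omega) (wt_lie he' hf)
  refine ⟨⁅e', e⁆, wt_lie' he' he (add_comm _ _), ⁅f, f'⁆, wt_lie' hf hf' (neg_add _ _).symm, ?_⟩
  have a1 : ⁅⁅e', e⁆, f⁆ = e' := by
    rw [lie_lie, h, z2, lie_zero, sub_zero, lie_hb b he', hbd]; simp
  have a2 : ⁅⁅e', e⁆, f'⁆ = - e := by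
    rw [lie_lie, h', z1, lie_zero, zero_sub, lie_hb d he, bl_comm, hbd]; simp
  rw [leibniz_lie, a1, a2, h', lie_neg, lie_skew, h, hb_add, add_comm]

theorem trip_closed : Closed8 fun g => D.Trip (co 0 1 g) := by
  constructor
  · intro g j hg hj h
    have := h.add (trip_al (nd j)) rfl rfl (by rw [norm_co, hg]; norm_num) (norm_al _)
      (by rw [bl_comm, bl_al, pr_nd, hj])
    rw [al_nd, co_add] at this; simpa using this
  · intro g j hg hj h
    have := h.add (trip_al (nd j)).neg rfl rfl (by rw [norm_co, hg]; norm_num)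
      (by rw [norm_neg, norm_al]) (by rw [bl_neg, bl_comm, bl_al, pr_nd, hj])
    rw [al_nd, co_neg, co_add] at this; simpa using this

theorem trip_sg (D : KM L) (i : Fin 8) : D.Trip (co 0 1 (-sg i)) :=
  conn_all trip_closed (al_one ▸ trip_al 1) i

/-- the central element -/
def cc (D : KM L) : L := D.hb (co 0 1 0)

theorem cc_lie {d : Fin 10 → ℤ} {x : L} (hx : x ∈ D.wt d) : ⁅D.cc, x⁆ = (-(d 0 : ℤ) : ℂ) • x := by
  rw [cc, hb_lie _ hx]
  obtain ⟨g, hg⟩ := co_surj d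
  rw [hg, bl_co, ip_zero', co_zero]; simp
end KM
end
end KMW


namespace KMW
open LieAlgebra

theorem shift_exists {M : Type*} [AddCommGroup M] [Module ℂ M] (T T' : M →ₗ[ℂ] M)
    (hc : ∀ x, T (T' x) = T' (T x)) (x0 : M) (h : T (T' x0) = x0) :
    ∃ X : ℤ → M, X 0 = x0 ∧ (∀ n, T (X n) = X (n + 1)) ∧ ∀ n, T' (X n) = X (n - 1) := by
  have hcc : Commute T T' := by ext x; exact hc x
  refine ⟨fun n => (T ^ n.toNat) ((T' ^ (-n).toNat) x0), by simp, ?_, ?_⟩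
  · intro n
    rcases lt_or_ge n 0 with hn | hn
    · obtain ⟨m, rfl⟩ : ∃ m : ℕ, n = -(m + 1 : ℤ) := ⟨(-n - 1).toNat, by omega⟩
      have e1 : (-(m + 1 : ℤ)).toNat = 0 := by omega
      have e2 : (-(-(m + 1 : ℤ))).toNat = m + 1 := by omega
      have e3 : (-(m + 1 : ℤ) + 1).toNat = 0 := by omega
      have e4 : (-(-(m + 1 : ℤ) + 1)).toNat = m := by omega
      simp only [e1, e2, e3, e4, pow_zero, Module.End.one_apply]
      rw [pow_succ, Module.End.mul_apply]
      have := LinearMap.congr_fun (hcc.pow_right m).eq (T' x0)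
      simp only [Module.End.mul_apply] at this
      rw [this, h]
    · obtain ⟨m, rfl⟩ := Int.eq_ofNat_of_zero_le hn
      have e1 : (m : ℤ).toNat = m := by omega
      have e2 : (-(m : ℤ)).toNat = 0 := by omega
      have e3 : ((m : ℤ) + 1).toNat = m + 1 := by omega
      have e4 : (-((m : ℤ) + 1)).toNat = 0 := by omega
      simp only [e1, e2, e3, e4]
      rw [pow_succ', Module.End.mul_apply]
  · intro n
    rcases lt_or_ge 0 n with hn | hn
    · obtain ⟨m, rfl⟩ : ∃ m : ℕ, n = (m + 1 : ℤ) := ⟨(n - 1).toNat, by omega⟩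
      have e1 : ((m : ℤ) + 1).toNat = m + 1 := by omega
      have e2 : (-((m : ℤ) + 1)).toNat = 0 := by omega
      have e3 : ((m : ℤ) + 1 - 1).toNat = m := by omega
      have e4 : (-((m : ℤ) + 1 - 1)).toNat = 0 := by omega
      simp only [e1, e2, e3, e4, pow_zero, Module.End.one_apply]
      have := LinearMap.congr_fun (hcc.pow_left (m + 1)).eq x0
      simp only [Module.End.mul_apply] at this
      rw [← this, pow_succ, Module.End.mul_apply, h]
    · obtain ⟨m, hm⟩ := Int.eq_ofNat_of_zero_le (neg_nonneg.2 hn)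
      have e1 : n.toNat = 0 := by omega
      have e2 : (-n).toNat = m := by omega
      have e3 : (n - 1).toNat = 0 := by omega
      have e4 : (-(n - 1)).toNat = m + 1 := by omega
      simp only [e1, e2, e3, e4]
      rw [pow_succ', Module.End.mul_apply]; simp

section
variable {G : Type*} [LieRing G] [LieAlgebra ℂ G]

structure R1 (G : Type*) [LieRing G] [LieAlgebra ℂ G] where
  X0 : G
  Y0 : G
  Y1 : G
  Xm : G
  c : G
  ha : G
  cen : ∀ x : G, ⁅c, x⁆ = 0
  h00 : ⁅X0, Y0⁆ = ha
  hm1 : ⁅Xm, Y1⁆ = ha - c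
  hX0 : ⁅ha, X0⁆ = (2 : ℂ) • X0
  hXm : ⁅ha, Xm⁆ = (2 : ℂ) • Xm
  hY0 : ⁅ha, Y0⁆ = -(2 : ℂ) • Y0
  hY1 : ⁅ha, Y1⁆ = -(2 : ℂ) • Y1
  zX : ⁅Xm, X0⁆ = 0
  zY : ⁅Y0, Y1⁆ = 0

namespace R1
variable (R : R1 G)
def H : G := ⁅R.X0, R.Y1⁆
def H' : G := ⁅R.Xm, R.Y0⁆

theorem cen' (x : G) : ⁅x, R.c⁆ = 0 := by rw [← lie_skew, R.cen, neg_zero]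
theorem HY0 : ⁅R.H, R.Y0⁆ = -(2 : ℂ) • R.Y1 := by
  rw [H, lie_lie, R.h00, ← lie_skew R.Y1 R.Y0, R.zY, neg_zero, lie_zero, zero_sub, lie_skew, R.hY1]
theorem HXm : ⁅R.H, R.Xm⁆ = (2 : ℂ) • R.X0 := by
  rw [H, lie_lie, ← lie_skew R.Y1 R.Xm, ← lie_skew R.X0 R.Xm, R.zX, R.hm1, neg_zero, lie_zero,
    sub_zero, lie_neg, lie_skew, sub_lie, R.hX0, R.cen, sub_zero]
theorem H'X0 : ⁅R.H', R.X0⁆ = (2 : ℂ) • R.Xm := by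
  rw [H', lie_lie, R.zX, ← lie_skew R.Y0 R.X0, R.h00, lie_zero, sub_zero, lie_neg, lie_skew, R.hXm]
theorem H'Y1 : ⁅R.H', R.Y1⁆ = -(2 : ℂ) • R.Y0 := by
  rw [H', lie_lie, R.zY, R.hm1, lie_zero, zero_sub, lie_skew, sub_lie, R.cen, R.hY0, sub_zero]
theorem HH' : ⁅R.H, R.H'⁆ = (2 : ℂ) • R.c := by
  conv_lhs => rw [H', leibniz_lie, R.HXm, R.HY0, smul_lie, lie_smul, R.h00, R.hm1]
  module
theorem haH : ⁅R.ha, R.H⁆ = 0 := by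
  rw [H, leibniz_lie, R.hX0, R.hY1, smul_lie, lie_smul]; module
theorem haH' : ⁅R.ha, R.H'⁆ = 0 := by
  rw [H', leibniz_lie, R.hXm, R.hY0, smul_lie, lie_smul]; module

theorem exX : ∃ X : ℤ → G, X 0 = R.X0 ∧ (∀ n, ⁅R.H, X n⁆ = (2 : ℂ) • X (n + 1)) ∧
    ∀ n, ⁅R.H', X n⁆ = (2 : ℂ) • X (n - 1) := by
  obtain ⟨X, h0, h1, h2⟩ := shift_exists ((1 / 2 : ℂ) • ad ℂ G R.H) ((1 / 2 : ℂ) • ad ℂ G R.H')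
    (by
      intro x
      have := leibniz_lie R.H R.H' x
      rw [R.HH', smul_lie, R.cen, smul_zero, zero_add] at this
      simp [this]) R.X0 (by simp [R.H'X0, R.HXm])
  refine ⟨X, h0, fun n => ?_, fun n => ?_⟩
  · rw [← h1]; simp
  · rw [← h2]; simp

theorem exY : ∃ Y : ℤ → G, Y 0 = R.Y0 ∧ (∀ n, ⁅R.H, Y n⁆ = -(2 : ℂ) • Y (n + 1)) ∧
    ∀ n, ⁅R.H', Y n⁆ = -(2 : ℂ) • Y (n - 1) := by
  obtain ⟨X, h0, h1, h2⟩ := shift_exists (-(1 / 2 : ℂ) • ad ℂ G R.H) (-(1 / 2 : ℂ) • ad ℂ G R.H')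
    (by
      intro x
      have := leibniz_lie R.H R.H' x
      rw [R.HH', smul_lie, R.cen, smul_zero, zero_add] at this
      simp [this]) R.Y0 (by
      have : ⁅R.H, ⁅R.H', R.Y0⁆⁆ = (4 : ℂ) • R.Y0 := by
        have := leibniz_lie R.H R.H' R.Y0
        rw [R.HH', smul_lie, R.cen, smul_zero, zero_add] at this
        rw [this, R.HY0, lie_smul, R.H'Y1, smul_smul]; norm_num
      simp [this, smul_smul]; norm_num)
  refine ⟨X, h0, fun n => ?_, fun n => ?_⟩
  · rw [← h1]; simp
  · rw [← h2]; simp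

variable {X Y : ℤ → G}
  (X0 : X 0 = R.X0) (HX : ∀ n, ⁅R.H, X n⁆ = (2 : ℂ) • X (n + 1))
  (H'X : ∀ n, ⁅R.H', X n⁆ = (2 : ℂ) • X (n - 1))
  (Y0 : Y 0 = R.Y0) (HY : ∀ n, ⁅R.H, Y n⁆ = -(2 : ℂ) • Y (n + 1))
  (H'Y : ∀ n, ⁅R.H', Y n⁆ = -(2 : ℂ) • Y (n - 1))
  (XX : ∀ a b, ⁅X a, X b⁆ = 0) (YY : ∀ a b, ⁅Y a, Y b⁆ = 0)

theorem two_cancel {x y : G} (h : (2 : ℂ) • x = (2 : ℂ) • y) : x = y :=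
  smul_right_injective G (two_ne_zero' ℂ) h

include X0 HX H'X in
theorem haX (n : ℤ) : ⁅R.ha, X n⁆ = (2 : ℂ) • X n := by
  induction n using Int.induction_on with
  | zero => rw [X0, R.hX0]
  | succ n ih =>
    apply two_cancel
    rw [← lie_smul, ← HX, leibniz_lie, R.haH, ih, lie_smul]; simp
  | pred n ih =>
    apply two_cancel
    rw [← lie_smul, ← H'X, leibniz_lie, R.haH', ih, lie_smul]; simp

include Y0 HY H'Y in
theorem haY (n : ℤ) : ⁅R.ha, Y n⁆ = -(2 : ℂ) • Y n := by
  have nc : ∀ {x y : G}, -(2 : ℂ) • x = -(2 : ℂ) • y → x = y := fun h =>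
    smul_right_injective G (neg_ne_zero.2 (two_ne_zero' ℂ)) h
  induction n using Int.induction_on with
  | zero => rw [Y0, R.hY0]
  | succ n ih =>
    apply nc
    rw [← lie_smul, ← HY, leibniz_lie, R.haH, ih, lie_smul]; simp
  | pred n ih =>
    apply nc
    rw [← lie_smul, ← H'Y, leibniz_lie, R.haH', ih, lie_smul]; simp

include HX HY in
theorem HP (a b : ℤ) : ⁅R.H, ⁅X a, Y b⁆⁆ = (2 : ℂ) • (⁅X (a + 1), Y b⁆ - ⁅X a, Y (b + 1)⁆) := by
  rw [leibniz_lie, HX, HY, smul_lie, lie_smul]; module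
include H'X H'Y in
theorem H'P (a b : ℤ) : ⁅R.H', ⁅X a, Y b⁆⁆ = (2 : ℂ) • (⁅X (a - 1), Y b⁆ - ⁅X a, Y (b - 1)⁆) := by
  rw [leibniz_lie, H'X, H'Y, smul_lie, lie_smul]; module

include X0 HX H'X Y0 HY H'Y in
theorem S0 (a : ℤ) : ⁅X a, Y (-a)⁆ = R.ha + (a : ℂ) • R.c ∧ ⁅X (a + 1), Y (-a)⁆ = R.H := by
  have hH : ∀ a : ℤ, ⁅X a, Y (-a)⁆ = R.ha + (a : ℂ) • R.c →
      ⁅X (a + 1), Y (-a)⁆ = ⁅X a, Y (-a + 1)⁆ := by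
    intro a h
    have h1 := HP R HX HY a (-a)
    rw [h, lie_add, lie_smul, R.cen', ← lie_skew, R.haH, neg_zero, smul_zero, add_zero] at h1
    have := (smul_eq_zero.1 h1.symm).resolve_left two_ne_zero
    exact sub_eq_zero.1 this
  have hH' : ⁅R.H', R.H⁆ = -(2 : ℂ) • R.c := by rw [← lie_skew, R.HH']; module
  have hY1 : Y 1 = R.Y1 := by
    have h1 := HY 0
    rw [Y0, R.HY0] at h1
    exact (smul_right_injective G (neg_ne_zero.2 (two_ne_zero' ℂ)) h1).symm
  induction a using Int.induction_on with
  | zero =>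
    have h0 : ⁅X 0, Y (-0)⁆ = R.ha + ((0 : ℤ) : ℂ) • R.c := by simp [X0, Y0, R.h00]
    refine ⟨h0, ?_⟩
    rw [hH 0 h0]; simp [X0, hY1, H]
  | succ n ih =>
    have h1 := H'P R H'X H'Y ((n : ℤ) + 1) (-(n : ℤ))
    rw [ih.2, hH', show (n : ℤ) + 1 - 1 = n by ring, ih.1,
      show -(n : ℤ) - 1 = -((n : ℤ) + 1) by ring] at h1
    have h2 : ⁅X ((n : ℤ) + 1), Y (-((n : ℤ) + 1))⁆ = R.ha + (((n : ℤ) + 1 : ℤ) : ℂ) • R.c := by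
      apply two_cancel
      rw [← sub_eq_zero] at h1 ⊢
      rw [← h1]; push_cast; module
    refine ⟨h2, ?_⟩
    rw [hH _ h2, show -((n : ℤ) + 1) + 1 = -n by ring]; exact ih.2
  | pred n ih =>
    have h3 : ⁅X (-(n : ℤ) - 1 + 1), Y (-(-(n : ℤ) - 1))⁆ = R.H := by
      rw [show -(n : ℤ) - 1 + 1 = -n by ring, show -(-(n : ℤ) - 1) = -(-(n : ℤ)) + 1 by ring,
        ← hH _ ih.1]; exact ih.2
    refine ⟨?_, h3⟩
    have h1 := H'P R H'X H'Y (-(n : ℤ) - 1 + 1) (-(-(n : ℤ) - 1))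
    rw [h3, hH', show -(n : ℤ) - 1 + 1 - 1 = -n - 1 by ring, show -(n : ℤ) - 1 + 1 = -n by ring,
      show -(-(n : ℤ) - 1) - 1 = -(-n) by ring, ih.1] at h1
    apply two_cancel
    rw [← sub_eq_zero] at h1 ⊢
    rw [← neg_eq_zero, ← h1]; push_cast; module

include XX in
theorem swap (a b n : ℤ) : ⁅⁅X a, Y b⁆, X n⁆ = ⁅⁅X n, Y b⁆, X a⁆ := by
  rw [lie_lie, XX, lie_zero, sub_zero, ← lie_skew (Y b) (X n), lie_neg, lie_skew]

include X0 HX H'X Y0 HY H'Y XX in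
theorem Q (N : ℤ) : ∀ a n : ℤ, ⁅⁅X a, Y (N - a)⁆, X n⁆ = (2 : ℂ) • X (n + N) := by
  have fin : ∀ N : ℤ, (∀ a n : ℤ, ⁅⁅X (a + 1), Y (N - (a + 1))⁆, X n⁆ = ⁅⁅X a, Y (N - a)⁆, X n⁆) →
      ∀ a n : ℤ, ⁅⁅X a, Y (N - a)⁆, X n⁆ = (2 : ℂ) • X (n + N) := by
    intro N h a n
    have hconst : ∀ a, ⁅⁅X a, Y (N - a)⁆, X n⁆ = ⁅⁅X 0, Y (N - 0)⁆, X n⁆ := by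
      intro a
      induction a using Int.induction_on with
      | zero => rfl
      | succ m ih => rw [h, ih]
      | pred m ih => rw [← ih, ← h (-(m : ℤ) - 1)]; ring_nf
    rw [hconst a, ← hconst (n + N), swap XX, show N - (n + N) = -n by ring, (S0 R X0 HX H'X Y0 HY H'Y n).1,
      add_lie, smul_lie, R.cen, smul_zero, add_zero, haX R X0 HX H'X]
  induction N using Int.induction_on with
  | zero =>
    intro a n
    rw [zero_sub, (S0 R X0 HX H'X Y0 HY H'Y a).1,
      add_lie, smul_lie, R.cen, smul_zero, add_zero, haX R X0 HX H'X, add_zero]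
  | succ N ih =>
    apply fin
    intro a n
    have h1 := leibniz_lie R.H ⁅X a, Y (N - a)⁆ (X n)
    rw [ih, lie_smul, HX, HP R HX HY, HX, lie_smul, ih, smul_lie, sub_lie,
      show (n : ℤ) + 1 + N = n + N + 1 by ring] at h1
    have h2 := add_eq_right.1 h1.symm
    have := sub_eq_zero.1 ((smul_eq_zero.1 h2).resolve_left two_ne_zero)
    rw [show (N : ℤ) + 1 - (a + 1) = N - a by ring, this]; ring_nf
  | pred N ih =>
    apply fin
    intro a n
    have h1 := leibniz_lie R.H' ⁅X (a + 1), Y (-N - (a + 1))⁆ (X n)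
    rw [ih, lie_smul, H'X, H'P R H'X H'Y, H'X, lie_smul, ih, smul_lie, sub_lie,
      show (n : ℤ) - 1 + -N = n + -N - 1 by ring] at h1
    have h2 := add_eq_right.1 h1.symm
    have := sub_eq_zero.1 ((smul_eq_zero.1 h2).resolve_left two_ne_zero)
    rw [show a + 1 - 1 = a by ring] at this
    rw [show -(N : ℤ) - 1 - (a + 1) = -N - (a + 1) - 1 by ring, ← this]; ring_nf

end R1
end
end KMW


namespace KMW
open LieAlgebra
section
variable {G : Type*} [LieRing G] [LieAlgebra ℂ G]
namespace R1
variable (R : R1 G)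

def flip : R1 G where
  X0 := R.Y0
  Y0 := R.X0
  Y1 := R.Xm
  Xm := R.Y1
  c := -R.c
  ha := -R.ha
  cen := by intro x; simp [R.cen]
  h00 := by rw [← lie_skew, R.h00]
  hm1 := by rw [← lie_skew, R.hm1]; abel
  hX0 := by simp [R.hY0]
  hXm := by simp [R.hY1]
  hY0 := by simp [R.hX0]
  hY1 := by simp [R.hXm]
  zX := by rw [← lie_skew, R.zY, neg_zero]
  zY := by rw [← lie_skew, R.zX, neg_zero]

theorem flip_H : R.flip.H = -R.H' := by simp [H, H', flip]
theorem flip_H' : R.flip.H' = -R.H := by simp [H, H', flip]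

variable {X Y : ℤ → G}
  (X0 : X 0 = R.X0) (HX : ∀ n, ⁅R.H, X n⁆ = (2 : ℂ) • X (n + 1))
  (H'X : ∀ n, ⁅R.H', X n⁆ = (2 : ℂ) • X (n - 1))
  (Y0 : Y 0 = R.Y0) (HY : ∀ n, ⁅R.H, Y n⁆ = -(2 : ℂ) • Y (n + 1))
  (H'Y : ∀ n, ⁅R.H', Y n⁆ = -(2 : ℂ) • Y (n - 1))
  (XX : ∀ a b, ⁅X a, X b⁆ = 0) (YY : ∀ a b, ⁅Y a, Y b⁆ = 0)

include X0 HX H'X Y0 HY H'Y YY in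
theorem QY (N a n : ℤ) : ⁅⁅X a, Y (N - a)⁆, Y n⁆ = -(2 : ℂ) • Y (n + N) := by
  have h := Q R.flip (X := fun n => Y (-n)) (Y := fun n => X (-n)) (by simp [Y0, flip])
    (by intro n; rw [flip_H, neg_lie, H'Y, ← neg_smul]; ring_nf)
    (by intro n; rw [flip_H', neg_lie, HY, ← neg_smul]; ring_nf)
    (by simp [X0, flip])
    (by intro n; rw [flip_H, neg_lie, H'X, ← neg_smul]; ring_nf)
    (by intro n; rw [flip_H', neg_lie, HX, ← neg_smul]; ring_nf)
    (fun a b => YY _ _) (-N) (-N + a) (-n)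
  have e1 : -(-N + a) = N - a := by ring
  have e2 : -(-N - (-N + a)) = a := by ring
  have e3 : -(-n + -N) = n + N := by ring
  simp only [e1, e2, e3, neg_neg] at h
  rw [← lie_skew (X a), neg_lie, h, neg_smul]

include X0 HX H'X Y0 HY H'Y XX YY in
theorem Pconst (N : ℤ) (hN : N ≠ 0) (a : ℤ) : ⁅X a, Y (N - a)⁆ = ⁅X 0, Y N⁆ := by
  have S := S0 R X0 HX H'X Y0 HY H'Y
  set P : ℤ → ℤ → G := fun a b => ⁅X a, Y b⁆ with hP
  have key : ∀ a n : ℤ, P (a + 1) (N - (a + 1)) - P a (N - a) =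
      P (n + 1) (N - (n + 1)) - P (n + N) (-n) := by
    intro a n
    apply two_cancel
    have h1 : ⁅⁅X a, Y (N - 1 - a)⁆, ⁅X (n + 1), Y (-n)⁆⁆ =
        (2 : ℂ) • P (n + 1 + (N - 1)) (-n) - (2 : ℂ) • P (n + 1) (-n + (N - 1)) := by
      rw [leibniz_lie, Q R X0 HX H'X Y0 HY H'Y XX, QY R X0 HX H'X Y0 HY H'Y YY, smul_lie, lie_smul]
      simp only [hP]; module
    rw [(S n).2, ← lie_skew, HP R HX HY] at h1
    rw [show n + 1 + (N - 1) = n + N by ring, show -n + (N - 1) = N - (n + 1) by ring,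
      show N - 1 - a + 1 = N - a by ring] at h1
    rw [show N - (a + 1) = N - 1 - a by ring, ← neg_inj]
    simp only [hP] at h1 ⊢
    rw [h1]; module
  set d := P (0 + 1) (N - (0 + 1)) - P 0 (N - 0) with hd
  have hall : ∀ a : ℤ, P (a + 1) (N - (a + 1)) - P a (N - a) = d := by
    intro a; rw [key a 0, hd, key 0 0]
  have lin : ∀ a : ℤ, P a (N - a) = P 0 N + (a : ℂ) • d := by
    intro a
    induction a using Int.induction_on with
    | zero => simp
    | succ m ih => rw [eq_add_of_sub_eq (hall m), ih]; push_cast; module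
    | pred m ih =>
      have := hall (-(m : ℤ) - 1)
      rw [show -(m : ℤ) - 1 + 1 = -m by ring, ih] at this
      rw [← sub_eq_zero] at this ⊢
      rw [← neg_eq_zero, ← this]; push_cast; module
  have h1 := key 0 0
  rw [← hd, lin] at h1
  have h2 := lin N
  rw [sub_self] at h2
  simp only [zero_add, neg_zero] at h1
  rw [h2] at h1
  have h3 : (N : ℂ) • d = 0 := by
    rw [← sub_eq_zero] at h1
    rw [← h1]; push_cast; module
  have h4 : d = 0 := (smul_eq_zero.1 h3).resolve_left (by exact_mod_cast hN)
  have := lin a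
  rw [h4, smul_zero, add_zero] at this
  exact this

include X0 HX H'X Y0 HY H'Y XX YY in
theorem rank1 : ∃ Hm : ℤ → G, Hm 0 = R.ha ∧
    (∀ a b, ⁅X a, Y b⁆ = Hm (a + b) + if a + b = 0 then (a : ℂ) • R.c else 0) ∧
    (∀ m n, ⁅Hm m, X n⁆ = (2 : ℂ) • X (m + n)) ∧ (∀ m n, ⁅Hm m, Y n⁆ = -(2 : ℂ) • Y (m + n)) := by
  refine ⟨fun n => ⁅X 0, Y n⁆, by simp [X0, Y0, R.h00], ?_, ?_, ?_⟩
  · intro a b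
    split
    · rename_i h
      obtain rfl : b = -a := by omega
      rw [(S0 R X0 HX H'X Y0 HY H'Y a).1]; simp [X0, Y0, R.h00]
    · rename_i h
      have := Pconst R X0 HX H'X Y0 HY H'Y XX YY (a + b) h a
      rw [add_sub_cancel_left] at this
      rw [this, add_zero]
  · intro m n
    have := Q R X0 HX H'X Y0 HY H'Y XX m 0 n
    rw [sub_zero, add_comm] at this; exact this
  · intro m n
    have := QY R X0 HX H'X Y0 HY H'Y YY m 0 n
    rw [sub_zero, add_comm] at this; exact this
end R1
end

section
variable {L : Type*} [LieRing L] [LieAlgebra ℂ L]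

/-- centraliser of c -/
def cenz (c : L) : LieSubalgebra ℂ L where
  carrier := {x | ⁅c, x⁆ = 0}
  zero_mem' := by simp
  add_mem' := by intro a b ha hb; simp only [Set.mem_ofPred_eq] at *; rw [lie_add, ha, hb, add_zero]
  smul_mem' := by intro a b hb; simp only [Set.mem_ofPred_eq] at *; rw [lie_smul, hb, smul_zero]
  lie_mem' := by
    intro a b ha hb
    simp only [Set.mem_ofPred_eq] at *
    have ha' : ⁅c, a⁆ = 0 := ha
    have hb' : ⁅c, b⁆ = 0 := hb
    show ⁅c, ⁅a, b⁆⁆ = 0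
    rw [leibniz_lie, ha', hb']; simp

namespace KM
variable (D : KM L)

/-- data of one affine sl2 -/
structure Aff1 (D : KM L) (i : Fin 8) where
  X : ℤ → L
  Y : ℤ → L
  H : ℤ → L
  X0 : X 0 = D.e (nd i)
  Y0 : Y 0 = D.f (nd i)
  H0 : H 0 = D.h (nd i)
  wX : ∀ n, X n ∈ D.wt (co 0 n (sg i))
  wY : ∀ n, Y n ∈ D.wt (co 0 n (-sg i))
  XY : ∀ a b, ⁅X a, Y b⁆ = H (a + b) + if a + b = 0 then (a : ℂ) • D.cc else 0
  HX : ∀ m n, ⁅H m, X n⁆ = (2 : ℂ) • X (m + n)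
  HY : ∀ m n, ⁅H m, Y n⁆ = -(2 : ℂ) • Y (m + n)

variable {D}
theorem mem_cenz {d : Fin 10 → ℤ} (hd : d 0 = 0) {x : L} (hx : x ∈ D.wt d) : x ∈ cenz D.cc := by
  show ⁅D.cc, x⁆ = 0
  rw [cc_lie hx, hd]; simp

theorem hb_mem (b) : D.hb b ∈ D.wt 0 :=
  Submodule.sum_mem _ fun i _ => Submodule.smul_mem _ _ (h_mem i)

theorem half_mem {S : Submodule ℂ L} {k : ℂ} (hk : k ≠ 0) {x y : L} (h : x = k • y) (hx : x ∈ S) :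
    y ∈ S := by
  rw [h] at hx; exact (Submodule.smul_mem_iff _ hk).1 hx

theorem aff1 (D : KM L) (i : Fin 8) : Nonempty (Aff1 D i) := by
  obtain ⟨y1, hy1, xm, hxm, hyx⟩ := trip_sg D i
  rw [co_neg, neg_neg, neg_zero] at hxm
  have hX0 := e_mem (D := D) (nd i)
  have hY0 := f_mem (D := D) (nd i)
  rw [al_nd] at hX0 hY0
  rw [co_neg, neg_zero] at hY0
  have hab : D.hb (co 0 1 (-sg i)) = D.cc - D.h (nd i) := by
    rw [cc, ← hb_al, al_nd, sub_eq_add_neg, ← hb_neg, co_neg, ← hb_add, co_add]; simp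
  have qa : ip (sg i) (sg i) = 2 := by rw [ip_sg, prg_sg, A8_diag]
  have hal : ∀ {n g} {x : L}, x ∈ D.wt (co 0 n g) → ⁅D.h (nd i), x⁆ = ((prg i g : ℤ) : ℂ) • x := by
    intro n g x hx
    rw [mem_wt.1 hx, pr_nd]
  let R : R1 (cenz D.cc) :=
    { X0 := ⟨D.e (nd i), mem_cenz rfl hX0⟩
      Y0 := ⟨D.f (nd i), mem_cenz rfl hY0⟩
      Y1 := ⟨y1, mem_cenz rfl hy1⟩
      Xm := ⟨xm, mem_cenz rfl hxm⟩
      c := ⟨D.cc, by show ⁅_, _⁆ = 0; simp⟩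
      ha := ⟨D.h (nd i), mem_cenz rfl (h_mem _)⟩
      cen := fun x => Subtype.ext x.2
      h00 := Subtype.ext (by simp [D.ef])
      hm1 := Subtype.ext (by
        show ⁅xm, y1⁆ = D.h (nd i) - D.cc
        rw [← lie_skew, hyx, hab]; abel)
      hX0 := Subtype.ext (by simp [hal hX0, prg_sg, A8_diag])
      hXm := Subtype.ext (by simp [hal hxm, prg_sg, A8_diag])
      hY0 := Subtype.ext (by simp [hal hY0, prg_sg, A8_diag, prg_neg])
      hY1 := Subtype.ext (by simp [hal hy1, prg_sg, A8_diag, prg_neg])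
      zX := Subtype.ext (wt_zero D (c := co 0 (-1) (sg i) + co 0 0 (sg i)) (Or.inl rfl)
        (by rw [co_add, norm_co, ip_add, ip_add', qa]; norm_num) (wt_lie hxm hX0))
      zY := Subtype.ext (wt_zero D (c := co 0 0 (-sg i) + co 0 1 (-sg i)) (Or.inl rfl)
        (by rw [co_add, norm_co, ip_add, ip_add', ip_neg, ip_neg', qa]; norm_num)
        (wt_lie hY0 hy1)) }
  obtain ⟨X, X0, HX, H'X⟩ := R.exX
  obtain ⟨Y, Y0, HY, H'Y⟩ := R.exY
  have wH : (R.H : L) ∈ D.wt (co 0 1 0) := wt_lie' hX0 hy1 (by rw [co_add]; simp)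
  have wH' : (R.H' : L) ∈ D.wt (co 0 (-1) 0) := wt_lie' hxm hY0 (by rw [co_add]; simp)
  have wX : ∀ n, (X n : L) ∈ D.wt (co 0 n (sg i)) := by
    intro n
    induction n using Int.induction_on with
    | zero => rw [X0]; exact hX0
    | succ n ih =>
      refine half_mem two_ne_zero (congrArg Subtype.val (HX n)) (wt_lie' wH ih ?_)
      rw [co_add, add_comm (1 : ℤ)]; simp
    | pred n ih =>
      refine half_mem two_ne_zero (congrArg Subtype.val (H'X (-n))) (wt_lie' wH' ih ?_)
      rw [co_add, add_comm (-1 : ℤ)]; simp [sub_eq_add_neg]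
  have wY : ∀ n, (Y n : L) ∈ D.wt (co 0 n (-sg i)) := by
    intro n
    induction n using Int.induction_on with
    | zero => rw [Y0]; exact hY0
    | succ n ih =>
      refine half_mem (neg_ne_zero.2 two_ne_zero) (congrArg Subtype.val (HY n)) (wt_lie' wH ih ?_)
      rw [co_add, add_comm (1 : ℤ)]; simp
    | pred n ih =>
      refine half_mem (neg_ne_zero.2 two_ne_zero) (congrArg Subtype.val (H'Y (-n))) (wt_lie' wH' ih ?_)
      rw [co_add, add_comm (-1 : ℤ)]; simp [sub_eq_add_neg]
  have XX : ∀ a b, ⁅X a, X b⁆ = 0 := fun a b => Subtype.ext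
    (wt_zero D (c := co 0 a (sg i) + co 0 b (sg i)) (Or.inl rfl)
        (by rw [co_add, norm_co, ip_add, ip_add', qa]; norm_num) (wt_lie (wX a) (wX b)))
  have YY : ∀ a b, ⁅Y a, Y b⁆ = 0 := fun a b => Subtype.ext
    (wt_zero D (c := co 0 a (-sg i) + co 0 b (-sg i)) (Or.inl rfl)
        (by rw [co_add, norm_co, ip_add, ip_add', ip_neg, ip_neg', qa]; norm_num)
        (wt_lie (wY a) (wY b)))
  obtain ⟨Hm, H0, h1, h2, h3⟩ := R.rank1 X0 HX H'X Y0 HY H'Y XX YY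
  exact ⟨
    { X := fun n => X n
      Y := fun n => Y n
      H := fun n => Hm n
      X0 := congrArg Subtype.val X0
      Y0 := congrArg Subtype.val Y0
      H0 := congrArg Subtype.val H0
      wX := wX
      wY := wY
      XY := fun a b => by
        have := congrArg Subtype.val (h1 a b)
        simp only [LieSubalgebra.coe_bracket] at this
        rw [this]
        split <;> simp [R]
      HX := fun m n => congrArg Subtype.val (h2 m n)
      HY := fun m n => congrArg Subtype.val (h3 m n) }⟩

end KM
end
end KMW


namespace KMW
open LieAlgebra
section
variable {L : Type*} [LieRing L] [LieAlgebra ℂ L]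
namespace KM
variable {D : KM L}

theorem h_nd {i : Fin 8} {l n : ℤ} {g} {x : L} (hx : x ∈ D.wt (co l n g)) :
    ⁅D.h (nd i), x⁆ = ((prg i g : ℤ) : ℂ) • x := by
  rw [mem_wt.1 hx, pr_nd]

theorem cc0 {n : ℤ} {g} {x : L} (hx : x ∈ D.wt (co 0 n g)) : ⁅D.cc, x⁆ = 0 := mem_cenz rfl hx

namespace Aff1
variable {i j : Fin 8}

theorem Heq (A : Aff1 D i) (n : ℤ) : A.H n = ⁅A.X 0, A.Y n⁆ := by
  rw [A.XY, zero_add]; simp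

theorem wH (A : Aff1 D i) (n : ℤ) : A.H n ∈ D.wt (co 0 n 0) := by
  rw [A.Heq]; exact wt_lie' (A.wX 0) (A.wY n) (by rw [co_add]; simp)

theorem XY0 (A : Aff1 D i) (n : ℤ) : ⁅A.X n, A.Y (-n)⁆ = D.h (nd i) + (n : ℂ) • D.cc := by
  rw [A.XY, add_neg_cancel, A.H0, if_pos rfl]

theorem Xne (A : Aff1 D i) (he : ∀ i, D.e i ≠ 0) (n : ℤ) : A.X n ≠ 0 := by
  intro h
  have h1 := A.XY0 n
  rw [h, zero_lie] at h1
  have h2 := congrArg (fun z => ⁅z, A.X 0⁆) h1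
  simp only [zero_lie, add_lie, smul_lie] at h2
  rw [h_nd (A.wX 0), cc0 (A.wX 0), prg_sg, A8_diag, A.X0] at h2
  rw [smul_zero, add_zero] at h2
  exact smul_ne_zero (by norm_num) (he (nd i)) h2.symm

theorem Yne (A : Aff1 D i) (he : ∀ i, D.e i ≠ 0) (n : ℤ) : A.Y n ≠ 0 := by
  intro h
  have h1 := A.XY0 (-n)
  rw [neg_neg, h, lie_zero] at h1
  have h2 := congrArg (fun z => ⁅z, A.X 0⁆) h1
  simp only [zero_lie, add_lie, smul_lie] at h2
  rw [h_nd (A.wX 0), cc0 (A.wX 0), prg_sg, A8_diag, A.X0] at h2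
  rw [smul_zero, add_zero] at h2
  exact smul_ne_zero (by norm_num) (he (nd i)) h2.symm

theorem Hne (A : Aff1 D i) (he : ∀ i, D.e i ≠ 0) (n : ℤ) : A.H n ≠ 0 := by
  intro h
  have h1 := A.HX n 0
  rw [h, zero_lie] at h1
  exact smul_ne_zero two_ne_zero (A.Xne he _) h1.symm

/-- rescaling of the loop parameter -/
noncomputable def scale (A : Aff1 D i) (s : ℂ) (hs : s ≠ 0) : Aff1 D i where
  X n := s ^ n • A.X n
  Y n := s ^ n • A.Y n
  H n := s ^ n • A.H n
  X0 := by simp [A.X0]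
  Y0 := by simp [A.Y0]
  H0 := by simp [A.H0]
  wX n := Submodule.smul_mem _ _ (A.wX n)
  wY n := Submodule.smul_mem _ _ (A.wY n)
  XY a b := by
    rw [smul_lie, lie_smul, A.XY, smul_smul, ← zpow_add₀ hs, smul_add]
    split
    · rename_i h; rw [h]; simp
    · simp
  HX m n := by
    rw [smul_lie, lie_smul, A.HX, zpow_add₀ hs]; module
  HY m n := by
    rw [smul_lie, lie_smul, A.HY, zpow_add₀ hs]; module

/-- compatibility of two neighbouring affine sl2 up to the factor z -/
def Cmp (A : Aff1 D i) (B : Aff1 D j) (z : ℂ) : Prop :=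
  (∀ m n, ⁅A.H m, B.X n⁆ = -(z ^ m) • B.X (m + n)) ∧ (∀ m n, ⁅A.H m, B.Y n⁆ = (z ^ m) • B.Y (m + n))

theorem cmpX (A : Aff1 D i) (B : Aff1 D j) (he : ∀ i, D.e i ≠ 0) :
    ∃ φ : ℤ → ℤ → ℂ, ∀ m n, ⁅A.H m, B.X n⁆ = φ m n • B.X (m + n) := by
  have : ∀ m n, ∃ a : ℂ, ⁅A.H m, B.X n⁆ = a • B.X (m + n) := fun m n =>
    wt_le1 D (Or.inl rfl) (by rw [norm_co, ip_sg, prg_sg, A8_diag]; norm_num) _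
      (wt_lie' (A.wH m) (B.wX n) (by rw [co_add]; simp)) _ (B.wX _) (B.Xne he _)
  choose φ hφ using this
  exact ⟨φ, hφ⟩

theorem cmpY (A : Aff1 D i) (B : Aff1 D j) (he : ∀ i, D.e i ≠ 0) :
    ∃ φ : ℤ → ℤ → ℂ, ∀ m n, ⁅A.H m, B.Y n⁆ = φ m n • B.Y (m + n) := by
  have : ∀ m n, ∃ a : ℂ, ⁅A.H m, B.Y n⁆ = a • B.Y (m + n) := fun m n =>
    wt_le1 D (Or.inl rfl) (by rw [norm_co, ip_neg, ip_neg', ip_sg, prg_sg, A8_diag]; norm_num) _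
      (wt_lie' (A.wH m) (B.wY n) (by rw [co_add]; simp)) _ (B.wY _) (B.Yne he _)
  choose φ hφ using this
  exact ⟨φ, hφ⟩

theorem cmp_of_X (A : Aff1 D i) (B : Aff1 D j) (he : ∀ i, D.e i ≠ 0) (hij : A8 i j = -1) (z : ℂ)
    (h : ∀ m n, ⁅A.H m, B.X n⁆ = -(z ^ m) • B.X (m + n)) : Cmp A B z := by
  refine ⟨h, ?_⟩
  obtain ⟨φ, hφ⟩ := cmpY A B he
  intro m n
  rw [hφ]
  by_cases hm : m = 0
  · subst hm
    have h1 := hφ 0 n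
    rw [A.H0, h_nd (B.wY n), prg_neg, prg_sg, hij, zero_add] at h1
    rw [zero_add, ← h1]; simp
  · have h1 : ⁅A.H m, ⁅B.X (-n), B.Y n⁆⁆ = 0 := by
      have := B.XY0 (-n)
      rw [neg_neg] at this
      rw [this, ← lie_skew, add_lie, smul_lie, h_nd (A.wH m), cc0 (A.wH m), prg_zero]; simp
    rw [leibniz_lie, h, hφ, smul_lie, lie_smul, B.XY, B.XY, if_neg (by omega), if_neg (by omega),
      show m + -n + n = m by ring, show -n + (m + n) = m by ring, add_zero, ← add_smul] at h1
    have h2 := (smul_eq_zero.1 h1).resolve_right (B.Hne he m)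
    rw [show φ m n = z ^ m by linear_combination h2]

theorem XYz (A : Aff1 D i) (B : Aff1 D j) (hij : A8 i j = -1) (a b) : ⁅A.X a, B.Y b⁆ = 0 :=
  wt_zero D (c := co 0 a (sg i) + co 0 b (-sg j)) (Or.inl rfl)
    (by rw [co_add, norm_co, ip_add, ip_add', ip_add', ip_neg, ip_neg, ip_neg', ip_neg', ip_sg, ip_sg,
          ip_sg, ip_sg, prg_sg, prg_sg, prg_sg, prg_sg, A8_symm j i, hij, A8_diag, A8_diag]
        norm_num) (wt_lie (A.wX a) (B.wY b))

theorem cmp_ex (A : Aff1 D i) (B : Aff1 D j) (he : ∀ i, D.e i ≠ 0) (hij : A8 i j = -1) :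
    ∃ z : ℂ, z ≠ 0 ∧ Cmp A B z ∧ Cmp B A z⁻¹ := by
  have hji : A8 j i = -1 := by rw [A8_symm, hij]
  obtain ⟨φ, hφ⟩ := cmpX A B he
  obtain ⟨ψ, hψ⟩ := cmpX B A he
  have φ0 : ∀ n, φ 0 n = -1 := by
    intro n
    have h1 := hφ 0 n
    rw [A.H0, h_nd (B.wX n), prg_sg, hij, zero_add] at h1
    have := smul_left_injective ℂ (B.Xne he n) h1
    rw [← this]; simp
  have ψ0 : ∀ n, ψ 0 n = -1 := by
    intro n
    have h1 := hψ 0 n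
    rw [B.H0, h_nd (A.wX n), prg_sg, hji, zero_add] at h1
    have := smul_left_injective ℂ (A.Xne he n) h1
    rw [← this]; simp
  have cY : ∀ a b n, ⁅A.Y b, ⁅A.X a, B.X n⁆⁆ = -φ (a + b) n • B.X (a + b + n) := by
    intro a b n
    rw [leibniz_lie, ← lie_skew (A.Y b) (A.X a), A.XY, ← lie_skew (A.Y b) (B.X n), XYz B A hji, neg_lie, add_lie,
      hφ]
    split
    · rw [smul_lie, cc0 (B.wX n)]; simp
    · simp
  have cY' : ∀ a b n, ⁅B.Y b, ⁅A.X a, B.X n⁆⁆ = ψ (n + b) a • A.X (n + b + a) := by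
    intro a b n
    rw [leibniz_lie, ← lie_skew (B.Y b) (B.X n), B.XY, ← lie_skew (B.Y b) (A.X a), XYz A B hij, ← lie_skew,
      ← lie_skew (A.X a), neg_lie, add_lie, hψ]
    split
    · rw [smul_lie, cc0 (A.wX a)]; simp
    · simp
  have Zne : ∀ a n, ⁅A.X a, B.X n⁆ ≠ 0 := by
    intro a n h
    have := cY a (-a) n
    rw [h, lie_zero, add_neg_cancel, φ0, zero_add] at this
    simp at this
    exact B.Xne he n this.symm
  have Zw : ∀ a n, ⁅A.X a, B.X n⁆ ∈ D.wt (co 0 (a + n) (sg i + sg j)) := fun a n =>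
    wt_lie' (A.wX a) (B.wX n) (by rw [co_add]; simp)
  have hZ : ∀ a n, ∃ ζ : ℂ, ⁅A.X (a + 1), B.X n⁆ = ζ • ⁅A.X a, B.X (n + 1)⁆ := by
    intro a n
    refine wt_le1 D (c := co 0 (a + 1 + n) (sg i + sg j)) (Or.inl rfl) ?_ _ (Zw _ _) _ ?_ (Zne _ _)
    · rw [norm_co, ip_add, ip_add', ip_add', ip_sg, ip_sg, ip_sg, ip_sg, prg_sg, prg_sg, prg_sg,
        prg_sg, A8_symm j i, hij, A8_diag, A8_diag]; norm_num
    · rw [show a + 1 + n = a + (n + 1) by ring]; exact Zw _ _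
  choose ζ hζ using hZ
  have e1 : ∀ a n N, φ (N + 1) n = ζ a n * φ N (n + 1) := by
    intro a n N
    have h1 := cY (a + 1) (N - a) n
    rw [hζ, lie_smul, cY, smul_smul, show a + (N - a) = N by ring, show a + 1 + (N - a) = N + 1 by ring,
      show N + (n + 1) = N + 1 + n by ring] at h1
    have := smul_left_injective ℂ (B.Xne he _) h1
    linear_combination this
  have e2 : ∀ a n M, ψ M (a + 1) = ζ a n * ψ (M + 1) a := by
    intro a n M
    have h1 := cY' (a + 1) (M - n) n
    rw [hζ, lie_smul, cY', smul_smul, show n + (M - n) = M by ring, show n + 1 + (M - n) = M + 1 by ring,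
      show M + (a + 1) = M + 1 + a by ring] at h1
    have := smul_left_injective ℂ (A.Xne he _) h1
    exact this.symm
  have e3 : ∀ a n, ζ a n = ζ 0 0 := by
    intro a n
    have h1 := e1 a n 0
    have h2 := e1 0 n 0
    have h3 := e2 0 n (-1)
    have h4 := e2 0 0 (-1)
    rw [φ0] at h1 h2
    rw [neg_add_cancel, ψ0] at h3 h4
    have : ζ a n = ζ 0 n := by linear_combination h1 - h2
    have : ζ 0 n = ζ 0 0 := by linear_combination h3 - h4
    simp_all
  have zne : ζ 0 0 ≠ 0 := by
    intro h
    have := hζ 0 0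
    rw [h, zero_smul] at this
    exact Zne _ _ this
  generalize ζ 0 0 = z at *
  simp only [e3] at e1 e2
  have e1 := e1 0
  have e2 := fun a M => e2 a 0 M
  clear hζ e3
  refine ⟨z, zne, cmp_of_X A B he hij z ?_, cmp_of_X B A he hji z⁻¹ ?_⟩
  · intro m n
    rw [hφ]
    congr 1
    induction m using Int.induction_on generalizing n with
    | zero => rw [φ0]; simp
    | succ m ih => rw [e1, ih, zpow_add₀ zne]; simp; ring
    | pred m ih =>
      have := e1 (n - 1) (-m - 1)
      rw [sub_add_cancel, sub_add_cancel, ih] at this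
      rw [zpow_sub₀ zne]
      field_simp
      linear_combination -this
  · intro m n
    rw [hψ]
    congr 1
    rw [inv_zpow, ← zpow_neg]
    induction m using Int.induction_on generalizing n with
    | zero => rw [ψ0]; simp
    | succ m ih =>
      have := e2 n m
      rw [ih] at this
      rw [neg_add, ← sub_eq_add_neg, zpow_sub₀ zne]
      field_simp
      linear_combination -this
    | pred m ih =>
      have := e2 (n - 1) (-m - 1)
      rw [sub_add_cancel, sub_add_cancel, ih] at this
      rw [show -(-(m:ℤ) - 1) = - -m + 1 by ring, zpow_add₀ zne, ]
      simp at this ⊢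
      linear_combination this

theorem next (A : Aff1 D i) (he : ∀ i, D.e i ≠ 0) (j : Fin 8) (hij : A8 i j = -1) :
    ∃ B : Aff1 D j, Cmp A B 1 ∧ Cmp B A 1 := by
  obtain ⟨B⟩ := aff1 D j
  obtain ⟨z, hz, h1, h2⟩ := cmp_ex A B he hij
  refine ⟨B.scale z hz, ⟨?_, ?_⟩, ?_, ?_⟩
  · intro m n
    simp only [scale, lie_smul, h1.1, zpow_add₀ hz, one_zpow]; module
  · intro m n
    simp only [scale, lie_smul, h1.2, zpow_add₀ hz, one_zpow]; module
  · intro m n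
    simp only [scale, smul_lie, h2.1, inv_zpow, one_zpow, smul_smul]
    congr 1; field_simp
  · intro m n
    simp only [scale, smul_lie, h2.2, inv_zpow, one_zpow, smul_smul]
    congr 1; field_simp

theorem XX0 (A : Aff1 D i) (B : Aff1 D j) (hij : A8 i j = 0) (a b) : ⁅A.X a, B.X b⁆ = 0 :=
  wt_zero D (c := co 0 a (sg i) + co 0 b (sg j)) (Or.inl rfl)
    (by rw [co_add, norm_co, ip_add, ip_add', ip_add', ip_sg, ip_sg,
          ip_sg, ip_sg, prg_sg, prg_sg, prg_sg, prg_sg, A8_symm j i, hij, A8_diag, A8_diag]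
        norm_num) (wt_lie (A.wX a) (B.wX b))
theorem XY0' (A : Aff1 D i) (B : Aff1 D j) (hij : A8 i j = 0) (a b) : ⁅A.X a, B.Y b⁆ = 0 :=
  wt_zero D (c := co 0 a (sg i) + co 0 b (-sg j)) (Or.inl rfl)
    (by rw [co_add, norm_co, ip_add, ip_add', ip_add', ip_neg, ip_neg, ip_neg', ip_neg', ip_sg, ip_sg,
          ip_sg, ip_sg, prg_sg, prg_sg, prg_sg, prg_sg, A8_symm j i, hij, A8_diag, A8_diag]
        norm_num) (wt_lie (A.wX a) (B.wY b))
theorem YY0 (A : Aff1 D i) (B : Aff1 D j) (hij : A8 i j = 0) (a b) : ⁅A.Y a, B.Y b⁆ = 0 :=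
  wt_zero D (c := co 0 a (-sg i) + co 0 b (-sg j)) (Or.inl rfl)
    (by rw [co_add, norm_co, ip_add, ip_add', ip_add', ip_neg, ip_neg, ip_neg', ip_neg', ip_neg', ip_neg',
          ip_neg, ip_neg, ip_sg, ip_sg,
          ip_sg, ip_sg, prg_sg, prg_sg, prg_sg, prg_sg, A8_symm j i, hij, A8_diag, A8_diag]
        norm_num) (wt_lie (A.wY a) (B.wY b))
end Aff1

/-- loop realisation of the level zero part -/
structure Aff (D : KM L) where
  A : ∀ i, Aff1 D i
  HX : ∀ i j m n, ⁅(A i).H m, (A j).X n⁆ = (A8 i j : ℂ) • (A j).X (m + n)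
  HY : ∀ i j m n, ⁅(A i).H m, (A j).Y n⁆ = (-(A8 i j) : ℂ) • (A j).Y (m + n)

theorem aff (D : KM L) (he : ∀ i, D.e i ≠ 0) : Nonempty (Aff D) := by
  obtain ⟨A0⟩ := aff1 D 0
  obtain ⟨A1, h01, h10⟩ := A0.next he 1 (by decide)
  obtain ⟨A2, h12, h21⟩ := A1.next he 2 (by decide)
  obtain ⟨A3, h23, h32⟩ := A2.next he 3 (by decide)
  obtain ⟨A4, h34, h43⟩ := A3.next he 4 (by decide)
  obtain ⟨A5, h45, h54⟩ := A4.next he 5 (by decide)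
  obtain ⟨A6, h56, h65⟩ := A5.next he 6 (by decide)
  obtain ⟨A7, h47, h74⟩ := A4.next he 7 (by decide)
  let A : ∀ i, Aff1 D i := fun i => match i with
    | 0 => A0 | 1 => A1 | 2 => A2 | 3 => A3 | 4 => A4 | 5 => A5 | 6 => A6 | 7 => A7
  have hA : ∀ i j, A8 i j = -1 → Aff1.Cmp (A i) (A j) 1 := by
    intro i j
    fin_cases i <;> fin_cases j <;> first | (intro h; exact absurd h (by decide)) | (intro _; assumption)
  refine ⟨⟨A, ?_, ?_⟩⟩
  · intro i j m n
    rcases A8_cases i j with ⟨rfl, h⟩ | ⟨-, h⟩ | ⟨-, h⟩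
    · rw [(A i).HX, h]; norm_num
    · rw [h, (A i).Heq, lie_lie, Aff1.XX0 _ _ h, ← lie_skew ((A i).Y m),
        Aff1.XY0' _ _ (by rw [A8_symm, h])]; simp
    · rw [(hA i j h).1, h]; simp
  · intro i j m n
    rcases A8_cases i j with ⟨rfl, h⟩ | ⟨-, h⟩ | ⟨-, h⟩
    · rw [(A i).HY, h]; norm_num
    · rw [h, (A i).Heq, lie_lie, Aff1.XY0' _ _ h, Aff1.YY0 _ _ h]; simp
    · rw [(hA i j h).2, h]; simp

theorem Aff.HH (A : Aff D) (i j m n) : ⁅(A.A i).H m, (A.A j).H n⁆ =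
    if m + n = 0 then (m * A8 i j : ℂ) • D.cc else 0 := by
  rw [(A.A j).Heq, leibniz_lie, A.HX, A.HY, smul_lie, lie_smul, (A.A j).XY, (A.A j).XY]
  rw [zero_add, add_zero]
  split
  · push_cast; module
  · module
end KM
end
end KMW


namespace KMW
section
variable {V : Type*} [AddCommGroup V] [Module ℂ V]

theorem sum_tele (f : ℕ → V) (N p : ℕ) (h : ∀ n, N ≤ n → f n = 0) :
    ∑ n ∈ Finset.range N, f n - ∑ n ∈ Finset.range N, f (p + n) = ∑ n ∈ Finset.range p, f n := by
  have h1 := Finset.sum_range_add f N p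
  have h2 := Finset.sum_range_add f p N
  rw [Finset.sum_eq_zero (s := Finset.range p) (fun n _ => h (N + n) (by omega)), add_zero] at h1
  rw [add_comm p N, h1] at h2
  rw [h2]; abel

/-- level one affine sl2 acting on a space, with a vacuum vector -/
structure Vac (E F H : ℤ → V →ₗ[ℂ] V) (x : V) : Prop where
  EF : ∀ a b v, F b (E a v) = E a (F b v) - H (a + b) v - if a + b = 0 then (a : ℂ) • v else 0
  HE : ∀ m n v, H m (E n v) = E n (H m v) + (2 : ℂ) • E (m + n) v
  HF : ∀ m n v, F n (H m v) = H m (F n v) + (2 : ℂ) • F (m + n) v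
  HH : ∀ m n v, H m (H n v) = H n (H m v) + if m + n = 0 then (2 * m : ℂ) • v else 0
  EE : ∀ a b v, E a (E b v) = E b (E a v)
  xE : ∀ n, 0 ≤ n → E n x = 0
  xF : ∀ n, 0 ≤ n → F n x = 0
  xH : ∀ n, 0 ≤ n → H n x = 0
  xEE : E (-1) (E (-1) x) = 0

namespace Vac
variable {E F H : ℤ → V →ₗ[ℂ] V} {x : V} (S : Vac E F H x)

/-- truncated Sugawara operator -/
noncomputable def sug (E F H : ℤ → V →ₗ[ℂ] V) (N : ℕ) : V →ₗ[ℂ] V :=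
  ∑ n ∈ Finset.range N, ((1 / 2 : ℂ) • (H (-1 - n)) ∘ₗ (H n) + (E (-1 - n)) ∘ₗ (F n) + (F (-1 - n)) ∘ₗ (E n))

theorem sug_apply (N : ℕ) (v : V) : sug E F H N v = ∑ n ∈ Finset.range N,
    ((1 / 2 : ℂ) • H (-1 - n) (H n v) + E (-1 - n) (F n v) + F (-1 - n) (E n v)) := by
  simp [sug, LinearMap.sum_apply]

include S

theorem sugE (q N : ℕ) (hN : q < N) : sug E F H N (E (-q) x) = (3 * q : ℂ) • E (-1 - q) x := by
  rw [sug_apply]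
  have t : ∀ n ∈ Finset.range N, ((1 / 2 : ℂ) • H (-1 - n) (H n (E (-q) x)) + E (-1 - n) (F n (E (-q) x))
      + F (-1 - n) (E n (E (-q) x))) = if n < q then (2 : ℂ) • E (-1 - q) x + (E (n - q) (H (-1 - n) x) -
        E (-1 - n) (H (n - q) x)) else if n = q then (q : ℂ) • E (-1 - q) x else 0 := by
    intro n _
    rw [S.HE, S.xH _ (by positivity), S.EF, S.xF _ (by positivity), S.EE, S.xE n (by positivity)]
    simp only [map_zero, zero_add, add_zero, zero_sub, map_smul, map_sub, map_neg]
    rw [show (n : ℤ) + -q = n - q by ring, show -(q : ℤ) + n = n - q by ring]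
    by_cases h : n < q
    · rw [if_pos h, if_neg (by omega), S.HE, show -1 - (n : ℤ) + (n - q) = -1 - q by ring, map_zero]
      module
    · rw [if_neg h, S.xE _ (by omega), S.xH _ (by omega)]
      by_cases h' : n = q
      · subst h'
        rw [if_pos (by omega), if_pos rfl]; push_cast; simp
      · rw [if_neg (by omega), if_neg h']; simp
  rw [Finset.sum_congr rfl t]
  rw [← Finset.sum_subset (s₁ := Finset.range (q + 1)) (Finset.range_subset_range.2 hN)]
  · rw [Finset.sum_range_succ]
    rw [Finset.sum_congr rfl (fun n hn => if_pos (Finset.mem_range.1 hn))]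
    rw [Finset.sum_add_distrib, Finset.sum_sub_distrib]
    have : ∑ n ∈ Finset.range q, E (n - q) (H (-1 - n) x) = ∑ n ∈ Finset.range q, E (-1 - n) (H (n - q) x) := by
      rw [← Finset.sum_range_reflect]
      refine Finset.sum_congr rfl fun n hn => ?_
      have := Finset.mem_range.1 hn
      rw [show ((q - 1 - n : ℕ) : ℤ) = q - 1 - n by omega, show (q : ℤ) - 1 - n - q = -1 - n by ring,
        show -1 - ((q : ℤ) - 1 - n) = n - q by ring]
    rw [this]
    simp only [Finset.sum_const, Finset.card_range, lt_self_iff_false, if_false, if_true]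
    rw [← Nat.cast_smul_eq_nsmul ℂ]
    module
  · intro n _ hn
    simp only [Finset.mem_range, not_lt] at hn
    rw [if_neg (by omega), if_neg (by omega)]

theorem sugH (p N : ℕ) (hp : 0 < p) (hpN : p < N) (v : V) (hE : ∀ k : ℤ, (N : ℤ) - p ≤ k → E k v = 0)
    (hF : ∀ k : ℤ, (N : ℤ) - p ≤ k → F k v = 0) :
    sug E F H N (H (-p) v) = H (-p) (sug E F H N v) + (3 * p : ℂ) • H (-1 - p) v := by
  rw [sug_apply, sug_apply, map_sum]
  let a : ℕ → V := fun n => E (-1 - n) (F (n - p) v)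
  let b : ℕ → V := fun n => F (-1 - n) (E (n - p) v)
  have t : ∀ n ∈ Finset.range N, ((1 / 2 : ℂ) • H (-1 - n) (H n (H (-p) v)) + E (-1 - n) (F n (H (-p) v))
      + F (-1 - n) (E n (H (-p) v))) = H (-p) ((1 / 2 : ℂ) • H (-1 - n) (H n v) + E (-1 - n) (F n v)
      + F (-1 - n) (E n v)) + ((if n = p then (p : ℂ) • H (-1 - p) v else 0) +
      (2 : ℂ) • ((a n - a (p + n)) - (b n - b (p + n)))) := by
    intro n _
    have hEH : ∀ m n v, E n (H m v) = H m (E n v) - (2 : ℂ) • E (m + n) v := by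
      intro m n v; rw [S.HE]; abel
    simp only [a, b]
    rw [S.HH n, S.HF, hEH]
    simp only [map_add, map_sub, map_smul]
    rw [S.HH (-1 - n) (-p), if_neg (by omega), add_zero, hEH, S.HF]
    rw [show -(p : ℤ) + n = n - p by ring, show -(p : ℤ) + (-1 - n) = -1 - (p + n : ℕ) by push_cast; ring]
    rw [show ((p + n : ℕ) : ℤ) - p = n by push_cast; ring]
    by_cases h : n = p
    · subst h
      rw [if_pos (by ring), if_pos rfl]
      simp only [map_smul]; push_cast; module
    · rw [if_neg (by omega), if_neg h]
      simp only [map_zero]; module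
  rw [Finset.sum_congr rfl t, Finset.sum_add_distrib, Finset.sum_add_distrib, ← Finset.smul_sum,
    Finset.sum_sub_distrib, Finset.sum_sub_distrib, Finset.sum_sub_distrib,
    sum_tele a N p (fun n hn => by simp only [a]; rw [hF _ (by omega), map_zero]),
    sum_tele b N p (fun n hn => by simp only [b]; rw [hE _ (by omega), map_zero]),
    Finset.sum_ite_eq', if_pos (Finset.mem_range.2 hpN)]
  have : ∑ n ∈ Finset.range p, a n = ∑ n ∈ Finset.range p, (b n) + (p : ℂ) • H (-1 - p) v := by
    rw [← Finset.sum_range_reflect b]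
    have : (p : ℂ) • H (-1 - p) v = ∑ n ∈ Finset.range p, H (-1 - p) v := by
      rw [Finset.sum_const, Finset.card_range, Nat.cast_smul_eq_nsmul]
    rw [this, ← Finset.sum_add_distrib]
    refine Finset.sum_congr rfl fun n hn => ?_
    have := Finset.mem_range.1 hn
    simp only [a, b]
    rw [show ((p - 1 - n : ℕ) : ℤ) = p - 1 - n by omega, show (p : ℤ) - 1 - n - p = -1 - n by ring,
        show -1 - ((p : ℤ) - 1 - n) = n - p by ring, S.EF, if_neg (by omega),
        show -1 - (n : ℤ) + (n - p) = -1 - p by ring]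
    abel
  rw [this]; module

theorem recur (r : ℕ) : (r : ℂ) • E (-1 - r) x = ∑ k ∈ Finset.range r, H (-1 - k) (E (k - r) x) := by
  rcases r with _ | r
  · simp
  induction r with
  | zero =>
    simp
    have h := congrArg (F 0) S.xEE
    rw [S.EF, S.EF, S.xF 0 le_rfl, map_zero] at h
    simp only [add_zero] at h
    rw [if_neg (by norm_num), if_neg (by norm_num)] at h
    simp only [map_zero, map_sub, sub_zero, zero_sub, map_neg] at h
    have h2 := S.HE (-1) (-1) x
    rw [show (-1 : ℤ) + -1 = -1 - 1 by ring] at h2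
    have h3 : (2 : ℂ) • (E (-1 - 1) x - H (-1) (E (-1) x)) = 0 := by
      rw [← h, sub_eq_add_neg, eq_sub_of_add_eq h2.symm]; module
    exact sub_eq_zero.1 ((smul_eq_zero.1 h3).resolve_left two_ne_zero)
  | succ r ih =>
    have hq0 : ((r + 1 : ℕ) : ℂ) ≠ 0 := by exact_mod_cast Nat.succ_ne_zero r
    generalize r + 1 = q at *
    have h := congrArg (sug E F H (2 * q + 3)) ih
    rw [map_smul, map_sum] at h
    have h1 := S.sugE (1 + q) (2 * q + 3) (by omega)
    rw [show -((1 + q : ℕ) : ℤ) = -1 - q by push_cast; ring] at h1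
    rw [h1] at h
    have t : ∀ k ∈ Finset.range q, sug E F H (2 * q + 3) (H (-1 - k) (E (k - q) x)) =
        (3 * (q - k) : ℂ) • H (-1 - k) (E (k - (q + 1 : ℕ)) x) +
        (3 * (k + 1) : ℂ) • H (-1 - (k + 1 : ℕ)) (E ((k + 1 : ℕ) - (q + 1 : ℕ)) x) := by
      intro k hk
      have hk := Finset.mem_range.1 hk
      have h2 := S.sugH (k + 1) (2 * q + 3) (by omega) (by omega) (E (k - q) x)
        (by intro n hn; rw [S.EE, S.xE n (by omega), map_zero])
        (by intro n hn; rw [S.EF, S.xF n (by omega), S.xH _ (by omega), if_neg (by omega)]; simp)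
      have h3 := S.sugE (q - k) (2 * q + 3) (by omega)
      rw [show -((q - k : ℕ) : ℤ) = k - q by omega] at h3
      rw [show -((k + 1 : ℕ) : ℤ) = -1 - k by push_cast; ring, h3] at h2
      rw [h2, map_smul, show -1 - ((q - k : ℕ) : ℤ) = k - (q + 1 : ℕ) by omega,
        show ((k + 1 : ℕ) : ℤ) - (q + 1 : ℕ) = k - q by push_cast; ring, Nat.cast_sub hk.le]
      push_cast; rfl
    rw [Finset.sum_congr rfl t, Finset.sum_add_distrib] at h
    set g : ℕ → V := fun k => H (-1 - k) (E (k - (q + 1 : ℕ)) x) with hg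
    have e1 : ∑ k ∈ Finset.range q, (3 * (q - k) : ℂ) • H (-1 - k) (E (k - (q + 1 : ℕ)) x) =
        ∑ k ∈ Finset.range (q + 1), (3 * (q - k) : ℂ) • g k := by
      rw [Finset.sum_range_succ]; simp [hg]
    have e2 : ∑ k ∈ Finset.range q, (3 * (k + 1) : ℂ) • H (-1 - (k + 1 : ℕ)) (E ((k + 1 : ℕ) - (q + 1 : ℕ)) x) =
        ∑ k ∈ Finset.range (q + 1), (3 * k : ℂ) • g k := by
      rw [Finset.sum_range_succ']; simp [hg]
    rw [e1, e2, ← Finset.sum_add_distrib] at h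
    have e3 : ∑ k ∈ Finset.range (q + 1), ((3 * (q - k) : ℂ) • g k + (3 * k : ℂ) • g k) =
       (3 * q : ℂ) • ∑ k ∈ Finset.range (q + 1), g k := by
      rw [Finset.smul_sum]; refine Finset.sum_congr rfl fun k _ => by module
    rw [e3, smul_smul] at h
    have hq : (3 * q : ℂ) ≠ 0 := mul_ne_zero three_ne_zero hq0
    apply smul_right_injective V hq
    simp only
    rw [← h, smul_smul, show -1 - ((1 + q : ℕ) : ℤ) = -1 - (q + 1 : ℕ) by push_cast; ring]
    push_cast; congr 1; ring

theorem mem (W : Submodule ℂ V) (h1 : E (-1) x ∈ W) (hW : ∀ k : ℕ, ∀ w ∈ W, H (-1 - k) w ∈ W) (n : ℤ) :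
    E n x ∈ W := by
  by_cases hn : 0 ≤ n
  · rw [S.xE n hn]; exact W.zero_mem
  obtain ⟨r, rfl⟩ : ∃ r : ℕ, n = -1 - r := ⟨(-1 - n).toNat, by omega⟩
  clear hn
  induction r using Nat.strong_induction_on with
  | _ r ih =>
    rcases r with _ | r
    · simpa using h1
    have h := S.recur (r + 1)
    have h2 : ((r + 1 : ℕ) : ℂ) • E (-1 - (r + 1 : ℕ)) x ∈ W := by
      rw [h]
      refine W.sum_mem fun k hk => hW _ _ ?_
      have hk := Finset.mem_range.1 hk
      have := ih (r - k) (by omega)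
      rwa [show -1 - ((r - k : ℕ) : ℤ) = k - (r + 1 : ℕ) by omega] at this
    exact (W.smul_mem_iff (by exact_mod_cast Nat.succ_ne_zero r)).1 h2
end Vac
end
end KMW


namespace KMW
open LieAlgebra
section
variable {L : Type*} [LieRing L] [LieAlgebra ℂ L]
namespace KM

/-- an affine sl2 inside level zero attached to a finite root -/
structure S2 (D : KM L) (σ : Fin 8 → ℤ) where
  X : ℤ → L
  Y : ℤ → L
  H : ℤ → L
  h2 : ip σ σ = 2
  wX : ∀ n, X n ∈ D.wt (co 0 n σ)
  wY : ∀ n, Y n ∈ D.wt (co 0 n (-σ))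
  wH : ∀ n, H n ∈ D.wt (co 0 n 0)
  H0 : ∀ l n g, ∀ x ∈ D.wt (co l n g), ⁅H 0, x⁆ = (ip σ g : ℂ) • x
  XY : ∀ a b, ⁅X a, Y b⁆ = H (a + b) + if a + b = 0 then (a : ℂ) • D.cc else 0
  HX : ∀ m n, ⁅H m, X n⁆ = (2 : ℂ) • X (m + n)
  HY : ∀ m n, ⁅H m, Y n⁆ = -(2 : ℂ) • Y (m + n)
  HH : ∀ m n, ⁅H m, H n⁆ = if m + n = 0 then (2 * m : ℂ) • D.cc else 0

variable {D : KM L}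

def S2.flip {σ} (S : S2 D σ) : S2 D (-σ) where
  X := S.Y
  Y := S.X
  H n := -S.H n
  h2 := by rw [ip_neg, ip_neg', S.h2]; norm_num
  wX := S.wY
  wY := by rw [neg_neg]; exact S.wX
  wH n := Submodule.neg_mem _ (S.wH n)
  H0 l n g x hx := by rw [neg_lie, S.H0 l n g x hx, ip_neg']; simp
  XY a b := by
    rw [← lie_skew, S.XY, add_comm b a]
    split
    · rename_i h
      rw [show b = -a by omega]; push_cast; module
    · simp
  HX m n := by rw [neg_lie, S.HY]; simp
  HY m n := by rw [neg_lie, S.HX]; simp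
  HH m n := by rw [neg_lie, lie_neg, neg_neg, S.HH]

def Aff.S2 (A : Aff D) (i : Fin 8) : S2 D (sg i) where
  X := (A.A i).X
  Y := (A.A i).Y
  H := (A.A i).H
  h2 := by rw [ip_sg, prg_sg, A8_diag]
  wX := (A.A i).wX
  wY := (A.A i).wY
  wH := (A.A i).wH
  H0 l n g x hx := by rw [(A.A i).H0, h_nd hx, ip_sg]
  XY := (A.A i).XY
  HX := (A.A i).HX
  HY := (A.A i).HY
  HH m n := by rw [A.HH, A8_diag]; simp [mul_comm]

def mu (γ : Fin 8 → ℤ) : Fin 10 → ℤ := co 1 (hq γ) γ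

theorem norm1 (n γ) : normE10 (co 1 n γ) = 2 - 2 * n + 2 * hq γ := by
  rw [norm_co, ip_self]; ring

theorem hq_add' (g σ) (h : ip σ σ = 2) : hq (g + σ) = hq g + ip σ g + 1 := by
  have h1 := ip_self (g + σ)
  rw [ip_add, ip_add', ip_add', h, ip_self, ip_comm g σ] at h1
  omega

theorem van {n γ m g} {x y : L} (hx : x ∈ D.wt (co 0 m g)) (hy : y ∈ D.wt (co 1 n γ))
    (h : n + m < hq (γ + g)) : ⁅x, y⁆ = 0 := by
  refine wt_zero D (c := co 1 (n + m) (γ + g)) (Or.inr (Or.inl rfl)) ?_ (wt_lie' hx hy ?_)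
  · rw [norm1]; omega
  · rw [co_add, add_comm n, add_comm γ]; simp

/-- level one part -/
def lv (D : KM L) : Submodule ℂ L where
  carrier := {x | ⁅D.cc, x⁆ = -x}
  zero_mem' := by simp
  add_mem' := by
    intro a b ha hb
    have ha : ⁅D.cc, a⁆ = -a := ha
    have hb : ⁅D.cc, b⁆ = -b := hb
    show ⁅D.cc, a + b⁆ = -(a + b)
    rw [lie_add, ha, hb, neg_add]
  smul_mem' := by
    intro k a ha
    have ha : ⁅D.cc, a⁆ = -a := ha
    show ⁅D.cc, k • a⁆ = -(k • a)
    rw [lie_smul, ha, smul_neg]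

theorem mem_lv {n g} {x : L} (hx : x ∈ D.wt (co 1 n g)) : x ∈ D.lv := by
  show ⁅D.cc, x⁆ = -x
  rw [cc_lie hx, co_zero]; simp

theorem lv_lie {n g} {y : L} (hy : y ∈ D.wt (co 0 n g)) {x : L} (hx : x ∈ D.lv) : ⁅y, x⁆ ∈ D.lv := by
  show ⁅D.cc, ⁅y, x⁆⁆ = -⁅y, x⁆
  have hx : ⁅D.cc, x⁆ = -x := hx
  rw [leibniz_lie, cc0 hy, hx, zero_lie, zero_add, lie_neg]

/-- action of a level zero element on level one -/
def op {n g} {y : L} (hy : y ∈ D.wt (co 0 n g)) : D.lv →ₗ[ℂ] D.lv :=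
  (ad ℂ L y).restrict (fun _ hx => lv_lie hy hx)

theorem op_coe {n g} {y : L} (hy : y ∈ D.wt (co 0 n g)) (v : D.lv) : (op hy v : L) = ⁅y, (v : L)⁆ := rfl

theorem S2.isVac {σ} (S : S2 D σ) {γ} {x : L} (hx : x ∈ D.wt (mu γ)) :
    Vac (fun n => op (S.wX (ip σ γ - n))) (fun n => op (S.wY (-n - ip σ γ)))
      (fun n => op (S.wH (-n)) - if n = 0 then (ip σ γ : ℂ) • LinearMap.id else 0) ⟨x, mem_lv hx⟩ where
  EF a b v := by
    have hv : ⁅D.cc, (v : L)⁆ = -v := v.2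
    apply Subtype.ext
    simp only [LinearMap.sub_apply, Submodule.coe_sub, op_coe]
    rw [leibniz_lie, ← lie_skew (S.Y _), S.XY, show ip σ γ - a + (-b - ip σ γ) = -(a + b) by ring]
    by_cases h : a + b = 0
    · rw [if_pos (by omega), if_pos h, if_pos h]
      simp only [LinearMap.smul_apply, LinearMap.id_apply, Submodule.coe_smul, neg_lie, add_lie, smul_lie, hv]
      push_cast; module
    · rw [if_neg (by omega), if_neg h, if_neg h]
      simp only [neg_lie, add_zero, LinearMap.zero_apply, Submodule.coe_zero, sub_zero]; abel
  HE m n v := by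
    apply Subtype.ext
    simp only [LinearMap.sub_apply, Submodule.coe_sub, Submodule.coe_add, Submodule.coe_smul, op_coe, lie_sub]
    rw [leibniz_lie, S.HX, show -m + (ip σ γ - n) = ip σ γ - (m + n) by ring]
    split
    · simp; abel
    · simp; abel
  HF m n v := by
    apply Subtype.ext
    simp only [LinearMap.sub_apply, Submodule.coe_sub, Submodule.coe_add, Submodule.coe_smul, op_coe, lie_sub]
    rw [leibniz_lie, ← lie_skew (S.Y _), S.HY, show -m + (-n - ip σ γ) = -(m + n) - ip σ γ by ring]
    split
    · simp; abel
    · simp; abel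
  HH m n v := by
    have hv : ⁅D.cc, (v : L)⁆ = -v := v.2
    have hk : ∀ (m : ℤ) (w : D.lv), (((if m = 0 then (ip σ γ : ℂ) • LinearMap.id else 0 :
        D.lv →ₗ[ℂ] D.lv) w : D.lv) : L) = (if m = 0 then (ip σ γ : ℂ) else 0) • (w : L) := by
      intro m w; split <;> simp
    apply Subtype.ext
    simp only [LinearMap.sub_apply, Submodule.coe_sub, Submodule.coe_add, op_coe, lie_sub, hk, lie_smul]
    rw [leibniz_lie, S.HH]
    by_cases h : m + n = 0
    · rw [if_pos (by omega), if_pos h]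
      simp only [smul_lie, hv, Submodule.coe_smul]
      push_cast; module
    · rw [if_neg (by omega), if_neg h]
      simp only [zero_lie, Submodule.coe_zero]; module
  EE a b v := by
    apply Subtype.ext
    simp only [op_coe]
    rw [leibniz_lie]
    have : ⁅S.X (ip σ γ - a), S.X (ip σ γ - b)⁆ = 0 :=
      wt_zero D (c := co 0 (ip σ γ - a) σ + co 0 (ip σ γ - b) σ) (Or.inl rfl)
        (by rw [co_add, norm_co, ip_add, ip_add', S.h2]; norm_num) (wt_lie (S.wX _) (S.wX _))
    rw [this]; simp
  xE n hn := by
    apply Subtype.ext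
    exact van (S.wX _) hx (by rw [hq_add' _ _ S.h2]; omega)
  xF n hn := by
    apply Subtype.ext
    exact van (S.wY _) hx (by rw [hq_add' _ _ S.flip.h2, ip_neg']; omega)
  xH n hn := by
    apply Subtype.ext
    simp only [LinearMap.sub_apply, Submodule.coe_sub, op_coe]
    split
    · rename_i h; subst h
      rw [neg_zero, S.H0 _ _ _ _ hx]; simp
    · rw [van (S.wH _) hx (by rw [add_zero]; omega)]; simp
  xEE := by
    apply Subtype.ext
    simp only [op_coe]
    refine van (n := hq γ + (ip σ γ - -1)) (γ := γ + σ) (S.wX _) (wt_lie' (S.wX _) hx ?_) ?_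
    · rw [mu, co_add, add_comm (hq γ), add_comm γ]; simp
    · rw [hq_add' _ _ S.h2, hq_add' _ _ S.h2, ip_add, S.h2]; omega

theorem S2.vac {σ} (S : S2 D σ) {γ} {x : L} (hx : x ∈ D.wt (mu γ)) (W : Submodule ℂ L)
    (h1 : ⁅S.X (ip σ γ + 1), x⁆ ∈ W) (hW : ∀ k : ℕ, ∀ w ∈ W, ⁅S.H (k + 1), w⁆ ∈ W) (n : ℤ) :
    ⁅S.X n, x⁆ ∈ W := by
  have := (S.isVac hx).mem (W.comap D.lv.subtype) (by
    show ⁅S.X (ip σ γ - -1), x⁆ ∈ W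
    rwa [sub_neg_eq_add]) (by
    intro k w hw
    rw [if_neg (by omega), sub_zero]
    have := hW k w hw
    rwa [show (k : ℤ) + 1 = -(-1 - k) by ring] at this) (ip σ γ - n)
  have h2 : ⁅S.X (ip σ γ - (ip σ γ - n)), x⁆ ∈ W := this
  rwa [sub_sub_cancel] at h2

theorem S2.step {σ} (S : S2 D σ) {γ} {x : L} (hx : x ∈ D.wt (mu γ)) :
    ⁅S.X (ip σ γ + 1), x⁆ ∈ D.wt (mu (γ + σ)) ∧ (x ≠ 0 → ⁅S.X (ip σ γ + 1), x⁆ ≠ 0) := by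
  constructor
  · refine wt_lie' (S.wX _) hx ?_
    rw [mu, mu, co_add, hq_add' _ _ S.h2, add_comm γ, zero_add]; congr 1; ring
  · intro h0 h
    apply h0
    have h1 : ⁅S.Y (-(ip σ γ + 1)), x⁆ = 0 :=
      van (S.wY _) hx (by rw [hq_add' _ _ S.flip.h2, ip_neg']; omega)
    have h2 : ⁅⁅S.X (ip σ γ + 1), S.Y (-(ip σ γ + 1))⁆, x⁆ = 0 := by
      rw [lie_lie, h, h1]; simp
    rw [S.XY, add_neg_cancel, if_pos rfl, add_lie, S.H0 _ _ _ _ hx, smul_lie, cc_lie hx, ← neg_eq_zero] at h2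
    rw [← h2, mu, co_zero]; push_cast; module
end KM
end
end KMW


namespace KMW
open LieAlgebra

/-- inverse Cartan matrix of E8 -/
def B8 : Matrix (Fin 8) (Fin 8) ℤ := !![2, 3, 4, 5, 6, 4, 2, 3; 3, 6, 8, 10, 12, 8, 4, 6; 4, 8, 12, 15, 18, 12, 6, 9; 5, 10, 15, 20, 24, 16, 8, 12; 6, 12, 18, 24, 30, 20, 10, 15; 4, 8, 12, 16, 20, 14, 7, 10; 2, 4, 6, 8, 10, 7, 4, 5; 3, 6, 9, 12, 15, 10, 5, 8]

theorem B8_mul (i l : Fin 8) : ∑ j, B8 i j * A8 j l = if i = l then 1 else 0 := by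
  revert i l; decide +kernel

def deg (s : Multiset (Fin 8 × ℕ)) : ℕ := (s.map fun a => a.2 + 1).sum

theorem deg_cons (a s) : deg (a ::ₘ s) = a.2 + 1 + deg s := by simp [deg]

section
variable {L : Type*} [LieRing L] [LieAlgebra ℂ L]
namespace KM
variable {D : KM L}
namespace Aff
variable (A : Aff D)

/-- creation operators -/
def hp (a : Fin 8 × ℕ) : L := (A.A a.1).H (a.2 + 1)

theorem hp_comm (a b) : ⁅A.hp a, A.hp b⁆ = 0 := by
  rw [hp, hp, A.HH, if_neg (by omega)]

instance lcomm : LeftCommutative (fun (a : Fin 8 × ℕ) (v : L) => ⁅A.hp a, v⁆) :=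
  ⟨fun a b v => by rw [leibniz_lie, hp_comm, zero_lie, zero_add]⟩

def mon (s : Multiset (Fin 8 × ℕ)) (x : L) : L :=
  s.foldr (fun (a : Fin 8 × ℕ) (v : L) => ⁅A.hp a, v⁆) x

theorem mon_zero (x) : A.mon 0 x = x := rfl
theorem mon_cons (a s x) : A.mon (a ::ₘ s) x = ⁅A.hp a, A.mon s x⁆ := Multiset.foldr_cons _ _ _ _

theorem mon_mem {γ} {x : L} (hx : x ∈ D.wt (mu γ)) (s) : A.mon s x ∈ D.wt (co 1 (hq γ + deg s) γ) := by
  induction s using Multiset.induction_on with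
  | empty => rw [mon_zero]; simpa [deg, mu] using hx
  | cons a s ih =>
    rw [mon_cons, deg_cons]
    refine wt_lie' ((A.A _).wH _) ih ?_
    rw [co_add]; push_cast; congr 1 <;> ring

/-- annihilation operators -/
noncomputable def an (a : Fin 8 × ℕ) : L :=
  ∑ j, (B8 a.1 j / (a.2 + 1) : ℂ) • (A.A j).H (-(a.2 + 1))

theorem an_mem (a) : A.an a ∈ D.wt (co 0 (-(a.2 + 1)) 0) :=
  Submodule.sum_mem _ fun j _ => Submodule.smul_mem _ _ ((A.A j).wH _)

theorem an_hp (a b) : ⁅A.an a, A.hp b⁆ = if a = b then -D.cc else 0 := by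
  rw [an, _root_.sum_lie]
  simp only [hp, smul_lie, A.HH]
  by_cases h : a.2 = b.2
  · rw [h]
    simp only [neg_add_cancel, if_true, smul_smul]
    have hb : (b.2 + 1 : ℂ) ≠ 0 := by exact_mod_cast Nat.succ_ne_zero b.2
    have h1 : ∀ j, (B8 a.1 j / (b.2 + 1) * ((-(b.2 + 1) : ℤ) * A8 j b.1) : ℂ) = -((B8 a.1 j * A8 j b.1 : ℤ) : ℂ) := by
      intro j; push_cast; field_simp
    simp only [h1]
    rw [← Finset.sum_smul, Finset.sum_neg_distrib, ← Int.cast_sum, B8_mul]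
    by_cases h2 : a.1 = b.1
    · rw [if_pos h2, if_pos (Prod.ext h2 h)]; simp
    · rw [if_neg h2, if_neg (fun h' => h2 (by rw [h']))]; simp
  · rw [if_neg (fun h' => h (by rw [h']))]
    refine Finset.sum_eq_zero fun j _ => ?_
    rw [if_neg (by omega), smul_zero]

theorem an_mon {γ} {x : L} (hx : x ∈ D.wt (mu γ)) (a s) :
    ⁅A.an a, A.mon s x⁆ = (s.count a : ℂ) • A.mon (s.erase a) x := by
  induction s using Multiset.induction_on with
  | empty =>
    rw [mon_zero, van (A.an_mem a) hx (by rw [add_zero]; omega)]; simp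
  | cons b s ih =>
    rw [mon_cons, leibniz_lie, ih, an_hp, lie_smul]
    by_cases h : a = b
    · subst h
      rw [if_pos rfl, neg_lie, cc_lie (A.mon_mem hx s), co_zero, Multiset.erase_cons_head, Multiset.count_cons_self]
      by_cases h2 : a ∈ s
      · rw [← mon_cons, Multiset.cons_erase h2]; push_cast; module
      · rw [Multiset.count_eq_zero_of_notMem h2]; push_cast; module
    · rw [if_neg h, zero_lie, zero_add, Multiset.count_cons_of_ne h, Multiset.erase_cons_tail s (Ne.symm h),
        mon_cons]

theorem dualop {γ} {x : L} (hx : x ∈ D.wt (mu γ)) (t) : ∃ U : L →ₗ[ℂ] L,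
    (∃ k : ℂ, k ≠ 0 ∧ U (A.mon t x) = k • x) ∧ ∀ s, deg s = deg t → s ≠ t → U (A.mon s x) = 0 := by
  induction t using Multiset.induction_on with
  | empty =>
    refine ⟨LinearMap.id, ⟨1, one_ne_zero, by simp [mon_zero]⟩, ?_⟩
    intro s hs h
    exfalso
    obtain ⟨a, ha⟩ := Multiset.exists_mem_of_ne_zero h
    obtain ⟨u, rfl⟩ := Multiset.exists_cons_of_mem ha
    rw [deg_cons] at hs; simp [deg] at hs
  | cons a t ih =>
    obtain ⟨U, ⟨k, hk, hU⟩, h⟩ := ih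
    refine ⟨U ∘ₗ (ad ℂ L (A.an a)), ⟨(t.count a + 1 : ℂ) * k, mul_ne_zero (Nat.cast_add_one_ne_zero _) hk, ?_⟩, ?_⟩
    · rw [LinearMap.comp_apply, ad_apply, A.an_mon hx, map_smul, Multiset.erase_cons_head, hU, smul_smul]
      simp
    · intro s hs hne
      rw [LinearMap.comp_apply, ad_apply, A.an_mon hx, map_smul]
      by_cases ha : a ∈ s
      · obtain ⟨u, rfl⟩ := Multiset.exists_cons_of_mem ha
        rw [Multiset.erase_cons_head, h u (by rw [deg_cons, deg_cons] at hs; omega) (fun h' => hne (by rw [h'])),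
          smul_zero]
      · rw [Multiset.count_eq_zero_of_notMem ha]; simp

theorem mon_indep {γ} {x : L} (hx : x ∈ D.wt (mu γ)) (hx0 : x ≠ 0) (N : ℕ) :
    LinearIndependent ℂ (fun s : {s // deg s = N} => A.mon s.1 x) := by
  rw [linearIndependent_iff']
  intro S g hg t ht
  obtain ⟨U, ⟨k, hk, hU⟩, h⟩ := A.dualop hx t.1
  have h1 := congrArg U hg
  rw [map_sum, map_zero, Finset.sum_eq_single_of_mem t ht, map_smul, hU, smul_smul] at h1
  · exact (mul_eq_zero.1 ((smul_eq_zero.1 h1).resolve_right hx0)).resolve_right hk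
  · intro s _ hs
    rw [map_smul, h s.1 (by rw [s.2, t.2]) (fun h' => hs (Subtype.ext h')), smul_zero]

theorem exists_x (A : Aff D) (he : ∀ i, D.e i ≠ 0) (γ) : ∃ x ∈ D.wt (mu γ), x ≠ 0 := by
  let Q : (Fin 8 → ℤ) → Prop := fun γ => ∃ x ∈ D.wt (mu γ), x ≠ 0
  have h1 : ∀ γ i, Q γ → Q (γ + sg i) := by
    rintro γ i ⟨x, hx, h⟩
    exact ⟨_, ((KM.Aff.S2 A i).step hx).1, ((KM.Aff.S2 A i).step hx).2 h⟩
  have h2 : ∀ γ i, Q γ → Q (γ + -sg i) := by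
    rintro γ i ⟨x, hx, h⟩
    exact ⟨_, ((KM.Aff.S2 A i).flip.step hx).1, ((KM.Aff.S2 A i).flip.step hx).2 h⟩
  let K : AddSubgroup (Fin 8 → ℤ) :=
    { carrier := {β | ∀ γ, Q γ ↔ Q (γ + β)}
      zero_mem' := by intro γ; rw [add_zero]
      add_mem' := by intro a b ha hb γ; rw [ha, hb, add_assoc]
      neg_mem' := by
        intro a ha γ
        have ha : ∀ γ, Q γ ↔ Q (γ + a) := ha
        rw [ha (γ + -a)]; simp }
  have hK : ∀ i, sg i ∈ K := by
    intro i γ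
    refine ⟨h1 γ i, fun h => ?_⟩
    have := h2 _ i h
    rwa [add_neg_cancel_right] at this
  have hγ : γ ∈ K := by
    have : γ = ∑ i, γ i • sg i := by
      ext j; simp [sg, Finset.sum_apply, Pi.single_apply]
    rw [this]
    exact K.sum_mem fun i _ => K.zsmul_mem (hK i) _
  have h0 : Q 0 := ⟨D.e 0, by
    have := e_mem (D := D) 0
    rw [al_zero] at this
    have h : hq 0 = 0 := by decide
    rwa [mu, h], he 0⟩
  have := (hγ 0).1 h0
  rwa [zero_add] at this

end Aff
end KM
end
end KMW


namespace KMW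
open LieAlgebra

section
variable {L : Type*} [LieRing L] [LieAlgebra ℂ L]
namespace KM
variable {D : KM L}

theorem e_nd (j : Fin 8) : D.e (nd j) ∈ D.wt (co 0 0 (sg j)) := by
  have := e_mem (D := D) (nd j); rwa [al_nd] at this
theorem f_nd (j : Fin 8) : D.f (nd j) ∈ D.wt (co 0 0 (-sg j)) := by
  have := f_mem (D := D) (nd j); rw [al_nd, co_neg] at this; simpa using this

theorem closed_sub (S : LieSubalgebra ℂ L) (h1 : ∀ j, D.e (nd j) ∈ S) (h2 : ∀ j, D.f (nd j) ∈ S) (m : ℤ) :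
    Closed8 (fun g => ∀ z ∈ D.wt (co 0 m g), z ∈ S) := by
  constructor
  · intro g j hg hj h z hz
    have a1 : ⁅D.f (nd j), z⁆ ∈ S := h _ (wt_lie' (f_nd j) hz (by rw [co_add]; simp))
    have a2 : ⁅D.e (nd j), z⁆ = 0 := by
      refine wt_zero D (c := co 0 m (g + sg j + sg j)) (Or.inl rfl) ?_
        (wt_lie' (e_nd j) hz (by rw [co_add, add_comm (sg j)]; simp))
      rw [norm_co]
      simp only [ip_add, ip_add', hg, ip_sg, ip_sg', hj, prg_sg, A8_diag, prg_add]; norm_num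
    have a3 := leibniz_lie (D.e (nd j)) (D.f (nd j)) z
    rw [a2, D.ef, if_pos rfl, h_nd hz, lie_zero, add_zero, prg_add, hj, prg_sg, A8_diag] at a3
    have a4 := S.lie_mem (h1 j) a1
    rw [a3] at a4; norm_num at a4; exact a4
  · intro g j hg hj h z hz
    have a1 : ⁅D.e (nd j), z⁆ ∈ S := h _ (wt_lie' (e_nd j) hz (by rw [co_add]; simp))
    have a2 : ⁅D.f (nd j), z⁆ = 0 := by
      refine wt_zero D (c := co 0 m (g + -sg j + -sg j)) (Or.inl rfl) ?_
        (wt_lie' (f_nd j) hz (by rw [co_add, add_comm (-sg j)]; simp))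
      rw [norm_co]
      simp only [ip_add, ip_add', ip_neg, ip_neg', hg, ip_sg, ip_sg', hj, prg_sg, A8_diag, prg_add, prg_neg]; norm_num
    have a3 := leibniz_lie (D.f (nd j)) (D.e (nd j)) z
    rw [a2, ← lie_skew (D.f (nd j)) (D.e (nd j)), D.ef, if_pos rfl, neg_lie, h_nd hz, lie_zero, add_zero, prg_add, prg_neg, hj, prg_sg, A8_diag] at a3
    have a4 := S.lie_mem (h2 j) a1
    rw [a3] at a4; norm_num at a4; exact a4

namespace Aff

theorem mem_e1 (A : Aff D) (he : ∀ i, D.e i ≠ 0) (S : LieSubalgebra ℂ L)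
    (hX : ∀ i n, (A.A i).X n ∈ S) (hY : ∀ i n, (A.A i).Y n ∈ S) (i : Fin 10) (hi : i ≠ 0) : D.e i ∈ S := by
  have h1 : ∀ j, D.e (nd j) ∈ S := fun j => by rw [← (A.A j).X0]; exact hX j 0
  have h2 : ∀ j, D.f (nd j) ∈ S := fun j => by rw [← (A.A j).Y0]; exact hY j 0
  have h3 : D.e 1 ∈ S := by
    refine conn_dn (closed_sub S h1 h2 1) ?_ _ (by rw [← al_one]; exact e_mem 1)
    intro z hz
    obtain ⟨a, ha⟩ := wt_le1 D (c := co 0 1 (-sg 0)) (Or.inl rfl)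
      (by rw [norm_co, ip_neg, ip_neg', ip_sg, prg_sg, A8_diag]; norm_num) z hz _ ((A.A 0).wY 1) ((A.A 0).Yne he 1)
    rw [ha]; exact S.smul_mem _ (hY 0 1)
  revert hi
  refine (fin10_forall (P := fun i => i ≠ 0 → D.e i ∈ S)).2
    ⟨fun h => absurd rfl h, fun _ => h3, fun _ => h1 0, fun _ => h1 1, fun _ => h1 2, fun _ => h1 3,
      fun _ => h1 4, fun _ => h1 5, fun _ => h1 6, fun _ => h1 7⟩ i

section fock
variable (A : Aff D) (xv : (Fin 8 → ℤ) → L)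

def fock : Submodule ℂ L := Submodule.span ℂ (Set.range fun p : Multiset (Fin 8 × ℕ) × (Fin 8 → ℤ) => A.mon p.1 (xv p.2))

theorem mon_fock (s γ) : A.mon s (xv γ) ∈ A.fock xv := Submodule.subset_span ⟨(s, γ), rfl⟩

theorem stab_fock {z : L} (h : ∀ s γ, ⁅z, A.mon s (xv γ)⁆ ∈ A.fock xv) : z ∈ stab (A.fock xv) := by
  refine mem_stab_span ?_
  rintro y ⟨p, rfl⟩
  exact h p.1 p.2

theorem hp_fock (a) : A.hp a ∈ stab (A.fock xv) :=
  stab_fock A xv fun s γ => by rw [← mon_cons]; exact mon_fock A xv _ _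

variable (hx : ∀ γ, xv γ ∈ D.wt (mu γ))
include hx

theorem H_fock (i : Fin 8) (n : ℤ) : (A.A i).H n ∈ stab (A.fock xv) := by
  refine stab_fock A xv fun s γ => ?_
  rcases lt_trichotomy n 0 with hn | hn | hn
  · induction s using Multiset.induction_on with
    | empty =>
      rw [mon_zero, van ((A.A i).wH n) (hx γ) (by rw [add_zero]; omega)]; exact zero_mem _
    | cons b s ih =>
      rw [mon_cons, leibniz_lie]
      refine add_mem ?_ (hp_fock A xv b _ ih)
      rw [hp, A.HH]
      split
      · rw [smul_lie, cc_lie (A.mon_mem (hx γ) s)]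
        exact Submodule.smul_mem _ _ (Submodule.smul_mem _ _ (mon_fock A xv _ _))
      · rw [zero_lie]; exact zero_mem _
  · subst hn
    rw [(A.A i).H0, h_nd (A.mon_mem (hx γ) s)]
    exact Submodule.smul_mem _ _ (mon_fock A xv _ _)
  · have : (A.A i).H n = A.hp (i, (n - 1).toNat) := by
      rw [hp]; congr 1; simp only; omega
    rw [this]
    exact hp_fock A xv _ _ (mon_fock A xv _ _)

variable (hx1 : ∀ γ, ∀ x ∈ D.wt (mu γ), x ∈ A.fock xv)
include hx1

theorem X_fock {σ} (S : KM.S2 D σ) (hH : ∀ n, S.H n ∈ stab (A.fock xv))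
    (hc : ∀ i, ∃ k : ℂ, ∀ m n, ⁅(A.A i).H m, S.X n⁆ = k • S.X (m + n)) (n : ℤ) :
    S.X n ∈ stab (A.fock xv) := by
  refine stab_fock A xv fun s γ => ?_
  induction s using Multiset.induction_on generalizing n with
  | empty =>
    rw [mon_zero]
    exact S.vac (hx γ) _ (hx1 _ _ (S.step (hx γ)).1) (fun k w hw => hH _ _ hw) n
  | cons b s ih =>
    rw [mon_cons, leibniz_lie]
    refine add_mem ?_ (hp_fock A xv b _ (ih n))
    obtain ⟨k, hk⟩ := hc b.1
    rw [hp, ← lie_skew (S.X n), hk, neg_lie, smul_lie]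
    exact neg_mem (Submodule.smul_mem _ _ (ih _))

theorem wt_fock (he : ∀ i, D.e i ≠ 0) (n γ) : D.wt (co 1 n γ) ≤ A.fock xv := by
  have hX : ∀ i n, (A.A i).X n ∈ stab (A.fock xv) := fun i n =>
    X_fock A xv hx hx1 (KM.Aff.S2 A i) (H_fock A xv hx i) (fun j => ⟨_, A.HX j i⟩) n
  have hY : ∀ i n, (A.A i).Y n ∈ stab (A.fock xv) := fun i n =>
    X_fock A xv hx hx1 (KM.Aff.S2 A i).flip (fun n => neg_mem (H_fock A xv hx i n)) (fun j => ⟨_, A.HY j i⟩) n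
  refine T3 rfl _ ?_ (fun i hi => mem_e1 A he _ hX hY i hi)
  have := e_mem (D := D) 0
  rw [al_zero] at this
  have h : hq 0 = 0 := by decide
  exact hx1 0 _ (by rwa [mu, h])

end fock

theorem level_one (A : Aff D) (he : ∀ i, D.e i ≠ 0) (γ) (N : ℕ) :
    Nonempty (Module.Basis {s // deg s = N} ℂ (D.wt (co 1 (hq γ + N) γ))) := by
  choose xv hx h0 using A.exists_x he
  have hx1 : ∀ γ, ∀ x ∈ D.wt (mu γ), x ∈ A.fock xv := by
    intro γ x h
    obtain ⟨a, rfl⟩ := wt_le1 D (c := mu γ) (Or.inr (Or.inl rfl)) (by rw [mu, norm1]; ring) x h _ (hx γ) (h0 γ)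
    exact Submodule.smul_mem _ _ (mon_fock A xv 0 γ)
  have hli := A.mon_indep (hx γ) (h0 γ) N
  have hmem : ∀ s : {s // deg s = N}, A.mon s.1 (xv γ) ∈ D.wt (co 1 (hq γ + N) γ) := by
    rintro ⟨s, rfl⟩; exact A.mon_mem (hx γ) s
  let v : {s // deg s = N} → D.wt (co 1 (hq γ + N) γ) := fun s => ⟨_, hmem s⟩
  have hv : LinearIndependent ℂ v := LinearIndependent.of_comp (Submodule.subtype _) hli
  refine ⟨Module.Basis.mk hv ?_⟩
  rintro ⟨z, hz⟩ -
  have h1 := wt_fock A xv hx hx1 he _ _ hz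
  have h2 := mem_span_wt (ω := fun p : Multiset (Fin 8 × ℕ) × (Fin 8 → ℤ) => co 1 (hq p.2 + deg p.1) p.2)
    (fun p => A.mon_mem (hx p.2) p.1) h1 hz
  have h3 : z ∈ Submodule.span ℂ (Set.range fun s : {s // deg s = N} => A.mon s.1 (xv γ)) := by
    refine Submodule.span_mono ?_ h2
    rintro _ ⟨⟨s, g⟩, hp, rfl⟩
    obtain ⟨-, a, b⟩ := co_inj hp
    subst b
    exact ⟨⟨s, by simpa using a⟩, rfl⟩
  have h4 : (Set.range fun s : {s // deg s = N} => A.mon s.1 (xv γ)) = (Submodule.subtype _) '' Set.range v := by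
    rw [← Set.range_comp]; rfl
  rw [h4, Submodule.span_image] at h3
  obtain ⟨w, hw, rfl⟩ := h3
  exact hw

end Aff
end KM
end
end KMW


namespace KMW
open LieAlgebra

theorem A8_inv (g : Fin 8 → ℂ) (l : Fin 8) : ∑ j, (B8 l j : ℂ) * (∑ i, g i * A8 i j) = g l := by
  have h : ∀ i j : Fin 8, (B8 l j : ℂ) * (g i * A8 i j) = g i * ((B8 l j * A8 j i : ℤ) : ℂ) := by
    intro i j; rw [A8_symm i j]; push_cast; ring
  simp only [Finset.mul_sum, h]
  rw [Finset.sum_comm]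
  simp only [← Finset.mul_sum, ← Int.cast_sum, B8_mul]
  simp

section
variable {L : Type*} [LieRing L] [LieAlgebra ℂ L]
namespace KM
variable {D : KM L}

theorem cc_ne (he : ∀ i, D.e i ≠ 0) : D.cc ≠ 0 := by
  intro h
  have := cc_lie (e_mem (D := D) 0)
  rw [h, zero_lie] at this
  simp [al] at this
  exact he 0 this

theorem wcc : D.cc ∈ D.wt (co 0 0 0) := by
  rw [co_zero']; exact hb_mem _

namespace Aff

theorem H_indep (A : Aff D) (he : ∀ i, D.e i ≠ 0) (n : ℤ) (hn : n ≠ 0) :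
    LinearIndependent ℂ (fun i => (A.A i).H n) := by
  rw [Fintype.linearIndependent_iff]
  intro g hg l
  have h1 : ∀ j, (∑ i, g i * A8 i j : ℂ) = 0 := by
    intro j
    have h2 := congrArg (fun z => ⁅z, (A.A j).H (-n)⁆) hg
    simp only [_root_.sum_lie, smul_lie, A.HH, add_neg_cancel, if_true, zero_lie, smul_smul, ← Finset.sum_smul] at h2
    have h3 := (smul_eq_zero.1 h2).resolve_right (cc_ne he)
    have h4 : (n : ℂ) * (∑ i, g i * A8 i j : ℂ) = 0 := by
      rw [← h3, Finset.mul_sum]; exact Finset.sum_congr rfl fun i _ => by ring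
    exact (mul_eq_zero.1 h4).resolve_left (by exact_mod_cast hn)
  rw [← A8_inv g l]
  simp [h1]

/-- spanning family at level zero -/
def I0 (D : KM L) : Type _ :=
  {p : ℤ × (Fin 8 → ℤ) × L // p.2.1 ≠ 0 ∧ p.2.2 ∈ D.wt (co 0 p.1 p.2.1)} ⊕ (Fin 8 × ℤ) ⊕ Unit

def v0 (A : Aff D) : I0 D → L
  | .inl p => p.1.2.2
  | .inr (.inl q) => (A.A q.1).H q.2
  | .inr (.inr _) => D.cc

def w0 : I0 D → Fin 10 → ℤ
  | .inl p => co 0 p.1.1 p.1.2.1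
  | .inr (.inl q) => co 0 q.2 0
  | .inr (.inr _) => co 0 0 0

theorem v0_mem (A : Aff D) (p : I0 D) : A.v0 p ∈ D.wt (w0 p) := by
  rcases p with p | q | q
  · exact p.2.2
  · exact (A.A q.1).wH q.2
  · exact wcc

theorem root_span (A : Aff D) {m : ℤ} {g} (hg : g ≠ 0) {x : L} (hx : x ∈ D.wt (co 0 m g)) :
    x ∈ Submodule.span ℂ (Set.range A.v0) :=
  Submodule.subset_span ⟨.inl ⟨(m, g, x), hg, hx⟩, rfl⟩

theorem sg_ne {σ} (h : ip σ σ = 2) : σ ≠ 0 := by rintro rfl; rw [ip_zero] at h; omega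

theorem X_span0 (A : Aff D) {σ} (S : KM.S2 D σ) (hne : ∀ n, S.Y n ≠ 0)
    (hH : ∀ n, S.H n ∈ Submodule.span ℂ (Set.range A.v0))
    (hc : ∀ i, ∃ k : ℂ, ∀ m n, ⁅(A.A i).H m, S.X n⁆ = k • S.X (m + n)) (n : ℤ) :
    S.X n ∈ stab (Submodule.span ℂ (Set.range A.v0)) := by
  refine mem_stab_span ?_
  rintro _ ⟨p, rfl⟩
  rcases p with ⟨⟨m, g, x⟩, hg, hx⟩ | ⟨i, m⟩ | q
  · change ⁅S.X n, x⁆ ∈ _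
    by_cases h : σ + g = 0
    · have hg' : g = -σ := by rw [eq_neg_iff_add_eq_zero, add_comm]; exact h
      subst hg'
      obtain ⟨a, ha⟩ := wt_le1 D (c := co 0 m (-σ)) (Or.inl rfl)
        (by rw [norm_co, ip_neg, ip_neg', S.h2]; norm_num) x hx _ (S.wY m) (hne m)
      rw [ha, lie_smul, S.XY]
      refine Submodule.smul_mem _ _ (add_mem (hH _) ?_)
      split
      · exact Submodule.smul_mem _ _ (Submodule.subset_span ⟨.inr (.inr ()), rfl⟩)
      · exact zero_mem _
    · exact root_span A h (wt_lie' (S.wX n) hx (by rw [co_add]; rfl))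
  · change ⁅S.X n, (A.A i).H m⁆ ∈ _
    obtain ⟨k, hk⟩ := hc i
    rw [← lie_skew, hk]
    exact neg_mem (Submodule.smul_mem _ _ (root_span A (sg_ne S.h2) (S.wX _)))
  · change ⁅S.X n, D.cc⁆ ∈ _
    rw [← lie_skew, cc0 (S.wX n), neg_zero]; exact zero_mem _

theorem level_zero (A : Aff D) (he : ∀ i, D.e i ≠ 0) (n : ℤ) (hn : 0 < n) :
    Nonempty (Module.Basis (Fin 8) ℂ (D.wt (co 0 n 0))) := by
  have hli := A.H_indep he n hn.ne'
  let v : Fin 8 → D.wt (co 0 n 0) := fun i => ⟨_, (A.A i).wH n⟩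
  have hv : LinearIndependent ℂ v := LinearIndependent.of_comp (Submodule.subtype _) hli
  refine ⟨Module.Basis.mk hv ?_⟩
  rintro ⟨z, hz⟩ -
  have hH : ∀ i n, (A.A i).H n ∈ Submodule.span ℂ (Set.range A.v0) := fun i n =>
    Submodule.subset_span ⟨.inr (.inl (i, n)), rfl⟩
  have hX : ∀ i n, (A.A i).X n ∈ stab (Submodule.span ℂ (Set.range A.v0)) := fun i n =>
    X_span0 A (KM.Aff.S2 A i) ((A.A i).Yne he) (hH i) (fun j => ⟨_, A.HX j i⟩) n
  have hY : ∀ i n, (A.A i).Y n ∈ stab (Submodule.span ℂ (Set.range A.v0)) := fun i n =>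
    X_span0 A (KM.Aff.S2 A i).flip ((A.A i).Xne he) (fun n => neg_mem (hH i n)) (fun j => ⟨_, A.HY j i⟩) n
  have hroot : ∀ i ≠ 0, D.e i ∈ Submodule.span ℂ (Set.range A.v0) := by
    have h1 : ∀ j, D.e (nd j) ∈ Submodule.span ℂ (Set.range A.v0) := fun j =>
      root_span A (sg_ne (KM.Aff.S2 A j).h2) (e_nd j)
    intro i hi
    revert hi
    refine (fin10_forall (P := fun i => i ≠ 0 → D.e i ∈ Submodule.span ℂ (Set.range A.v0))).2
      ⟨fun h => absurd rfl h, fun _ => root_span A (m := 1) (g := -tht) (by decide) (by rw [← al_one]; exact e_mem 1),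
      fun _ => h1 0, fun _ => h1 1, fun _ => h1 2, fun _ => h1 3,
      fun _ => h1 4, fun _ => h1 5, fun _ => h1 6, fun _ => h1 7⟩ i
  have h1 := T4 (c := co 0 n 0) ⟨1, by simpa [co_coords] using hn⟩ rfl _ hroot (fun i hi => mem_e1 A he _ hX hY i hi) hz
  have h2 := mem_span_wt (ω := w0) (v0_mem A) h1 hz
  have h3 : z ∈ Submodule.span ℂ (Set.range fun i => (A.A i).H n) := by
    refine Submodule.span_mono ?_ h2
    rintro _ ⟨p, hp, rfl⟩
    rcases p with ⟨⟨m, g, x⟩, hg, hx⟩ | ⟨i, m⟩ | q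
    · exact absurd (co_inj hp).2.2 hg
    · obtain ⟨-, a, -⟩ := co_inj hp
      have a : m = n := a
      subst a
      exact ⟨i, rfl⟩
    · obtain ⟨-, a, -⟩ := co_inj hp
      omega
  have h4 : (Set.range fun i => (A.A i).H n) = (Submodule.subtype _) '' Set.range v := by
    rw [← Set.range_comp]; rfl
  rw [h4, Submodule.span_image] at h3
  obtain ⟨w, hw, rfl⟩ := h3
  exact hw

end Aff
end KM
end
end KMW


namespace KMW

def d1 (m : Multiset ℕ) : ℕ := (m.map (· + 1)).sum

def partEquiv (n : ℕ) : {m : Multiset ℕ // d1 m = n} ≃ Nat.Partition n where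
  toFun m := ⟨m.1.map (· + 1), by simp, m.2⟩
  invFun P := ⟨P.parts.map (· - 1), by
    have h : (P.parts.map (· - 1)).map (· + 1) = P.parts := by
      rw [Multiset.map_map]
      conv_rhs => rw [← Multiset.map_id P.parts]
      refine Multiset.map_congr rfl fun x hx => ?_
      have := P.parts_pos hx
      simp only [Function.comp, id]; omega
    rw [d1, h, P.parts_sum]⟩
  left_inv m := by
    apply Subtype.ext
    simp
  right_inv P := by
    apply Nat.Partition.ext
    simp only [Multiset.map_map]
    conv_rhs => rw [← Multiset.map_id P.parts]
    refine Multiset.map_congr rfl fun x hx => ?_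
    have := P.parts_pos hx
    simp only [Function.comp, id]; omega

def spl (i : Fin 8) : Multiset (Fin 8 × ℕ) →+ Multiset ℕ where
  toFun s := (s.filter fun a => a.1 = i).map Prod.snd
  map_zero' := by simp
  map_add' := by simp

theorem spl_map (i j : Fin 8) (m : Multiset ℕ) : spl i (m.map (Prod.mk j)) = if j = i then m else 0 := by
  change ((m.map (Prod.mk j)).filter fun a => a.1 = i).map Prod.snd = _
  simp only [Multiset.filter_map, Multiset.map_map]
  by_cases h : j = i
  · simp [h]
  · simp [h]

theorem spl_single (i : Fin 8) (a : Fin 8 × ℕ) : spl i {a} = if a.1 = i then {a.2} else 0 := by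
  have := spl_map i a.1 {a.2}
  simpa using this

def splEquiv : Multiset (Fin 8 × ℕ) ≃ (Fin 8 → Multiset ℕ) where
  toFun s i := spl i s
  invFun f := ∑ i, (f i).map (Prod.mk i)
  left_inv s := by
    simp only
    induction s using Multiset.induction_on with
    | empty => simp
    | cons a s ih =>
      conv_rhs => rw [← ih]
      rw [← Multiset.singleton_add, ← Multiset.singleton_add]
      simp only [map_add, Multiset.map_add, Finset.sum_add_distrib, spl_single]
      congr 1
      rw [Finset.sum_eq_single a.1]
      · simp
      · intro b _ h; simp [Ne.symm h]
      · simp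
  right_inv f := by
    funext j
    simp only [map_sum, spl_map]
    simp

theorem deg_spl (s) : deg s = ∑ i, d1 (splEquiv s i) := by
  change deg s = ∑ i, d1 (spl i s)
  induction s using Multiset.induction_on with
  | empty => simp [deg, d1]
  | cons a s ih =>
    rw [deg_cons, ih, ← Multiset.singleton_add]
    simp only [map_add, spl_single]
    have h : ∀ i, d1 ((if a.1 = i then {a.2} else 0) + spl i s) = (if a.1 = i then a.2 + 1 else 0) + d1 (spl i s) := by
      intro i; split <;> simp [d1]
    simp only [h, Finset.sum_add_distrib]
    simp

def sigEquiv (N : ℕ) : {f : Fin 8 → Multiset ℕ // ∑ i, d1 (f i) = N} ≃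
    Σ k : {k // k ∈ Finset.Nat.antidiagonalTuple 8 N}, ∀ i, {m : Multiset ℕ // d1 m = k.1 i} where
  toFun f := ⟨⟨fun i => d1 (f.1 i), Finset.Nat.mem_antidiagonalTuple.2 f.2⟩, fun i => ⟨f.1 i, rfl⟩⟩
  invFun x := ⟨fun i => (x.2 i).1, 
    (Finset.sum_congr rfl fun i _ => (x.2 i).2).trans (Finset.Nat.mem_antidiagonalTuple.1 x.1.2)⟩
  left_inv f := rfl
  right_inv x := by
    obtain ⟨⟨k, hk⟩, f⟩ := x
    obtain ⟨m, hm⟩ : ∃ m : Fin 8 → Multiset ℕ, ∀ i, (f i).1 = m i := ⟨fun i => (f i).1, fun _ => rfl⟩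
    have hk' : k = fun i => d1 (m i) := funext fun i => by rw [← hm]; exact (f i).2.symm
    subst hk'
    have : f = fun i => ⟨m i, rfl⟩ := funext fun i => Subtype.ext (hm i)
    subst this
    rfl

theorem card_deg (N : ℕ) : Nat.card {s // deg s = N} = pColored 8 N := by
  have e1 : {s // deg s = N} ≃ {f : Fin 8 → Multiset ℕ // ∑ i, d1 (f i) = N} :=
    splEquiv.subtypeEquiv fun s => by rw [deg_spl]
  have e2 := (e1.trans (sigEquiv N)).trans (Equiv.sigmaCongrRight fun k => Equiv.piCongrRight fun i => partEquiv (k.1 i))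
  rw [Nat.card_congr e2, Nat.card_eq_fintype_card, Fintype.card_sigma, pColored]
  simp only [Fintype.card_pi]
  exact Finset.sum_coe_sort (Finset.Nat.antidiagonalTuple 8 N) (fun k => ∏ i, p (k i))

theorem pColored_one : pColored 8 1 = 8 := by
  decide +kernel

end KMW


namespace KMW
open LieAlgebra KacMoody

theorem free_gen {ℓ : ℕ} (K : LieSubalgebra ℂ (FreeLie ℓ)) (h1 : ∀ i, E i ∈ K) (h2 : ∀ i, F i ∈ K)
    (h3 : ∀ i, KacMoody.H i ∈ K) (x) : x ∈ K := by
  let g : ChevalleyGen ℓ → K := fun c => match c with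
    | .e i => ⟨E i, h1 i⟩
    | .f i => ⟨F i, h2 i⟩
    | .h i => ⟨KacMoody.H i, h3 i⟩
  have h : K.incl.comp (FreeLieAlgebra.lift ℂ g) = LieHom.id := by
    apply FreeLieAlgebra.hom_ext
    intro c
    cases c <;> simp [g, E, F, KacMoody.H]
  have h4 := congrArg (fun k : FreeLie ℓ →ₗ⁅ℂ⁆ FreeLie ℓ => k x) h
  simp only [LieHom.comp_apply, LieHom.id_apply] at h4
  rw [← h4]
  exact (FreeLieAlgebra.lift ℂ g x).2

section
variable {L : Type*} [LieRing L] [LieAlgebra ℂ L]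

theorem serre_comm (e f h : Fin 10 → L) (ef : ∀ i j, ⁅e i, f j⁆ = if i = j then h i else 0)
    (he : ∀ i j, ⁅h i, e j⁆ = (AE10 i j : ℂ) • e j) (i j k : Fin 10) (hij : i ≠ j) :
    (AE10 i j = 0 → ⁅f k, ⁅e i, e j⁆⁆ = 0) ∧ (AE10 i j = -1 → ⁅f k, ⁅e i, ⁅e i, e j⁆⁆⁆ = 0) := by
  have fe : ∀ i j, ⁅f i, e j⁆ = if i = j then -h i else 0 := by
    intro i j
    rw [← lie_skew, ef]
    by_cases h : i = j
    · subst h; simp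
    · rw [if_neg h, if_neg (Ne.symm h), neg_zero]
  have h1 : ⁅f k, ⁅e i, e j⁆⁆ = (if k = i then -(AE10 i j : ℂ) • e j else 0) + if k = j then (AE10 i j : ℂ) • e i else 0 := by
    rw [leibniz_lie, fe, fe]
    congr 1
    · split
      · rename_i h; subst h; rw [neg_lie, he, neg_smul]
      · simp
    · split
      · rename_i h; subst h; rw [lie_neg, lie_skew, he, AE10_symm]
      · simp
  constructor
  · intro h; rw [h1, h]; simp
  · intro h
    rw [leibniz_lie, h1, fe, h]
    by_cases h2 : k = i
    · subst h2
      rw [if_pos rfl, if_pos rfl, if_neg hij, neg_lie, leibniz_lie, he, he, h, AE10_diag]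
      simp only [smul_lie, lie_smul]; push_cast
      simp only [lie_add, lie_smul, lie_zero]
      module
    · rw [if_neg h2, if_neg h2]
      split <;> simp
end

/-! a Verma module -/

noncomputable section verma

attribute [local instance 100] LieRing.ofAssociativeRing

abbrev VM : Type := List (Fin 10) →₀ ℂ

def vwt (i : Fin 10) (w : List (Fin 10)) : ℂ := 1 - (w.map fun j => (AE10 i j : ℂ)).sum

def vF (i : Fin 10) : Module.End ℂ VM := Finsupp.linearCombination ℂ fun w => Finsupp.single (i :: w) (1 : ℂ)
def vH (i : Fin 10) : Module.End ℂ VM := Finsupp.linearCombination ℂ fun w => vwt i w • Finsupp.single w (1 : ℂ)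
def vev (i : Fin 10) : List (Fin 10) → VM
  | [] => 0
  | j :: w => vF j (vev i w) + if i = j then vwt i w • Finsupp.single w (1 : ℂ) else 0
def vE (i : Fin 10) : Module.End ℂ VM := Finsupp.linearCombination ℂ (vev i)

abbrev bs (w : List (Fin 10)) : VM := Finsupp.single w (1 : ℂ)

theorem vF_bs (i w) : vF i (bs w) = bs (i :: w) := by simp [vF, bs, Finsupp.linearCombination_single]
theorem vH_bs (i w) : vH i (bs w) = vwt i w • bs w := by
  simp only [vH, bs, Finsupp.linearCombination_single, one_smul]
theorem vE_bs (i w) : vE i (bs w) = vev i w := by simp [vE, bs, Finsupp.linearCombination_single]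

theorem vext {a b : Module.End ℂ VM} (h : ∀ w, a (bs w) = b (bs w)) : a = b := by
  apply Finsupp.lhom_ext'
  intro w
  apply LinearMap.ext_ring
  exact h w

theorem lie_ap (a b : Module.End ℂ VM) (x) : ⁅a, b⁆ x = a (b x) - b (a x) := by
  rfl

theorem vEF (i j) : ⁅vE i, vF j⁆ = if i = j then vH i else 0 := by
  apply vext; intro w
  rw [lie_ap, vF_bs, vE_bs, vE_bs, vev, add_sub_cancel_left]
  split
  · rw [vH_bs]
  · rfl

theorem vwt_cons (i j w) : vwt i (j :: w) = vwt i w - AE10 i j := by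
  simp only [vwt, List.map_cons, List.sum_cons]; ring

theorem vHF (i j) : ⁅vH i, vF j⁆ = -((AE10 i j : ℂ) • vF j) := by
  apply vext; intro w
  rw [lie_ap, LinearMap.neg_apply, LinearMap.smul_apply, vH_bs, map_smul, vF_bs, vH_bs, vwt_cons]
  module

theorem vHH (i j) : ⁅vH i, vH j⁆ = 0 := by
  apply vext; intro w
  rw [lie_ap, vH_bs, vH_bs, map_smul, map_smul, vH_bs, vH_bs, LinearMap.zero_apply]
  module

theorem vHE (i j) : ⁅vH i, vE j⁆ = (AE10 i j : ℂ) • vE j := by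
  have h : ∀ w, vH i (vev j w) = (AE10 i j + vwt i w) • vev j w := by
    intro w
    induction w with
    | nil => simp [vev]
    | cons k w ih =>
      have h1 : vH i (vF k (vev j w)) = vF k (vH i (vev j w)) - (AE10 i k : ℂ) • vF k (vev j w) := by
        have := congrArg (fun t : Module.End ℂ VM => t (vev j w)) (vHF i k)
        simp only [lie_ap, LinearMap.neg_apply, LinearMap.smul_apply] at this
        rw [sub_eq_iff_eq_add.1 this]; module
      rw [vev, map_add, h1, ih, vwt_cons, map_smul]
      split
      · rename_i h; subst h
        rw [map_smul, ← bs, vH_bs]; module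
      · rw [map_zero]; module
  apply vext; intro w
  rw [lie_ap, vH_bs, LinearMap.smul_apply, vE_bs, h, map_smul, vE_bs]
  module

/-- the radical of the contravariant form -/
def vW : List (Fin 10) → VM → VM
  | [], x => x
  | i :: u, x => vW u (vE i x)

theorem vW_add (u x y) : vW u (x + y) = vW u x + vW u y := by
  induction u generalizing x y with
  | nil => rfl
  | cons i u ih => rw [vW, map_add, ih]; rfl
theorem vW_smul (u) (a : ℂ) (x) : vW u (a • x) = a • vW u x := by
  induction u generalizing x with
  | nil => rfl
  | cons i u ih => rw [vW, map_smul, ih]; rfl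

def vN : Submodule ℂ VM where
  carrier := {x | ∀ u, vW u x [] = 0}
  zero_mem' := by
    intro u
    have := vW_smul u 0 0
    rw [zero_smul, zero_smul] at this
    rw [this]; rfl
  add_mem' := by
    intro a b ha hb u
    rw [vW_add, Finsupp.add_apply, ha u, hb u, add_zero]
  smul_mem' := by
    intro c x hx u
    rw [vW_smul, Finsupp.smul_apply, hx u, smul_zero]

theorem mem_vN {x} : x ∈ vN ↔ ∀ u, vW u x [] = 0 := Iff.rfl

theorem vF_nil (i x) : vF i x [] = 0 := by
  induction x using Finsupp.induction_linear with
  | zero => simp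
  | add a b ha hb => rw [map_add, Finsupp.add_apply, ha, hb, add_zero]
  | single w a => simp [vF, Finsupp.linearCombination_single]

theorem vH_nil (i x) : vH i x [] = x [] := by
  induction x using Finsupp.induction_linear with
  | zero => simp
  | add a b ha hb => rw [map_add, Finsupp.add_apply, ha, hb]; rfl
  | single w a =>
    simp only [vH, Finsupp.linearCombination_single, Finsupp.smul_apply, Finsupp.single_apply]
    split
    · rename_i h; subst h; simp [vwt]
    · simp

theorem vE_N (i x) (hx : x ∈ vN) : vE i x ∈ vN := fun u => hx (i :: u)

theorem vH_N (i x) (hx : x ∈ vN) : vH i x ∈ vN := by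
  have h : ∀ u, ∀ x ∈ vN, vW u (vH i x) [] = 0 := by
    intro u
    induction u with
    | nil => intro x hx; rw [vW, vH_nil]; exact hx []
    | cons j u ih =>
      intro x hx
      have := congrArg (fun t : Module.End ℂ VM => t x) (vHE i j)
      simp only [lie_ap, LinearMap.smul_apply] at this
      have h2 : vE j (vH i x) = vH i (vE j x) + (-(AE10 i j : ℂ)) • vE j x := by
        rw [sub_eq_iff_eq_add.1 this]; module
      rw [vW, h2, vW_add, Finsupp.add_apply, ih _ (vE_N j x hx), vW_smul, Finsupp.smul_apply, vE_N j x hx u]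
      simp
  exact fun u => h u x hx

theorem vF_N (i x) (hx : x ∈ vN) : vF i x ∈ vN := by
  have h : ∀ u, ∀ x ∈ vN, vW u (vF i x) [] = 0 := by
    intro u
    induction u with
    | nil => intro x hx; rw [vW, vF_nil]
    | cons j u ih =>
      intro x hx
      have := congrArg (fun t : Module.End ℂ VM => t x) (vEF j i)
      simp only [lie_ap] at this
      rw [vW, sub_eq_iff_eq_add.1 this, vW_add, Finsupp.add_apply, ih _ (vE_N j x hx), add_zero]
      split
      · exact vH_N j x hx u
      · exact (zero_mem vN : (0 : VM) ∈ vN) u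
  exact fun u => h u x hx

/-- elements commuting with all `vF` and killing the vacuum -/
theorem e_zero (t : Module.End ℂ VM) (h : ∀ k, ⁅vF k, t⁆ = 0) (h0 : t (bs []) = 0) : t = 0 := by
  apply vext; intro w
  induction w with
  | nil => exact h0
  | cons k w ih =>
    have := congrArg (fun z : Module.End ℂ VM => z (bs w)) (h k)
    simp only [lie_ap, LinearMap.zero_apply] at this
    rw [ih, LinearMap.zero_apply, map_zero, zero_sub, neg_eq_zero] at this
    rw [← vF_bs, this]; rfl

theorem f_zero (t : Module.End ℂ VM) (h : ∀ k, ⁅vE k, t⁆ = 0) (h0 : ∀ x, t x [] = 0) (x) : t x ∈ vN := by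
  intro u
  induction u generalizing x with
  | nil => exact h0 x
  | cons k u ih =>
    have := congrArg (fun z : Module.End ℂ VM => z x) (h k)
    simp only [lie_ap, LinearMap.zero_apply] at this
    rw [vW, sub_eq_zero.1 this]
    exact ih _

def vphi : FreeLie 10 →ₗ⁅ℂ⁆ Module.End ℂ VM :=
  FreeLieAlgebra.lift ℂ fun c => match c with
    | .e i => vE i
    | .f i => vF i
    | .h i => vH i

theorem vphi_E (i) : vphi (E i) = vE i := FreeLieAlgebra.lift_of_apply ..
theorem vphi_F (i) : vphi (F i) = vF i := FreeLieAlgebra.lift_of_apply ..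
theorem vphi_H (i) : vphi (KacMoody.H i) = vH i := FreeLieAlgebra.lift_of_apply ..

theorem vphi_N (z) : ∀ x ∈ vN, vphi z x ∈ vN := by
  let K : LieSubalgebra ℂ (FreeLie 10) :=
    { carrier := {z | ∀ x ∈ vN, vphi z x ∈ vN}
      zero_mem' := by intro x _; rw [map_zero]; exact zero_mem _
      add_mem' := by
        intro a b ha hb x hx
        rw [map_add]; exact add_mem (ha x hx) (hb x hx)
      smul_mem' := by
        intro c a ha x hx
        rw [map_smul]; exact Submodule.smul_mem _ _ (ha x hx)
      lie_mem' := by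
        intro a b ha hb x hx
        rw [LieHom.map_lie, lie_ap]
        exact sub_mem (ha _ (hb x hx)) (hb _ (ha x hx)) }
  exact free_gen K (fun i x hx => by rw [vphi_E]; exact vE_N i x hx) (fun i x hx => by rw [vphi_F]; exact vF_N i x hx)
    (fun i x hx => by rw [vphi_H]; exact vH_N i x hx) z

def vK : LieIdeal ℂ (FreeLie 10) where
  carrier := {z | ∀ x, vphi z x ∈ vN}
  zero_mem' := by intro x; rw [map_zero]; exact zero_mem _
  add_mem' := by
    intro a b ha hb x
    rw [map_add]; exact add_mem (ha x) (hb x)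
  smul_mem' := by
    intro c a ha x
    rw [map_smul]; exact Submodule.smul_mem _ _ (ha x)
  lie_mem := by
    intro a b hb x
    rw [LieHom.map_lie, lie_ap]
    exact sub_mem (vphi_N a _ (hb x)) (hb _)

theorem serre_le : serreIdeal AE10 ≤ vK := by
  rw [serreIdeal, LieSubmodule.lieSpan_le]
  have hz : ∀ z, vphi z = 0 → z ∈ vK := by
    intro z h x; rw [h]; exact zero_mem _
  rintro z (((((⟨i, j, rfl⟩ | ⟨i, j, rfl⟩) | ⟨i, j, rfl⟩) | ⟨i, j, rfl⟩) | ⟨i, j, hij, rfl⟩) | ⟨i, j, hij, rfl⟩)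
  · apply hz; rw [LieHom.map_lie, vphi_H, vphi_H, vHH]
  · apply hz; rw [map_sub, LieHom.map_lie, vphi_E, vphi_F, vEF]
    split
    · rw [vphi_H, sub_self]
    · rw [map_zero, sub_self]
  · apply hz; rw [map_sub, LieHom.map_lie, map_smul, vphi_E, vphi_H, vHE, sub_self]
  · apply hz; rw [map_add, LieHom.map_lie, map_smul, vphi_F, vphi_H, vHF]; exact neg_add_cancel (_ : Module.End ℂ VM)
  · apply hz
    have hc := fun k => serre_comm vE vF vH vEF vHE i j k hij
    rcases AE10_cases i j with h | h | h
    · exact absurd h.1 hij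
    · rw [h.2, show (1 - (0 : ℤ)).toNat = 1 from rfl]
      rw [pow_one, ad_apply, LieHom.map_lie, vphi_E, vphi_E]
      refine e_zero _ (fun k => (hc k).1 h.2) ?_
      simp only [lie_ap, vE_bs, vev, map_zero, sub_zero]
    · rw [h.2, show (1 - (-1 : ℤ)).toNat = 2 from rfl]
      rw [pow_two, Module.End.mul_apply, ad_apply, ad_apply, LieHom.map_lie, LieHom.map_lie, vphi_E, vphi_E]
      refine e_zero _ (fun k => (hc k).2 h.2) ?_
      simp only [lie_ap, vE_bs, vev, map_zero, sub_zero]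
  · have vFE : ∀ i j, ⁅vF i, vE j⁆ = if i = j then -vH i else 0 := by
      intro i j
      rw [← lie_skew, vEF]
      by_cases h : i = j
      · subst h; rw [if_pos rfl, if_pos rfl]
      · rw [if_neg h, if_neg (Ne.symm h)]; exact vext fun w => neg_zero (G := VM)
    have vHF' : ∀ i j, ⁅-vH i, vF j⁆ = (AE10 i j : ℂ) • vF j := by
      intro i j
      exact (neg_lie (vH i) (vF j)).trans ((congrArg Neg.neg (vHF i j)).trans (neg_neg (_ : Module.End ℂ VM)))
    have hc := fun k => serre_comm vF vE (fun i => -vH i) vFE vHF' i j k hij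
    rcases AE10_cases i j with h | h | h
    · exact absurd h.1 hij
    · rw [h.2, show (1 - (0 : ℤ)).toNat = 1 from rfl]
      change ∀ x, vphi (((ad ℂ (FreeLie 10) (F i)) ^ 1) (F j)) x ∈ vN
      rw [pow_one, ad_apply, LieHom.map_lie, vphi_F, vphi_F]
      refine f_zero _ (fun k => (hc k).1 h.2) ?_
      intro x; rw [lie_ap, Finsupp.sub_apply, vF_nil, vF_nil, sub_zero]
    · rw [h.2, show (1 - (-1 : ℤ)).toNat = 2 from rfl]
      change ∀ x, vphi (((ad ℂ (FreeLie 10) (F i)) ^ 2) (F j)) x ∈ vN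
      rw [pow_two, Module.End.mul_apply, ad_apply, ad_apply, LieHom.map_lie, LieHom.map_lie, vphi_F, vphi_F]
      refine f_zero _ (fun k => (hc k).2 h.2) ?_
      intro x; rw [lie_ap, Finsupp.sub_apply, vF_nil, lie_ap, Finsupp.sub_apply, vF_nil, vF_nil]; simp

theorem E_notin (i : Fin 10) : E i ∉ serreIdeal AE10 := by
  intro h
  have h1 : ∀ x, vphi (E i) x ∈ vN := serre_le h
  have h2 := h1 (bs [i]) []
  rw [vphi_E, vE_bs, vev, vev, map_zero, zero_add, if_pos rfl] at h2
  simp [vW, vwt] at h2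

end verma

end KMW


namespace KMW
open LieAlgebra KacMoody

noncomputable section final

abbrev qm (x : FreeLie 10) : gA AE10 := LieSubmodule.Quotient.mk' (serreIdeal AE10) x

theorem qm_lie (x y) : qm ⁅x, y⁆ = ⁅qm x, qm y⁆ := rfl

theorem qm_rel {x} (h : x ∈ serreRelations AE10) : qm x = 0 :=
  (LieSubmodule.Quotient.mk_eq_zero (N := serreIdeal AE10)).2 (LieSubmodule.subset_lieSpan h)

def gKM : KM (gA AE10) where
  e i := qm (E i)
  f i := qm (F i)
  h i := Hbar AE10 i
  hh i j := qm_rel (x := ⁅KacMoody.H i, KacMoody.H j⁆)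
    (Or.inl <| Or.inl <| Or.inl <| Or.inl <| Or.inl ⟨i, j, rfl⟩)
  ef i j := by
    have := qm_rel (x := ⁅E i, F j⁆ - if i = j then KacMoody.H i else 0)
      (Or.inl <| Or.inl <| Or.inl <| Or.inl <| Or.inr ⟨i, j, rfl⟩)
    rw [qm, map_sub, sub_eq_zero] at this
    refine Eq.trans this ?_
    split
    · rfl
    · rw [map_zero]
  he i j := by
    have := qm_rel (x := ⁅KacMoody.H i, E j⁆ - (AE10 i j : ℂ) • E j)
      (Or.inl <| Or.inl <| Or.inl <| Or.inr ⟨i, j, rfl⟩)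
    rw [qm, map_sub, sub_eq_zero] at this
    exact this
  hf i j := by
    have := qm_rel (x := ⁅KacMoody.H i, F j⁆ + (AE10 i j : ℂ) • F j)
      (Or.inl <| Or.inl <| Or.inr ⟨i, j, rfl⟩)
    rw [qm, map_add] at this
    exact eq_neg_of_add_eq_zero_left this
  se0 i j h := by
    have hij : i ≠ j := by rintro rfl; rw [AE10_diag] at h; omega
    have := qm_rel (x := ((ad ℂ (FreeLie 10) (E i)) ^ (1 - AE10 i j).toNat) (E j))
      (Or.inl <| Or.inr ⟨i, j, hij, rfl⟩)
    rw [h, show (1 - (0 : ℤ)).toNat = 1 from rfl, pow_one, ad_apply] at this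
    exact this
  se1 i j h := by
    have hij : i ≠ j := by rintro rfl; rw [AE10_diag] at h; omega
    have := qm_rel (x := ((ad ℂ (FreeLie 10) (E i)) ^ (1 - AE10 i j).toNat) (E j))
      (Or.inl <| Or.inr ⟨i, j, hij, rfl⟩)
    rw [h, show (1 - (-1 : ℤ)).toNat = 2 from rfl, pow_two, Module.End.mul_apply, ad_apply, ad_apply] at this
    exact this
  sf0 i j h := by
    have hij : i ≠ j := by rintro rfl; rw [AE10_diag] at h; omega
    have := qm_rel (x := ((ad ℂ (FreeLie 10) (F i)) ^ (1 - AE10 i j).toNat) (F j))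
      (Or.inr ⟨i, j, hij, rfl⟩)
    rw [h, show (1 - (0 : ℤ)).toNat = 1 from rfl, pow_one, ad_apply] at this
    exact this
  sf1 i j h := by
    have hij : i ≠ j := by rintro rfl; rw [AE10_diag] at h; omega
    have := qm_rel (x := ((ad ℂ (FreeLie 10) (F i)) ^ (1 - AE10 i j).toNat) (F j))
      (Or.inr ⟨i, j, hij, rfl⟩)
    rw [h, show (1 - (-1 : ℤ)).toNat = 2 from rfl, pow_two, Module.End.mul_apply, ad_apply, ad_apply] at this
    exact this
  gen K h1 h2 := by
    have h3 : ∀ i, Hbar AE10 i ∈ K := by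
      intro i
      have := qm_rel (x := ⁅E i, F i⁆ - if i = i then KacMoody.H i else 0)
        (Or.inl <| Or.inl <| Or.inl <| Or.inl <| Or.inr ⟨i, i, rfl⟩)
      rw [qm, map_sub, sub_eq_zero, if_pos rfl] at this
      rw [Hbar, ← this]
      exact K.lie_mem (h1 i) (h2 i)
    let K' : LieSubalgebra ℂ (FreeLie 10) :=
      { carrier := {x | qm x ∈ K}
        zero_mem' := by
          change qm 0 ∈ K
          rw [qm, map_zero]; exact K.zero_mem
        add_mem' := by
          intro a b ha hb
          change qm (a + b) ∈ K
          rw [qm, map_add]; exact K.add_mem ha hb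
        smul_mem' := by
          intro c a ha
          change qm (c • a) ∈ K
          rw [qm, map_smul]; exact K.smul_mem _ ha
        lie_mem' := by
          intro a b ha hb
          exact K.lie_mem (x := qm a) (y := qm b) ha hb }
    rw [eq_top_iff]
    intro z _
    obtain ⟨x, rfl⟩ := LieSubmodule.Quotient.surjective_mk' (serreIdeal AE10) z
    exact free_gen K' h1 h2 h3 x

theorem g_ne (i) : gKM.e i ≠ 0 := fun h =>
  E_notin i ((LieSubmodule.Quotient.mk_eq_zero (N := serreIdeal AE10)).1 h)

theorem mult_eq (c : Fin 10 → ℤ) : mult AE10 c = Module.finrank ℂ (gKM.wt c) := rfl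

theorem main (c : Fin 10 → ℤ) (h0 : ∀ i, 0 ≤ c i) (h1 : c 0 = 0 ∨ c 0 = 1) (hne : c ≠ 0) (hn : normE10 c ≤ 0) :
    mult AE10 c = pColored 8 ((1 - normE10 c / 2).toNat) := by
  obtain ⟨A⟩ := KM.aff gKM g_ne
  rw [mult_eq]
  obtain ⟨g, hg⟩ := co_surj c
  generalize hm : c 1 = m at hg
  rcases h1 with h1 | h1 <;> rw [h1] at hg <;> subst hg
  · rw [norm_co, ip_self] at hn
    have hg0 := hq_pos (g := g) (by omega)
    subst hg0
    have hm0 : 0 < m := by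
      have := h0 1
      rw [hm] at this
      refine lt_of_le_of_ne this ?_
      rintro rfl
      exact hne co_zero'
    obtain ⟨b⟩ := A.level_zero g_ne m hm0
    rw [Module.finrank_eq_card_basis b, norm_co, ip_zero]
    simpa using pColored_one.symm
  · rw [KM.norm1] at hn
    obtain ⟨N, hN⟩ : ∃ N : ℕ, m = hq g + N := ⟨(m - hq g).toNat, by omega⟩
    have h2 : (1 - normE10 (co 1 m g) / 2).toNat = N := by rw [KM.norm1]; omega
    rw [h2, ← card_deg]
    subst hN
    obtain ⟨b⟩ := A.level_one g_ne g N
    exact Module.finrank_eq_nat_card_basis b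

end final
end KMW

/-- **(Kac–Moody–Wakimoto, levels 0 and 1 for `E₁₀`.)**  For every `c : Fin 10 → ℕ` with
`c 0 ≤ 1` (level 0 or 1), `α = ∑ c i • α i ≠ 0` and `(α|α) ≤ 0`, one has
`mult(α) = p⁽⁸⁾(1 − (α|α)/2)`. -/
theorem kac_moody_wakimoto_level_le_one (c : Fin 10 → ℕ)
    (hlevel : c 0 ≤ 1) (hne : c ≠ 0)
    (hnorm : normE10 (fun i => (c i : ℤ)) ≤ 0) :
    KacMoody.mult AE10 (fun i => (c i : ℤ)) =
      pColored 8 ((1 - normE10 (fun i => (c i : ℤ)) / 2).toNat) := by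
  refine KMW.main _ (fun i => Int.natCast_nonneg _) (by omega) (fun h => hne ?_) hnorm
  funext i
  have := congrFun h i
  simpa using this
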